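/- Let ω^T ∈ A^{[AB]}(T), let u* be the backward-forward solution associated to ω^T, and let u be any AB-entropy solution with initial datum u_0 ∈ I_T^{[AB]}(ω^T) (so that u(·,T) = ω^T a.e.). Then for every x ∈ ℝ one has C(u*, x) ∩ C(u, x) ≠ ∅, i.e. u* and u share an AB-genuine/interface characteristic reaching x at time T. -/

import Mathlib

open MeasureTheory Set Filter

noncomputable section

/-- The discontinuous flux `f(x,u) = f_l(u)` for `x < 0`, `f_r(u)` for `x > 0`
(the value at the interface is taken to be `f_r(u)`). -/
def dflux (fl fr : ℝ → ℝ) (x u : ℝ) : ℝ := if x < 0 then fl u else fr u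

/-- The connection function `c^{AB}`. -/
def cAB (A B : ℝ) (x : ℝ) : ℝ := if x ≤ 0 then A else B

/-- An `AB`-entropy solution of `u_t + f(x,u)_x = 0` on `ℝ × [0,∞)` with
initial datum `u0`, for the flux `f(x,·) = fl` on `x<0` and `fr` on `x>0`,
relative to the connection `(A,B)`.  The structure bundles the solution `u`
(as a function of `(x,t)`), its one-sided spatial limits `um x t = u(x-,t)` and
`up x t = u(x+,t)` (for `t > 0`), the weak (distributional) formulation, the
Kružkov entropy inequalities away from the interface, the `AB`-interface
entropy inequality, `L¹_loc`-continuity in time and the initial condition. -/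
structure ABSol (fl fr : ℝ → ℝ) (A B : ℝ) (u0 : ℝ → ℝ) where
  u : ℝ → ℝ → ℝ
  meas : Measurable (Function.uncurry u)
  bdd : ∃ M : ℝ, ∀ x t, |u x t| ≤ M
  um : ℝ → ℝ → ℝ
  up : ℝ → ℝ → ℝ
  um_spec : ∀ x t, 0 < t →
    Tendsto (fun y => u y t) (nhdsWithin x (Iio x)) (nhds (um x t))
  up_spec : ∀ x t, 0 < t →
    Tendsto (fun y => u y t) (nhdsWithin x (Ioi x)) (nhds (up x t))
  weak : ∀ φ : ℝ → ℝ → ℝ,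
    ContDiff ℝ 1 (fun p : ℝ × ℝ => φ p.1 p.2) →
    HasCompactSupport (fun p : ℝ × ℝ => φ p.1 p.2) →
    (∀ x t, t ≤ 0 → φ x t = 0) →
    (∫ p : ℝ × ℝ, (u p.1 p.2 * deriv (fun s => φ p.1 s) p.2 +
        dflux fl fr p.1 (u p.1 p.2) * deriv (fun y => φ y p.2) p.1)) = 0
  kruzkov_l : ∀ (k : ℝ) (φ : ℝ → ℝ → ℝ),
    ContDiff ℝ 1 (fun p : ℝ × ℝ => φ p.1 p.2) →
    HasCompactSupport (fun p : ℝ × ℝ => φ p.1 p.2) →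
    (∀ x t, 0 ≤ φ x t) →
    (∀ x t, 0 ≤ x ∨ t ≤ 0 → φ x t = 0) →
    0 ≤ ∫ p : ℝ × ℝ, (|u p.1 p.2 - k| * deriv (fun s => φ p.1 s) p.2 +
        Real.sign (u p.1 p.2 - k) * (fl (u p.1 p.2) - fl k) *
          deriv (fun y => φ y p.2) p.1)
  kruzkov_r : ∀ (k : ℝ) (φ : ℝ → ℝ → ℝ),
    ContDiff ℝ 1 (fun p : ℝ × ℝ => φ p.1 p.2) →
    HasCompactSupport (fun p : ℝ × ℝ => φ p.1 p.2) →
    (∀ x t, 0 ≤ φ x t) →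
    (∀ x t, x ≤ 0 ∨ t ≤ 0 → φ x t = 0) →
    0 ≤ ∫ p : ℝ × ℝ, (|u p.1 p.2 - k| * deriv (fun s => φ p.1 s) p.2 +
        Real.sign (u p.1 p.2 - k) * (fr (u p.1 p.2) - fr k) *
          deriv (fun y => φ y p.2) p.1)
  interfaceEntropy : ∀ φ : ℝ → ℝ → ℝ,
    ContDiff ℝ 1 (fun p : ℝ × ℝ => φ p.1 p.2) →
    HasCompactSupport (fun p : ℝ × ℝ => φ p.1 p.2) →
    (∀ x t, 0 ≤ φ x t) →
    (∀ x t, t ≤ 0 → φ x t = 0) →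
    0 ≤ ∫ p : ℝ × ℝ, (|u p.1 p.2 - cAB A B p.1| * deriv (fun s => φ p.1 s) p.2 +
        Real.sign (u p.1 p.2 - cAB A B p.1) *
          (dflux fl fr p.1 (u p.1 p.2) - dflux fl fr p.1 (cAB A B p.1)) *
          deriv (fun y => φ y p.2) p.1)
  timeCont : ∀ (r t₀ : ℝ), 0 ≤ t₀ →
    Tendsto (fun t => ∫ x in Icc (-r) r, |u x t - u x t₀|)
      (nhdsWithin t₀ (Ici 0)) (nhds 0)
  init : ∀ᵐ x : ℝ ∂volume, u x 0 = u0 x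

/-- `AB`-genuine/interface characteristic for the `AB`-entropy solution `sol`,
on the time interval `[0,T]`, where `γ = f_l(A) = f_r(B)`. -/
def IsABgic (T : ℝ) (fl fr : ℝ → ℝ) (γ : ℝ) {A B : ℝ} {u0 : ℝ → ℝ}
    (sol : ABSol fl fr A B u0) (ζ : ℝ → ℝ) : Prop :=
  (∃ K : NNReal, LipschitzOnWith K ζ (Icc 0 T)) ∧
  (∀ᵐ t ∂(volume.restrict (Icc 0 T)),
    (ζ t < 0 → HasDerivAt ζ (deriv fl (sol.um (ζ t) t)) t ∧
      deriv fl (sol.um (ζ t) t) = deriv fl (sol.up (ζ t) t)) ∧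
    (0 < ζ t → HasDerivAt ζ (deriv fr (sol.um (ζ t) t)) t ∧
      deriv fr (sol.um (ζ t) t) = deriv fr (sol.up (ζ t) t)) ∧
    (ζ t = 0 → fl (sol.um 0 t) = γ ∧ fr (sol.up 0 t) = γ))

/-- `C(u,x)`: the set of `AB`-genuine/interface characteristics of `sol`
reaching `x` at time `T`. -/
def charSet (T : ℝ) (fl fr : ℝ → ℝ) (γ : ℝ) {A B : ℝ} {u0 : ℝ → ℝ}
    (sol : ABSol fl fr A B u0) (x : ℝ) : Set (ℝ → ℝ) :=
  {ζ | IsABgic T fl fr γ sol ζ ∧ ζ T = x}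

/-- `C₀(u,x)`: the set of initial positions `ζ(0)` of characteristics in `C(u,x)`. -/
def charSet0 (T : ℝ) (fl fr : ℝ → ℝ) (γ : ℝ) {A B : ℝ} {u0 : ℝ → ℝ}
    (sol : ABSol fl fr A B u0) (x : ℝ) : Set ℝ :=
  (fun ζ : ℝ → ℝ => ζ 0) '' charSet T fl fr γ sol x

/-- Membership in `L^∞(ℝ)`: measurable and (essentially) bounded. -/
def IsLinf (g : ℝ → ℝ) : Prop :=
  Measurable g ∧ ∃ M : ℝ, ∀ᵐ x : ℝ ∂volume, |g x| ≤ M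

/-- `ω ∈ A^{[AB]}(T)`: the profile `ω` is attainable at time `T`. -/
def Attainable (T : ℝ) (fl fr : ℝ → ℝ) (A B : ℝ) (ω : ℝ → ℝ) : Prop :=
  ∃ u0 : ℝ → ℝ, IsLinf u0 ∧
    ∃ sol : ABSol fl fr A B u0, ∀ᵐ x : ℝ ∂volume, sol.u x T = ω x

/-- `I_T^{[AB]}(ω)`: the set of (bounded) initial data whose `AB`-entropy
solution coincides a.e. with `ω` at time `T`. -/
def InitialSet (T : ℝ) (fl fr : ℝ → ℝ) (A B : ℝ) (ω : ℝ → ℝ) : Set (ℝ → ℝ) :=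
  {u0 | IsLinf u0 ∧
    ∃ sol : ABSol fl fr A B u0, ∀ᵐ x : ℝ ∂volume, sol.u x T = ω x}

/-- `x` is a point of continuity of `ω`: the one-sided limits exist and coincide. -/
def ContinuityPt (ω : ℝ → ℝ) (x : ℝ) : Prop :=
  ∃ l : ℝ, Tendsto ω (nhdsWithin x (Iio x)) (nhds l) ∧
    Tendsto ω (nhdsWithin x (Ioi x)) (nhds l)

open scoped Topology

/-!
Let `U` be the potential of an `AB`-entropy solution `u`, with `U_x = u` and `U_t = -f(x, u)`. Then
`U(q) ≤ U(p) + c` for every path from `p` forward in time to `q`, where `c` is the integral of the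
Legendre transform of the flux off the interface and of `-γ` on it, and every point is reached from
time `0` by a path for which equality holds. Such an optimal path is an `AB`-gic.

The path costs are invariant under `(x, t) ↦ (-x, T - t)` together with the exchange of the fluxes,
and `v(·, 0)` is the reflection of `u(·, T)`. Hence an optimal path for `u` between times `0` and
`T`, once reversed, is optimal for `v`: a strictly cheaper path for `v`, reversed, would beat it for
`u`. Applying this twice, from `u` to `v` and from `v` to `u*`, an optimal path for `u` is optimal
for `u*`.
-/

/-! ### Legendre fluxes -/

/-- A differentiable flux whose derivative is an increasing bijection of `ℝ`: the strictly convex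
functions of superlinear growth, for which the convex conjugate is finite and differentiable. -/
structure IsLegendreFlux (f : ℝ → ℝ) : Prop where
  differentiable : Differentiable ℝ f
  strictMono_deriv : StrictMono (deriv f)
  surjective_deriv : Function.Surjective (deriv f)

/-- The convex conjugate of `f`. It is only meaningful where `k ↦ k * q - f k` is bounded above,
which is everywhere for a Legendre flux. -/
def legendre (f : ℝ → ℝ) (q : ℝ) : ℝ := ⨆ k, (k * q - f k)

namespace IsLegendreFlux

variable {f : ℝ → ℝ}

theorem of_uniformlyConvex {a : ℝ} (hf : ContDiff ℝ 2 f) (ha : 0 < a)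
    (hf2 : ∀ w, a ≤ deriv (deriv f) w) : IsLegendreFlux f where
  differentiable := hf.differentiable (by norm_num)
  strictMono_deriv := strictMono_of_deriv_pos fun w => ha.trans_le (hf2 w)
  surjective_deriv := by
    have hdiff : Differentiable ℝ (deriv f) :=
      ((contDiff_succ_iff_deriv (n := 1)).1 hf).2.2.differentiable one_ne_zero
    have growth {x y : ℝ} (hxy : x ≤ y) : a * (y - x) ≤ deriv f y - deriv f x :=
      convex_univ.mul_sub_le_image_sub_of_le_deriv hdiff.continuous.continuousOn
        hdiff.differentiableOn (fun x _ => hf2 x) x (mem_univ _) y (mem_univ _) hxy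
    apply hdiff.continuous.surjective
    · refine tendsto_atTop_mono' _ ?_
        (tendsto_atTop_add_const_left _ (deriv f 0) (tendsto_id.const_mul_atTop ha))
      filter_upwards [eventually_ge_atTop 0] with x hx
      have := growth hx
      simp only [id_eq]
      linarith
    · refine tendsto_atBot_mono' _ ?_
        (tendsto_atBot_add_const_left _ (deriv f 0) (tendsto_id.const_mul_atBot ha))
      filter_upwards [eventually_le_atBot 0] with x hx
      have := growth hx
      simp only [id_eq]
      linarith

theorem continuous (hf : IsLegendreFlux f) : Continuous f := hf.differentiable.continuous

theorem continuous_deriv (hf : IsLegendreFlux f) : Continuous (deriv f) :=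
  hf.strictMono_deriv.monotone.continuous_of_surjective hf.surjective_deriv

theorem exists_abs_sub_le (hf : IsLegendreFlux f) (M : ℝ) :
    ∃ C : NNReal, 1 ≤ C ∧ ∀ w k, |w| ≤ M → |k| ≤ M → |f w - f k| ≤ C * |w - k| := by
  obtain ⟨C, hC⟩ := isCompact_Icc.exists_bound_of_continuousOn
    (hf.continuous_deriv.continuousOn (s := Icc (-M) M))
  have hlip : LipschitzOnWith C.toNNReal f (Icc (-M) M) :=
    (convex_Icc _ _).lipschitzOnWith_of_nnnorm_deriv_le (fun x _ => hf.differentiable x)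
      fun x hx => NNReal.le_toNNReal_of_coe_le (hC x hx)
  exact ⟨max C.toNNReal 1, le_max_right _ _, fun w k hw hk =>
    (hlip.weaken (le_max_left _ _)).dist_le_mul w (abs_le.1 hw) k (abs_le.1 hk)⟩

theorem convexOn (hf : IsLegendreFlux f) : ConvexOn ℝ univ f :=
  (hf.strictMono_deriv.monotone.monotoneOn _).convexOn_of_deriv convex_univ
    hf.continuous.continuousOn hf.differentiable.differentiableOn

theorem add_deriv_mul_le (hf : IsLegendreFlux f) (p k : ℝ) : f p + deriv f p * (k - p) ≤ f k := by
  have hp := (hf.differentiable p).hasDerivAt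
  rcases lt_trichotomy k p with hk | rfl | hk
  · have := hf.convexOn.slope_le_of_hasDerivAt (mem_univ _) (mem_univ _) hk hp
    rw [slope_def_field, div_le_iff₀ (sub_pos.2 hk)] at this
    linarith
  · simp
  · have := hf.convexOn.le_slope_of_hasDerivAt (mem_univ _) (mem_univ _) hk hp
    rw [slope_def_field, le_div_iff₀ (sub_pos.2 hk)] at this
    linarith

theorem mul_deriv_sub_le (hf : IsLegendreFlux f) (p k : ℝ) :
    k * deriv f p - f k ≤ p * deriv f p - f p := by
  linarith [hf.add_deriv_mul_le p k]

theorem legendre_deriv (hf : IsLegendreFlux f) (p : ℝ) :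
    legendre f (deriv f p) = p * deriv f p - f p :=
  le_antisymm (ciSup_le (hf.mul_deriv_sub_le p))
    (le_ciSup (f := fun k => k * deriv f p - f k)
      ⟨_, forall_mem_range.2 (hf.mul_deriv_sub_le p)⟩ p)

theorem mul_sub_le_legendre (hf : IsLegendreFlux f) (k q : ℝ) : k * q - f k ≤ legendre f q := by
  obtain ⟨p, rfl⟩ := hf.surjective_deriv q
  exact hf.legendre_deriv p ▸ hf.mul_deriv_sub_le p k

theorem mul_abs_sub_max_le_legendre (hf : IsLegendreFlux f) (M q : ℝ) :
    M * |q| - max (f M) (f (-M)) ≤ legendre f q := by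
  rcases abs_cases q with ⟨hq, _⟩ | ⟨hq, _⟩
  · rw [hq]
    linarith [hf.mul_sub_le_legendre M q, le_max_left (f M) (f (-M))]
  · rw [hq]
    linarith [hf.mul_sub_le_legendre (-M) q, le_max_right (f M) (f (-M))]

theorem hasDerivAt_legendre (hf : IsLegendreFlux f) (p : ℝ) :
    HasDerivAt (legendre f) p (deriv f p) := by
  rw [hasDerivAt_iff_isLittleO, Asymptotics.isLittleO_iff]
  intro ε hε
  have hnear : ∀ᶠ q in 𝓝 (deriv f p), q ∈ Ioo (deriv f (p - ε)) (deriv f (p + ε)) :=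
    Ioo_mem_nhds (hf.strictMono_deriv (by linarith)) (hf.strictMono_deriv (by linarith))
  filter_upwards [hnear] with q hq
  obtain ⟨w, rfl⟩ := hf.surjective_deriv q
  have hw : |w - p| ≤ ε := abs_le.2 <| by
    have h1 := hf.strictMono_deriv.lt_iff_lt.1 hq.1
    have h2 := hf.strictMono_deriv.lt_iff_lt.1 hq.2
    constructor <;> linarith
  have lower : 0 ≤ legendre f (deriv f w) - legendre f (deriv f p)
      - (deriv f w - deriv f p) * p := by
    linarith [hf.mul_sub_le_legendre p (deriv f w), hf.legendre_deriv p]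
  have upper : legendre f (deriv f w) - legendre f (deriv f p) - (deriv f w - deriv f p) * p
      ≤ (w - p) * (deriv f w - deriv f p) := by
    linarith [hf.mul_sub_le_legendre w (deriv f p), hf.legendre_deriv w]
  calc ‖legendre f (deriv f w) - legendre f (deriv f p) - (deriv f w - deriv f p) • p‖
      ≤ |(w - p) * (deriv f w - deriv f p)| := by
        rw [smul_eq_mul, Real.norm_eq_abs, abs_of_nonneg lower]
        exact upper.trans (le_abs_self _)
    _ ≤ ε * ‖deriv f w - deriv f p‖ := by
        rw [abs_mul, Real.norm_eq_abs]
        gcongr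

end IsLegendreFlux

/-! ### Mollification of Lipschitz functions -/

section Mollification

/-- A sequence of bump functions shrinking to the origin, used for mollification. -/
def shrinkingBump (E : Type*) [NormedAddCommGroup E] (n : ℕ) : ContDiffBump (0 : E) where
  rIn := 1 / (2 * ((n : ℝ) + 1))
  rOut := 1 / ((n : ℝ) + 1)
  rIn_pos := by positivity
  rIn_lt_rOut := one_div_lt_one_div_of_lt (by positivity)
    (by linarith [(n.cast_nonneg : (0 : ℝ) ≤ n)])

theorem tendsto_shrinkingBump_rOut {E : Type*} [NormedAddCommGroup E] :
    Tendsto (fun n => (shrinkingBump E n).rOut) atTop (𝓝 0) :=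
  tendsto_one_div_add_atTop_nhds_zero_nat

variable {E : Type*} [NormedAddCommGroup E] [NormedSpace ℝ E] [FiniteDimensional ℝ E]
  [MeasurableSpace E] {μ : Measure E} {F : Type*} [NormedAddCommGroup F] [NormedSpace ℝ F]

/-- The average of `g` at the scale of the bump function `φ`. -/
def mollify (φ : ContDiffBump (0 : E)) (μ : Measure E) (g : E → F) : E → F :=
  convolution (φ.normed μ) g (ContinuousLinearMap.lsmul ℝ ℝ) μ

variable {φ : ContDiffBump (0 : E)} {Φ : E → ℝ} {K : NNReal}

theorem mollify_nonneg (hΦ : ∀ z, 0 ≤ Φ z) (z : E) : 0 ≤ mollify φ μ Φ z :=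
  integral_nonneg fun y => mul_nonneg (φ.nonneg_normed y) (hΦ _)

variable [BorelSpace E] [μ.IsAddHaarMeasure]

theorem contDiff_mollify (hΦ : Continuous Φ) : ContDiff ℝ 1 (mollify φ μ Φ) :=
  φ.hasCompactSupport_normed.contDiff_convolution_left _ φ.contDiff_normed hΦ.locallyIntegrable

theorem mollify_eq_zero {z : E} (hz : ∀ y ∈ Metric.ball z φ.rOut, Φ y = 0) :
    mollify φ μ Φ z = 0 := by
  have hz0 := hz z (Metric.mem_ball_self φ.rOut_pos)
  rw [← hz0]
  exact φ.normed_convolution_eq_right fun y hy => (hz y hy).trans hz0.symm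

theorem support_mollify_subset : Function.support (mollify φ μ Φ) ⊆
    Metric.cthickening φ.rOut (tsupport Φ) := by
  intro z hz
  contrapose! hz
  refine Function.notMem_support.2 (mollify_eq_zero fun y hy => ?_)
  by_contra hy0
  exact hz (Metric.mem_cthickening_of_dist_le z y _ _ (subset_tsupport _ hy0)
    (by rw [dist_comm]; exact (Metric.mem_ball.1 hy).le))

theorem integrable_normed_smul_fderiv_sub (hΦ : LipschitzWith K Φ) (z : E) :
    Integrable (fun y => φ.normed μ y • fderiv ℝ Φ (z - y)) μ :=
  φ.integrable_normed.smul_bdd K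
    ((measurable_fderiv ℝ Φ).comp (measurable_const.sub measurable_id)).aestronglyMeasurable
    (Eventually.of_forall fun _ => norm_fderiv_le_of_lipschitz ℝ hΦ)

theorem hasFDerivAt_mollify (hΦ : LipschitzWith K Φ) (z : E) :
    HasFDerivAt (mollify φ μ Φ) (mollify φ μ (fderiv ℝ Φ) z) z := by
  have hφ : Continuous (φ.normed μ) := φ.continuous_normed
  have hcont (x : E) : Continuous fun y => φ.normed μ y * Φ (x - y) :=
    hφ.mul (hΦ.continuous.comp (continuous_const.sub continuous_id))
  have hdiff : ∀ᵐ y ∂μ, DifferentiableAt ℝ Φ (z - y) :=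
    (Measure.measurePreserving_sub_left μ z).quasiMeasurePreserving.ae hΦ.ae_differentiableAt
  refine (hasFDerivAt_integral_of_dominated_loc_of_lip' (𝕜 := ℝ) (s := univ)
    (F := fun x y => φ.normed μ y * Φ (x - y)) (bound := fun y => φ.normed μ y * K) univ_mem
    (fun x _ => (hcont x).aestronglyMeasurable)
    ((hcont z).integrable_of_hasCompactSupport φ.hasCompactSupport_normed.mul_right)
    (integrable_normed_smul_fderiv_sub hΦ z).aestronglyMeasurable ?_
    (φ.integrable_normed.mul_const _) ?_).2
  · refine Eventually.of_forall fun y x _ => ?_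
    rw [← mul_sub, norm_mul, Real.norm_of_nonneg (φ.nonneg_normed y), mul_assoc]
    gcongr
    · exact φ.nonneg_normed y
    · simpa using hΦ.norm_sub_le (x - y) (z - y)
  · filter_upwards [hdiff] with y hy
    exact (hy.hasFDerivAt.comp z ((hasFDerivAt_id z).sub_const y)).const_mul _

theorem fderiv_mollify_apply_le (hΦ : LipschitzWith K Φ) {z v : E} {c : ℝ}
    (h : ∀ᵐ y ∂μ, y ∈ Metric.ball z φ.rOut → fderiv ℝ Φ y v ≤ c) :
    fderiv ℝ (mollify φ μ Φ) z v ≤ c := by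
  have hint := integrable_normed_smul_fderiv_sub (φ := φ) (μ := μ) hΦ z
  have hshift : ∀ᵐ y ∂μ, z - y ∈ Metric.ball z φ.rOut → fderiv ℝ Φ (z - y) v ≤ c :=
    (Measure.measurePreserving_sub_left μ z).quasiMeasurePreserving.ae h
  calc fderiv ℝ (mollify φ μ Φ) z v
      = ∫ y, (φ.normed μ y • fderiv ℝ Φ (z - y)) v ∂μ := by
        rw [(hasFDerivAt_mollify hΦ z).fderiv]
        exact ContinuousLinearMap.integral_apply hint v
    _ ≤ ∫ y, φ.normed μ y * c ∂μ := by
        refine integral_mono_ae (hint.apply_continuousLinearMap v)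
          (φ.integrable_normed.mul_const c) ?_
        filter_upwards [hshift] with y hy
        by_cases hyφ : z - y ∈ Metric.ball z φ.rOut
        · exact mul_le_mul_of_nonneg_left (hy hyφ) (φ.nonneg_normed y)
        · have : φ.normed μ y = 0 := by
            rw [← Function.notMem_support, φ.support_normed_eq]
            simpa [dist_eq_norm] using hyφ
          simp [this]
    _ = c := by rw [integral_mul_const, φ.integral_normed, one_mul]

theorem norm_fderiv_mollify_le (hΦ : LipschitzWith K Φ) (z : E) :
    ‖fderiv ℝ (mollify φ μ Φ) z‖ ≤ K := by
  refine ContinuousLinearMap.opNorm_le_bound _ K.2 fun v => ?_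
  have hbound (w : E) : fderiv ℝ (mollify φ μ Φ) z w ≤ K * ‖w‖ :=
    fderiv_mollify_apply_le hΦ <| Eventually.of_forall fun y _ =>
      (le_abs_self _).trans <| (fderiv ℝ Φ y).le_of_opNorm_le (norm_fderiv_le_of_lipschitz ℝ hΦ) w
  have hneg := hbound (-v)
  rw [map_neg, norm_neg] at hneg
  exact abs_le.2 ⟨by linarith, hbound v⟩

theorem tendsto_mollify (hΦ : Continuous Φ) (z : E) :
    Tendsto (fun n => mollify (shrinkingBump E n) μ Φ z) atTop (𝓝 (Φ z)) :=
  ContDiffBump.convolution_tendsto_right_of_continuous tendsto_shrinkingBump_rOut hΦ z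

theorem ae_tendsto_fderiv_mollify (hΦ : LipschitzWith K Φ) :
    ∀ᵐ z ∂μ, Tendsto (fun n => fderiv ℝ (mollify (shrinkingBump E n) μ Φ) z) atTop
      (𝓝 (fderiv ℝ Φ z)) := by
  have hloc : LocallyIntegrable (fderiv ℝ Φ) μ := fun x =>
    ⟨Metric.ball x 1, Metric.ball_mem_nhds _ one_pos,
      Measure.integrableOn_of_bounded (M := K) measure_ball_lt_top.ne
        (measurable_fderiv ℝ Φ).aestronglyMeasurable
        (Eventually.of_forall fun _ => norm_fderiv_le_of_lipschitz ℝ hΦ)⟩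
  have hradii (n : ℕ) : (shrinkingBump E n).rOut ≤ 2 * (shrinkingBump E n).rIn := by
    simp only [shrinkingBump, one_div, mul_inv]
    linarith
  filter_upwards [ContDiffBump.ae_convolution_tendsto_right_of_locallyIntegrable
    tendsto_shrinkingBump_rOut (Eventually.of_forall hradii) hloc] with z hz
  exact hz.congr fun n => (hasFDerivAt_mollify hΦ z).fderiv.symm

/-! ### Mean value inequality and Lipschitz test functions -/

theorem sub_le_of_ae_fderiv_le_of_segment_subset (hΦ : LipschitzWith K Φ) {Ω : Set E}
    (hΩ : IsOpen Ω) {p q : E} {c : ℝ} (hpq : segment ℝ p q ⊆ Ω)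
    (h : ∀ᵐ z ∂μ, z ∈ Ω → fderiv ℝ Φ z (q - p) ≤ c) : Φ q - Φ p ≤ c := by
  have hcompact : IsCompact (segment ℝ p q) := by
    rw [segment_eq_image_lineMap]
    exact isCompact_Icc.image AffineMap.lineMap_continuous
  obtain ⟨δ, hδ, hδΩ⟩ := hcompact.exists_thickening_subset_open hΩ hpq
  refine le_of_tendsto ((tendsto_mollify (μ := μ) hΦ.continuous q).sub
    (tendsto_mollify (μ := μ) hΦ.continuous p)) ?_
  filter_upwards [(tendsto_shrinkingBump_rOut (E := E)).eventually_lt_const hδ] with n hn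
  set Ψ := mollify (shrinkingBump E n) μ Φ
  have hderiv (t : ℝ) : HasDerivAt (fun t : ℝ => Ψ (AffineMap.lineMap p q t))
      (fderiv ℝ Ψ (AffineMap.lineMap p q t) (q - p)) t :=
    ((contDiff_mollify hΦ.continuous).differentiable one_ne_zero _).hasFDerivAt.comp_hasDerivAt t
      AffineMap.hasDerivAt_lineMap
  obtain ⟨t, ht, hslope⟩ := exists_hasDerivAt_eq_slope (fun t => Ψ (AffineMap.lineMap p q t)) _
    zero_lt_one (fun t _ => (hderiv t).continuousAt.continuousWithinAt) fun t _ => hderiv t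
  have hle : fderiv ℝ Ψ (AffineMap.lineMap p q t) (q - p) ≤ c := by
    refine fderiv_mollify_apply_le hΦ (h.mono fun z hz hzt => hz (hδΩ ?_))
    rw [Metric.mem_thickening_iff]
    exact ⟨_, lineMap_mem_segment _ _ _ (Ioo_subset_Icc_self ht), hzt.trans hn⟩
  simpa [hslope] using hle

theorem sub_le_of_ae_fderiv_le (hΦ : LipschitzWith K Φ) {Ω : Set E} (hΩ : IsOpen Ω)
    (hconv : Convex ℝ Ω) {p q : E} (hp : p ∈ closure Ω) (hq : q ∈ closure Ω) {c : ℝ}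
    (h : ∀ᵐ z ∂μ, z ∈ Ω → fderiv ℝ Φ z (q - p) ≤ c) : Φ q - Φ p ≤ c := by
  obtain ⟨w, hw⟩ : Ω.Nonempty := closure_nonempty_iff.1 ⟨p, hp⟩
  have hcont : Continuous fun ε : ℝ => Φ (q + ε • (w - q)) - Φ (p + ε • (w - p)) - (1 - ε) * c := by
    have := hΦ.continuous
    fun_prop
  have hlim := (hcont.tendsto 0).mono_left (nhdsWithin_le_nhds (s := Ioi 0))
  suffices h0 : Φ (q + (0 : ℝ) • (w - q)) - Φ (p + (0 : ℝ) • (w - p)) - (1 - 0) * c ≤ 0 by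
    simpa using h0
  refine le_of_tendsto hlim ?_
  filter_upwards [Ioc_mem_nhdsGT zero_lt_one] with ε hε
  have hinterior {x : E} (hx : x ∈ closure Ω) : x + ε • (w - x) ∈ Ω := by
    simpa [hΩ.interior_eq] using
      hconv.add_smul_sub_mem_interior' hx (by rwa [hΩ.interior_eq]) hε
  have hsub : q + ε • (w - q) - (p + ε • (w - p)) = (1 - ε) • (q - p) := by module
  refine sub_nonpos.2 (sub_le_of_ae_fderiv_le_of_segment_subset hΦ hΩ
    (hconv.segment_subset (hinterior hp) (hinterior hq)) (h.mono fun z hz hzΩ => ?_))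
  rw [hsub, map_smul, smul_eq_mul]
  exact mul_le_mul_of_nonneg_left (hz hzΩ) (sub_nonneg.2 hε.2)

theorem integral_fderiv_nonneg_of_lipschitz {Ω : Set E} (hΩ : IsOpen Ω) {G : E → E} {M : ℝ}
    (hG : Measurable G) (hGM : ∀ z, ‖G z‖ ≤ M)
    (hC1 : ∀ φ : E → ℝ, ContDiff ℝ 1 φ → HasCompactSupport φ → (∀ z, 0 ≤ φ z) →
      (∀ z ∉ Ω, φ z = 0) → 0 ≤ ∫ z, fderiv ℝ φ z (G z) ∂μ)
    (hΦ : LipschitzWith K Φ) (hΦ0 : ∀ z, 0 ≤ Φ z) (hcompact : HasCompactSupport Φ)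
    (hsupp : tsupport Φ ⊆ Ω) : 0 ≤ ∫ z, fderiv ℝ Φ z (G z) ∂μ := by
  obtain ⟨δ, hδ, hδΩ⟩ := IsCompact.exists_cthickening_subset_open hcompact hΩ hsupp
  set C := Metric.cthickening δ (tsupport Φ)
  have hC : IsCompact C := IsCompact.cthickening hcompact
  have hsmall : ∀ᶠ n in atTop, tsupport (mollify (shrinkingBump E n) μ Φ) ⊆ C := by
    filter_upwards [(tendsto_shrinkingBump_rOut (E := E)).eventually_lt_const hδ] with n hn
    exact closure_minimal
      (support_mollify_subset.trans (Metric.cthickening_mono hn.le _)) hC.isClosed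
  have hlim : Tendsto (fun n => ∫ z, fderiv ℝ (mollify (shrinkingBump E n) μ Φ) z (G z) ∂μ) atTop
      (𝓝 (∫ z, fderiv ℝ Φ z (G z) ∂μ)) := by
    refine tendsto_integral_filter_of_dominated_convergence (C.indicator fun _ => K * M)
      (Eventually.of_forall fun n => ?_) ?_ ?_ ?_
    · exact isBoundedBilinearMap_apply.continuous.comp_aestronglyMeasurable₂
        (measurable_fderiv ℝ _).aestronglyMeasurable hG.aestronglyMeasurable
    · filter_upwards [hsmall] with n hn
      refine Eventually.of_forall fun z => ?_
      by_cases hz : z ∈ C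
      · rw [indicator_of_mem hz]
        exact (ContinuousLinearMap.le_of_opNorm_le _ (norm_fderiv_mollify_le hΦ z) _).trans
          (mul_le_mul_of_nonneg_left (hGM z) K.2)
      · rw [indicator_of_notMem hz, fderiv_of_notMem_tsupport ℝ (fun h => hz (hn h))]
        simp
    · exact (integrable_indicator_iff hC.measurableSet).2 (integrableOn_const hC.measure_lt_top.ne)
    · filter_upwards [ae_tendsto_fderiv_mollify hΦ] with z hz
      exact ((ContinuousLinearMap.apply ℝ ℝ (G z)).continuous.tendsto _).comp hz
  refine ge_of_tendsto hlim ?_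
  filter_upwards [hsmall] with n hn
  exact hC1 _ (contDiff_mollify hΦ.continuous) (hC.of_isClosed_subset (isClosed_tsupport _) hn)
    (mollify_nonneg hΦ0) fun z hz => image_eq_zero_of_notMem_tsupport fun h => hz (hδΩ (hn h))

theorem integrable_fderiv_apply (hΦ : LipschitzWith K Φ) (hcompact : HasCompactSupport Φ)
    {w : E → E} {M : ℝ} (hw : Measurable w) (hwM : ∀ z, ‖w z‖ ≤ M) :
    Integrable (fun z => fderiv ℝ Φ z (w z)) μ := by
  rw [← integrableOn_iff_integrable_of_support_subset (s := tsupport Φ)]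
  · refine Measure.integrableOn_of_bounded (M := K * M) (IsCompact.measure_lt_top hcompact).ne
      (isBoundedBilinearMap_apply.continuous.comp_aestronglyMeasurable₂
        (measurable_fderiv ℝ _).aestronglyMeasurable hw.aestronglyMeasurable)
      (Eventually.of_forall fun z => ?_)
    exact ((fderiv ℝ Φ z).le_of_opNorm_le (norm_fderiv_le_of_lipschitz ℝ hΦ) _).trans
      (mul_le_mul_of_nonneg_left (hwM z) K.2)
  · intro z hz
    by_contra hzΦ
    exact hz (by simp [fderiv_of_notMem_tsupport ℝ hzΦ])

theorem integral_fderiv_eq_zero (hΦ : LipschitzWith K Φ) (hcompact : HasCompactSupport Φ) (v : E) :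
    ∫ z, fderiv ℝ Φ z v ∂μ = 0 := by
  calc ∫ z, fderiv ℝ Φ z v ∂μ = ∫ z, lineDeriv ℝ Φ z v ∂μ := by
        refine integral_congr_ae ?_
        filter_upwards [hΦ.ae_differentiableAt] with z hz
        exact hz.lineDeriv_eq_fderiv.symm
    _ = ∫ z, lineDeriv ℝ (fun _ => (1 : ℝ)) z (-v) * Φ z ∂μ := by
        simpa using
          ((LipschitzWith.const (1 : ℝ)).integral_lineDeriv_mul_eq (μ := μ) hΦ hcompact (-v)).symm
    _ = 0 := by simp [lineDeriv]

end Mollification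

/-! ### Potentials of entropy solutions -/

/-- The vector field `(x, t) = (sgn (w - k) (f w - f k), |w - k|)` pairing Kružkov's entropy flux
and entropy, so that the entropy inequality tests `fderiv ℝ φ` against it. -/
def kruzkovField (f : ℝ → ℝ) (k w : ℝ) : ℝ × ℝ :=
  (Real.sign (w - k) * (f w - f k), |w - k|)

/-- `U` is a Lipschitz potential on the space-time region `Ω` of the entropy solution `u` of
`u_t + f(u)_x = 0`, that is `U_x = u` and `U_t = -f(u)`; equivalently, `U` is a viscosity solution
of `U_t + f(U_x) = 0`. Points of `ℝ × ℝ` are `(x, t)`. -/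
structure IsHJPotential (f : ℝ → ℝ) (Ω : Set (ℝ × ℝ)) (U u : ℝ × ℝ → ℝ) : Prop where
  lipschitz : ∃ K, LipschitzWith K U
  measurable : Measurable u
  bounded : ∃ M, ∀ z, |u z| ≤ M
  ae_fderiv : ∀ᵐ z, z ∈ Ω → ∀ w : ℝ × ℝ, fderiv ℝ U z w = u z * w.1 - f (u z) * w.2
  kruzkov : ∀ (k : ℝ) (φ : ℝ × ℝ → ℝ), ContDiff ℝ 1 φ → HasCompactSupport φ → (∀ z, 0 ≤ φ z) →
    (∀ z ∉ Ω, φ z = 0) → 0 ≤ ∫ z, fderiv ℝ φ z (kruzkovField f k (u z))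

/-- The cost, for the Lagrangian `legendre f`, of travelling from the space-time point `p` to `q`
at constant speed. It is only meaningful for `p.2 < q.2`. -/
def segmentCost (f : ℝ → ℝ) (p q : ℝ × ℝ) : ℝ :=
  (q.2 - p.2) * legendre f ((q.1 - p.1) / (q.2 - p.2))

theorem measurable_sign : Measurable Real.sign :=
  Measurable.ite measurableSet_Iio measurable_const
    (Measurable.ite measurableSet_Ioi measurable_const measurable_const)

theorem abs_sign_le_one (x : ℝ) : |Real.sign x| ≤ 1 := by
  rcases Real.sign_apply_eq x with h | h | h <;> simp [h]

theorem sign_mul_self_eq_abs (x : ℝ) : Real.sign x * x = |x| := by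
  rcases lt_trichotomy x 0 with h | rfl | h
  · rw [Real.sign_of_neg h, abs_of_neg h, neg_one_mul]
  · simp
  · rw [Real.sign_of_pos h, abs_of_pos h, one_mul]

theorem measurable_kruzkovField {f : ℝ → ℝ} (hf : Continuous f) (k : ℝ) :
    Measurable (kruzkovField f k) :=
  ((measurable_sign.comp (measurable_id.sub_const k)).mul (hf.measurable.sub_const (f k))).prodMk
    (measurable_id.sub_const k).abs

theorem norm_kruzkovField_le {f : ℝ → ℝ} {k w : ℝ} {C : NNReal} (hC : 1 ≤ C)
    (hf : |f w - f k| ≤ C * |w - k|) : ‖kruzkovField f k w‖ ≤ C * |w - k| := by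
  have hC' : (1 : ℝ) ≤ C := hC
  refine max_le ?_ ?_
  · calc ‖Real.sign (w - k) * (f w - f k)‖ ≤ 1 * |f w - f k| := by
          rw [norm_mul]
          exact mul_le_mul_of_nonneg_right (abs_sign_le_one _) (norm_nonneg _)
      _ ≤ C * |w - k| := by rwa [one_mul]
  · rw [kruzkovField, Real.norm_eq_abs, abs_abs]
    exact le_mul_of_one_le_left (abs_nonneg _) hC'

/-! ### Subgradients of a potential -/

theorem exists_lipschitz_cutoff_of_cone_le {E : Type*} [NormedAddCommGroup E] [NormedSpace ℝ E]
    [ProperSpace E] {V : E → ℝ} {K : NNReal} (hV : LipschitzWith K V) {z₀ : E} (hV0 : V z₀ = 0)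
    {s : ℝ} (hs : 0 < s) (hcone : ∀ᶠ z in 𝓝 z₀, s * ‖z - z₀‖ ≤ V z) {Ω : Set E} (hΩ : Ω ∈ 𝓝 z₀) :
    ∃ (N : E → ℝ) (K' : NNReal), LipschitzWith K' N ∧ (∀ z, 0 ≤ N z) ∧ HasCompactSupport N ∧
      tsupport N ⊆ Ω ∧ 0 < N z₀ ∧ ∀ z, 0 < N z → fderiv ℝ N z = -fderiv ℝ V z := by
  obtain ⟨r, hr, hball⟩ := Metric.eventually_nhds_iff_ball.1 (hcone.and hΩ)
  have hdist : LipschitzWith 1 fun z => ‖z - z₀‖ := by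
    simpa only [dist_eq_norm] using LipschitzWith.dist_left z₀
  let N : E → ℝ := fun z => max (min (s * r / 2 - V z) (s * r - s * ‖z - z₀‖)) 0
  obtain ⟨K', hN⟩ : ∃ K', LipschitzWith K' N :=
    ⟨_, (((LipschitzWith.const _).sub hV).min
      ((LipschitzWith.const _).sub ((lipschitzWith_smul s).comp hdist))).max_const 0⟩
  have hpos {z : E} (hz : 0 < N z) : ‖z - z₀‖ < r / 2 ∧ N z = s * r / 2 - V z := by
    obtain ⟨h1, h2⟩ := lt_min_iff.1 ((lt_max_iff.1 hz).resolve_right (lt_irrefl 0))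
    have hzr : ‖z - z₀‖ < r := by nlinarith
    have hVz := (hball z (mem_ball_iff_norm.2 hzr)).1
    have hmin : min (s * r / 2 - V z) (s * r - s * ‖z - z₀‖) = s * r / 2 - V z :=
      min_eq_left (by nlinarith)
    exact ⟨by nlinarith, by simp only [N, hmin, max_eq_left h1.le]⟩
  have hsupp : tsupport N ⊆ Metric.closedBall z₀ (r / 2) := by
    refine closure_minimal (fun z hz => ?_) Metric.isClosed_closedBall
    exact mem_closedBall_iff_norm.2 (hpos ((le_max_right _ _).lt_of_ne' hz)).1.le
  refine ⟨N, K', hN, fun z => le_max_right _ _,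
    (isCompact_closedBall z₀ (r / 2)).of_isClosed_subset (isClosed_tsupport N) hsupp, ?_, ?_, ?_⟩
  · intro z hz
    exact (hball z (Metric.closedBall_subset_ball (half_lt_self hr) (hsupp hz))).2
  · have : 0 < s * r := mul_pos hs hr
    simp [N, hV0, this]
  · intro z hz
    have hlocal : N =ᶠ[𝓝 z] fun y => s * r / 2 - V y :=
      ((hN.continuous.tendsto z).eventually_const_lt hz).mono fun y hy => (hpos hy).2
    rw [hlocal.fderiv_eq, fderiv_const_sub]

theorem exists_lipschitz_cutoff_of_subgradient {E : Type*} [NormedAddCommGroup E]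
    [NormedSpace ℝ E] [FiniteDimensional ℝ E] [MeasurableSpace E] [BorelSpace E] {μ : Measure E}
    [μ.IsAddHaarMeasure] {U : E → ℝ} {K : NNReal} (hU : LipschitzWith K U) {z₀ : E} (L : E →L[ℝ] ℝ)
    {σ : NNReal} (hσ : 0 < σ)
    (hL : ∀ᶠ z in 𝓝 z₀, U z₀ + L (z - z₀) - σ / 2 * ‖z - z₀‖ ≤ U z) {Ω : Set E} (hΩ : Ω ∈ 𝓝 z₀) :
    ∃ (N : E → ℝ) (K' : NNReal), LipschitzWith K' N ∧ (∀ z, 0 ≤ N z) ∧ HasCompactSupport N ∧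
      tsupport N ⊆ Ω ∧ 0 < N z₀ ∧
      ∀ᵐ z ∂μ, 0 < N z → ‖fderiv ℝ N z - (L - fderiv ℝ U z)‖ ≤ σ := by
  have hdist : LipschitzWith σ fun z => (σ : ℝ) * ‖z - z₀‖ := by
    have := (lipschitzWith_smul (σ : ℝ)).comp (LipschitzWith.dist_left z₀)
    simpa [Function.comp_def, dist_eq_norm] using this
  have hLz : LipschitzWith ‖L‖₊ fun z => L (z - z₀) := by
    simpa [Function.comp_def] using L.lipschitz.comp (IsometryEquiv.subRight z₀).isometry.lipschitz
  obtain ⟨N, K', hN, hN0, hcompact, hsupp, hz0, hfderiv⟩ :=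
    exists_lipschitz_cutoff_of_cone_le (V := fun z => U z - U z₀ - L (z - z₀) + σ * ‖z - z₀‖)
      (((hU.sub (LipschitzWith.const (U z₀))).sub hLz).add hdist) (by simp) (s := σ / 2)
      (by positivity) (hL.mono fun z hz => by linarith) hΩ
  refine ⟨N, K', hN, hN0, hcompact, hsupp, hz0, ?_⟩
  filter_upwards [hU.ae_differentiableAt, hdist.ae_differentiableAt] with z hUz hdz hz
  have hLz' : HasFDerivAt (fun z => L (z - z₀)) L z :=
    L.hasFDerivAt.comp z ((hasFDerivAt_id z).sub_const z₀)
  have hV : HasFDerivAt (fun z => U z - U z₀ - L (z - z₀) + σ * ‖z - z₀‖)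
      (fderiv ℝ U z - L + fderiv ℝ (fun z => (σ : ℝ) * ‖z - z₀‖) z) z :=
    ((hUz.hasFDerivAt.sub_const (U z₀)).sub hLz').add hdz.hasFDerivAt
  have heq : fderiv ℝ N z - (L - fderiv ℝ U z) = -fderiv ℝ (fun z => (σ : ℝ) * ‖z - z₀‖) z := by
    rw [hfderiv z hz, hV.fderiv]
    abel
  rw [heq, norm_neg]
  exact norm_fderiv_le_of_lipschitz ℝ hdist

theorem not_ae_neg_of_integral_nonneg {E : Type*} [TopologicalSpace E]
    [MeasurableSpace E] {μ : Measure E} [μ.IsOpenPosMeasure] {N g : E → ℝ} (hN : Continuous N)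
    {z₀ : E} (hz₀ : 0 < N z₀) (hg : Integrable g μ) (hint : 0 ≤ ∫ z, g z ∂μ)
    (h0 : ∀ z, N z ≤ 0 → g z = 0) : ¬ ∀ᵐ z ∂μ, 0 < N z → g z < 0 := by
  intro hneg
  have hle : ∀ᵐ z ∂μ, 0 ≤ -g z := hneg.mono fun z hz => by
    rcases lt_or_ge 0 (N z) with h | h
    · linarith [hz h]
    · rw [h0 z h, neg_zero]
  have hzero : ∀ᵐ z ∂μ, -g z = 0 := by
    refine (integral_eq_zero_iff_of_nonneg_ae hle hg.neg).1 (le_antisymm ?_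
      (integral_nonneg_of_ae hle))
    rw [integral_neg]
    linarith
  have hopen : IsOpen {z | 0 < N z} := isOpen_lt continuous_const hN
  refine (hopen.measure_pos μ ⟨z₀, hz₀⟩).ne' (measure_mono_null (fun z hz => ?_)
    (ae_iff.1 (hzero.and hneg)))
  rintro ⟨h1, h2⟩
  linarith [h2 hz]

theorem apply_kruzkovField_add_neg {f : ℝ → ℝ} {p w c : ℝ} {C σ : NNReal} (hC : 1 ≤ C)
    (hσ : 0 < σ) (hσC : 2 * C * σ = c - f p) (hf : |f w - f p| ≤ C * |w - p|)
    {A : ℝ × ℝ →L[ℝ] ℝ} (hA : ∀ v, A v ≤ (p - w) * v.1 + (f w - c) * v.2 + σ * ‖v‖) :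
    A (kruzkovField f p w + (0, (σ : ℝ))) < 0 := by
  have hσ' : (0 : ℝ) < σ := hσ
  have hnorm : ‖kruzkovField f p w + (0, (σ : ℝ))‖ ≤ C * |w - p| + σ := by
    refine (norm_add_le _ _).trans (add_le_add (norm_kruzkovField_le hC hf) ?_)
    simp [Prod.norm_def]
  calc A (kruzkovField f p w + (0, (σ : ℝ)))
      ≤ (p - w) * (Real.sign (w - p) * (f w - f p)) + (f w - c) * (|w - p| + σ)
          + σ * (C * |w - p| + σ) := by
        refine (hA _).trans ?_
        simp only [kruzkovField, Prod.mk_add_mk, add_zero] at hnorm ⊢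
        gcongr
    _ = -(c - f p) * |w - p| + σ * (f w - c) + σ * (C * |w - p| + σ) := by
        rw [← sign_mul_self_eq_abs (w - p)]; ring
    _ ≤ -(c - f p) * |w - p| + σ * (C * |w - p| - (c - f p)) + σ * (C * |w - p| + σ) := by
        have hle : f w - c ≤ C * |w - p| - (c - f p) := by linarith [(le_abs_self _).trans hf]
        linarith [mul_le_mul_of_nonneg_left hle hσ'.le]
    _ = σ * (σ - 2 * C * σ) := by rw [← hσC]; ring
    _ < 0 := mul_neg_of_pos_of_neg hσ' (by nlinarith [show (1 : ℝ) ≤ C from hC])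

namespace IsHJPotential

variable {f : ℝ → ℝ} {Ω : Set (ℝ × ℝ)} {U u : ℝ × ℝ → ℝ}

theorem le_add_segmentCost (hf : IsLegendreFlux f) (hU : IsHJPotential f Ω U u) (hΩ : IsOpen Ω)
    (hconv : Convex ℝ Ω) {p q : ℝ × ℝ} (hp : p ∈ closure Ω) (hq : q ∈ closure Ω) (hpq : p.2 < q.2) :
    U q ≤ U p + segmentCost f p q := by
  obtain ⟨K, hK⟩ := hU.lipschitz
  have ht : 0 < q.2 - p.2 := sub_pos.2 hpq
  refine sub_le_iff_le_add'.1 (sub_le_of_ae_fderiv_le (μ := volume) hK hΩ hconv hp hq ?_)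
  filter_upwards [hU.ae_fderiv] with z hz hzΩ
  rw [hz hzΩ, segmentCost]
  have hfenchel := mul_le_mul_of_nonneg_left
    (hf.mul_sub_le_legendre (u z) ((q.1 - p.1) / (q.2 - p.2))) ht.le
  calc u z * (q.1 - p.1) - f (u z) * (q.2 - p.2)
      = (q.2 - p.2) * (u z * ((q.1 - p.1) / (q.2 - p.2)) - f (u z)) := by
        field_simp
    _ ≤ _ := hfenchel

theorem le_flux_of_subgradient (hf : IsLegendreFlux f) (hU : IsHJPotential f Ω U u)
    (hΩ : IsOpen Ω) {z₀ : ℝ × ℝ} (hz₀ : z₀ ∈ Ω) {p c : ℝ}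
    (hsub : ∀ ε > 0, ∀ᶠ z in 𝓝 z₀,
      U z₀ + (p * (z.1 - z₀.1) - c * (z.2 - z₀.2)) - ε * ‖z - z₀‖ ≤ U z) : c ≤ f p := by
  by_contra! hlt
  obtain ⟨K, hK⟩ := hU.lipschitz
  obtain ⟨M, hM⟩ := hU.bounded
  obtain ⟨C, hC, hlip⟩ := hf.exists_abs_sub_le (max M |p|)
  have hfC (z : ℝ × ℝ) : |f (u z) - f p| ≤ C * |u z - p| :=
    hlip _ _ ((hM z).trans (le_max_left _ _)) (le_max_right _ _)
  obtain ⟨σ, hσ, hσC⟩ : ∃ σ : NNReal, 0 < σ ∧ 2 * C * σ = c - f p := by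
    have hC0 : 0 < 2 * (C : ℝ) := mul_pos two_pos (zero_lt_one.trans_le hC)
    have hpos : 0 < (c - f p) / (2 * C) := div_pos (sub_pos.2 hlt) hC0
    exact ⟨⟨_, hpos.le⟩, hpos, mul_div_cancel₀ _ hC0.ne'⟩
  let L : ℝ × ℝ →L[ℝ] ℝ := p • ContinuousLinearMap.fst ℝ ℝ ℝ - c • ContinuousLinearMap.snd ℝ ℝ ℝ
  obtain ⟨N, KN, hN, hN0, hcompact, hsupp, hNz₀, hfderiv⟩ :=
    exists_lipschitz_cutoff_of_subgradient (μ := volume) hK L hσ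
      (by simpa [L] using hsub (σ / 2) (half_pos hσ)) (hΩ.mem_nhds hz₀)
  have hGle (z : ℝ × ℝ) : ‖kruzkovField f p (u z)‖ ≤ C * (M + |p|) :=
    (norm_kruzkovField_le hC (hfC z)).trans
      (by gcongr; exact (abs_sub _ _).trans (add_le_add_left (hM z) _))
  have hG : Measurable fun z => kruzkovField f p (u z) :=
    (measurable_kruzkovField hf.continuous p).comp hU.measurable
  have hint1 := integrable_fderiv_apply (μ := volume) hN hcompact hG hGle
  have hint2 := integrable_fderiv_apply (μ := volume) hN hcompact
    (measurable_const (a := ((0, (σ : ℝ)) : ℝ × ℝ))) fun _ => le_rfl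
  refine not_ae_neg_of_integral_nonneg hN.continuous hNz₀ (hint1.add hint2) ?_ ?_ ?_
  · rw [integral_add' hint1 hint2, integral_fderiv_eq_zero hN hcompact, add_zero]
    exact integral_fderiv_nonneg_of_lipschitz hΩ hG hGle (hU.kruzkov p) hN hN0 hcompact hsupp
  · intro z hz
    have hmin : IsLocalMin N z := Eventually.of_forall fun y => hz.trans (hN0 y)
    simp [hmin.fderiv_eq_zero]
  · filter_upwards [hfderiv, hU.ae_fderiv] with z hz hzU hNz
    have hzΩ : z ∈ Ω := hsupp (subset_tsupport N hNz.ne')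
    rw [Pi.add_apply, ← map_add]
    refine apply_kruzkovField_add_neg hC hσ hσC (hfC z) fun v => ?_
    have := (le_abs_self _).trans ((fderiv ℝ N z - (L - fderiv ℝ U z)).le_of_opNorm_le (hz hNz) v)
    simp only [_root_.sub_apply, hzU hzΩ, L, _root_.smul_apply,
      ContinuousLinearMap.coe_fst', ContinuousLinearMap.coe_snd', smul_eq_mul] at this
    linarith

end IsHJPotential

/-! ### The Hopf–Lax formula -/

theorem hasFDerivAt_of_le_of_le {E : Type*} [NormedAddCommGroup E] [NormedSpace ℝ E]
    {lo φ up : E → ℝ} {φ' : E →L[ℝ] ℝ} {z : E} (hlo : HasFDerivAt lo φ' z)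
    (hup : HasFDerivAt up φ' z) (hloφ : ∀ᶠ y in 𝓝 z, lo y ≤ φ y) (hφup : ∀ᶠ y in 𝓝 z, φ y ≤ up y)
    (heq : lo z = up z) : HasFDerivAt φ φ' z := by
  have hloz : lo z ≤ φ z := hloφ.self_of_nhds
  have hupz : φ z ≤ up z := hφup.self_of_nhds
  rw [hasFDerivAt_iff_isLittleO, Asymptotics.isLittleO_iff] at *
  intro ε hε
  filter_upwards [hlo hε, hup hε, hloφ, hφup] with y hloy hupy hle hge
  rw [Real.norm_eq_abs, abs_le] at *
  constructor <;> linarith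

theorem segmentCost_eq_zero_sub (f : ℝ → ℝ) (p q : ℝ × ℝ) :
    segmentCost f p q = segmentCost f 0 (q - p) := by
  simp [segmentCost]

namespace IsLegendreFlux

variable {f : ℝ → ℝ} {p q : ℝ × ℝ} {k : ℝ}

theorem hasFDerivAt_segmentCost_zero (hf : IsLegendreFlux f) (hq : 0 < q.2)
    (hk : deriv f k = q.1 / q.2) :
    HasFDerivAt (segmentCost f 0)
      (k • ContinuousLinearMap.fst ℝ ℝ ℝ - f k • ContinuousLinearMap.snd ℝ ℝ ℝ) q := by
  have hfst : HasFDerivAt (fun z : ℝ × ℝ => z.1) (ContinuousLinearMap.fst ℝ ℝ ℝ) q :=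
    hasFDerivAt_fst
  have hsnd : HasFDerivAt (fun z : ℝ × ℝ => z.2) (ContinuousLinearMap.snd ℝ ℝ ℝ) q :=
    hasFDerivAt_snd
  have hleg : HasDerivAt (legendre f) k (q.1 / q.2) := hk ▸ hf.hasDerivAt_legendre k
  have hcost := hsnd.mul (HasDerivAt.comp_hasFDerivAt (f := fun z : ℝ × ℝ => z.1 * z.2⁻¹) q
    (by rwa [← div_eq_mul_inv]) (hfst.mul ((hasDerivAt_inv hq.ne').comp_hasFDerivAt q hsnd)))
  have hval : legendre f (q.1 * q.2⁻¹) = k * (q.1 * q.2⁻¹) - f k := by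
    rw [← div_eq_mul_inv, ← hk, hf.legendre_deriv]
  have heq : segmentCost f 0 = fun z : ℝ × ℝ => z.2 * legendre f (z.1 * z.2⁻¹) := by
    funext z
    simp [segmentCost, div_eq_mul_inv]
  rw [heq]
  refine hcost.congr_fderiv ?_
  ext
  · simp
    field_simp
  · simp [hval]
    field_simp
    ring

theorem hasFDerivAt_segmentCost_right (hf : IsLegendreFlux f) (hpq : p.2 < q.2)
    (hk : deriv f k = (q.1 - p.1) / (q.2 - p.2)) :
    HasFDerivAt (segmentCost f p)
      (k • ContinuousLinearMap.fst ℝ ℝ ℝ - f k • ContinuousLinearMap.snd ℝ ℝ ℝ) q := by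
  rw [funext (segmentCost_eq_zero_sub f p)]
  exact (hf.hasFDerivAt_segmentCost_zero (q := q - p) (sub_pos.2 hpq) hk).comp q
    ((hasFDerivAt_id q).sub_const p)

theorem hasFDerivAt_segmentCost_left (hf : IsLegendreFlux f) (hpq : p.2 < q.2)
    (hk : deriv f k = (q.1 - p.1) / (q.2 - p.2)) :
    HasFDerivAt (fun z => segmentCost f z q)
      (-(k • ContinuousLinearMap.fst ℝ ℝ ℝ - f k • ContinuousLinearMap.snd ℝ ℝ ℝ)) p := by
  rw [funext fun z => segmentCost_eq_zero_sub f z q]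
  refine ((hf.hasFDerivAt_segmentCost_zero (q := q - p) (sub_pos.2 hpq) hk).comp p
    ((hasFDerivAt_id p).const_sub q)).congr_fderiv ?_
  ext <;> simp

theorem continuousOn_segmentCost_left (hf : IsLegendreFlux f) (q : ℝ × ℝ) :
    ContinuousOn (fun z => segmentCost f z q) {z | z.2 < q.2} := fun z hz => by
  obtain ⟨k, hk⟩ := hf.surjective_deriv ((q.1 - z.1) / (q.2 - z.2))
  exact (hf.hasFDerivAt_segmentCost_left hz hk).continuousAt.continuousWithinAt

theorem exists_add_mul_abs_sub_le (hf : IsLegendreFlux f) {U : ℝ × ℝ → ℝ} {K : NNReal}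
    (hU : LipschitzWith K U) (M : ℝ) :
    ∃ C, 0 ≤ C ∧ ∀ p q : ℝ × ℝ, p.2 < q.2 →
      U q + M * |q.1 - p.1| - C * (q.2 - p.2) ≤ U p + segmentCost f p q := by
  let B := max (f (M + K)) (f (-(M + K)))
  refine ⟨K + |B|, by positivity, fun p q hpq => ?_⟩
  have ht : 0 < q.2 - p.2 := sub_pos.2 hpq
  have hUpq : U q - U p ≤ K * (|q.1 - p.1| + (q.2 - p.2)) := by
    refine (le_abs_self _).trans ((hU.dist_le_mul q p).trans ?_)
    gcongr
    rw [Prod.dist_eq, Real.dist_eq, Real.dist_eq, abs_of_pos ht]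
    exact max_le_add_of_nonneg (abs_nonneg _) ht.le
  have hcost : (M + K) * |q.1 - p.1| - |B| * (q.2 - p.2) ≤ segmentCost f p q := by
    calc (M + K) * |q.1 - p.1| - |B| * (q.2 - p.2)
        ≤ (M + K) * |q.1 - p.1| - B * (q.2 - p.2) := by
          gcongr
          exact le_abs_self B
      _ = (q.2 - p.2) * ((M + K) * |(q.1 - p.1) / (q.2 - p.2)| - B) := by
          rw [abs_div, abs_of_pos ht]
          field_simp
      _ ≤ segmentCost f p q := mul_le_mul_of_nonneg_left (hf.mul_abs_sub_max_le_legendre _ _) ht.le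
  linarith

theorem exists_add_one_le_add_segmentCost_of_notMem_ball (hf : IsLegendreFlux f)
    {U : ℝ × ℝ → ℝ} {K : NNReal} (hU : LipschitzWith K U) (q : ℝ × ℝ) {d : ℝ} (hd : 0 < d) :
    ∃ r > 0, ∀ z ∉ Metric.ball q d, z.2 < q.2 → q.2 - r < z.2 →
      U q + 1 ≤ U z + segmentCost f z q := by
  obtain ⟨C, hC, hcoer⟩ := hf.exists_add_mul_abs_sub_le hU (2 / d)
  refine ⟨min d (1 / (C + 1)), lt_min hd (by positivity), fun z hz hzq hzr => ?_⟩
  have hzd : d ≤ |q.1 - z.1| := by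
    by_contra! hlt
    refine hz (Metric.mem_ball'.2 (max_lt hlt ?_))
    rw [Real.dist_eq, abs_of_pos (sub_pos.2 hzq)]
    linarith [min_le_left d (1 / (C + 1))]
  have hspace : 2 ≤ 2 / d * |q.1 - z.1| :=
    calc (2 : ℝ) = 2 / d * d := by field_simp
      _ ≤ 2 / d * |q.1 - z.1| := by gcongr
  have htime : C * (q.2 - z.2) ≤ 1 :=
    calc C * (q.2 - z.2) ≤ C * (1 / (C + 1)) := by
          gcongr
          linarith [min_le_right d (1 / (C + 1))]
      _ ≤ 1 := by
          rw [mul_one_div]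
          exact div_le_one_of_le₀ (by linarith) (by linarith)
  linarith [hcoer z q hzq]

theorem exists_isMinOn_add_segmentCost (hf : IsLegendreFlux f) {U : ℝ × ℝ → ℝ} {K : NNReal}
    (hU : LipschitzWith K U) {S : Set (ℝ × ℝ)} (hS : IsClosed S) (hne : S.Nonempty) {s : ℝ}
    (hs : s < q.2) (hSs : ∀ z ∈ S, z.2 ∈ Icc 0 s) {h : ℝ × ℝ → ℝ} (hh : ContinuousOn h S)
    (hh0 : ∀ z ∈ S, 0 ≤ h z) :
    ∃ z ∈ S, IsMinOn (fun z => U z + segmentCost f z q + h z) S z := by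
  obtain ⟨C, hC, hcoer⟩ := hf.exists_add_mul_abs_sub_le hU 1
  obtain ⟨z₀, hz₀⟩ := hne
  let E := fun z => U z + segmentCost f z q + h z
  have hcont : ContinuousOn E S :=
    (hU.continuous.continuousOn.add ((hf.continuousOn_segmentCost_left q).mono
      fun z hz => (hSs z hz).2.trans_lt hs)).add hh
  have hbdd : IsCompact (Icc (q.1 - (E z₀ - U q + C * q.2)) (q.1 + (E z₀ - U q + C * q.2))
      ×ˢ Icc 0 s) := isCompact_Icc.prod isCompact_Icc
  refine hcont.exists_isMinOn' hS hz₀ (eventually_inf_principal.2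
    (mem_of_superset hbdd.compl_mem_cocompact fun z hz hzS => ?_))
  obtain ⟨hz1, hz2⟩ := hSs z hzS
  by_contra! hlt
  have hzC : 0 ≤ C * z.2 := mul_nonneg hC hz1
  have habs : |q.1 - z.1| ≤ E z₀ - U q + C * q.2 := by
    linarith [hcoer z q (hz2.trans_lt hs), hh0 z hzS, hlt]
  exact hz ⟨⟨by linarith [(abs_le.1 habs).2], by linarith [(abs_le.1 habs).1]⟩, hz1, hz2⟩

theorem exists_lt_le_add_segmentCost (hf : IsLegendreFlux f) {U : ℝ × ℝ → ℝ} {K : NNReal}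
    (hU : LipschitzWith K U) {S : Set (ℝ × ℝ)} (hS : IsClosed S) {s : ℝ} (hs : s < q.2)
    (hSs : ∀ z ∈ S, z.2 ∈ Icc 0 s) (hlt : ∀ z ∈ S, U q < U z + segmentCost f z q) :
    ∃ l, U q < l ∧ ∀ z ∈ S, l ≤ U z + segmentCost f z q := by
  rcases S.eq_empty_or_nonempty with rfl | hne
  · exact ⟨U q + 1, lt_add_one _, fun z hz => hz.elim⟩
  · obtain ⟨z₀, hz₀, hmin⟩ := hf.exists_isMinOn_add_segmentCost hU hS hne hs hSs
      (continuousOn_const (c := (0 : ℝ))) fun z _ => le_rfl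
    exact ⟨_, hlt z₀ hz₀, fun z hz => by simpa using isMinOn_iff.1 hmin z hz⟩

theorem exists_forall_penalized_le (hf : IsLegendreFlux f) {U : ℝ × ℝ → ℝ} {K : NNReal}
    (hU : LipschitzWith K U) {S : Set (ℝ × ℝ)} (hS : IsClosed S) (hS0 : ∀ z ∈ S, 0 ≤ z.2) {s : ℝ}
    (hs : s < q.2) {z : ℝ × ℝ} (hz : z ∈ S) (hzs : z.2 < s) {δ : ℝ} (hδ : 0 < δ) :
    ∃ z₀ ∈ S, z₀.2 < s ∧ ∀ y ∈ S, y.2 < s →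
      U z₀ + segmentCost f z₀ q + δ / (s - z₀.2) ≤ U y + segmentCost f y q + δ / (s - y.2) := by
  obtain ⟨C, hC, hcoer⟩ := hf.exists_add_mul_abs_sub_le hU 0
  let m := U q - C * q.2
  have hm {y} (hy : y ∈ S) (hys : y.2 < s) : m ≤ U y + segmentCost f y q := by
    linarith [hcoer y q (hys.trans hs), mul_nonneg hC (hS0 y hy)]
  let E := fun y : ℝ × ℝ => U y + segmentCost f y q + δ / (s - y.2)
  have hEm : 0 < E z - m := by
    linarith [hm hz hzs, div_pos hδ (sub_pos.2 hzs)]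
  let S' := S ∩ {y | y.2 ≤ s - δ / (E z - m)}
  have hout {y} (hy : y ∈ S) (hys : y.2 < s) (hyS : y ∉ S') : E z < E y := by
    have hlt : s - y.2 < δ / (E z - m) := by
      linarith [not_le.1 fun h : y.2 ≤ s - δ / (E z - m) => hyS ⟨hy, h⟩]
    linarith [hm hy hys, (lt_div_comm₀ (sub_pos.2 hys) hEm).1 hlt]
  have hss : s - δ / (E z - m) < s := sub_lt_self _ (div_pos hδ hEm)
  have hzS : z ∈ S' := by_contra fun h => (hout hz hzs h).false
  have hcont : ContinuousOn (fun y : ℝ × ℝ => δ / (s - y.2)) S' := fun y hy => by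
    have : s - y.2 ≠ 0 := (sub_pos.2 (hy.2.trans_lt hss)).ne'
    exact ContinuousAt.continuousWithinAt (by fun_prop (disch := assumption))
  obtain ⟨z₀, hz₀, hmin⟩ := hf.exists_isMinOn_add_segmentCost hU
    (hS.inter (isClosed_le continuous_snd continuous_const)) ⟨z, hzS⟩ (hss.trans hs)
    (fun y hy => ⟨hS0 y hy.1, hy.2⟩) hcont
    fun y hy => div_nonneg hδ.le (sub_pos.2 (hy.2.trans_lt hss)).le
  refine ⟨z₀, hz₀.1, hz₀.2.trans_lt hss, fun y hy hys => ?_⟩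
  by_cases hyS : y ∈ S'
  · exact isMinOn_iff.1 hmin y hyS
  · exact (isMinOn_iff.1 hmin z hzS).trans (hout hy hys hyS).le

end IsLegendreFlux

namespace IsHJPotential

variable {f : ℝ → ℝ} {Ω : Set (ℝ × ℝ)} {U u : ℝ × ℝ → ℝ} {q : ℝ × ℝ} {l : ℝ}

theorem le_flux_of_isLocalMin_add (hf : IsLegendreFlux f) (hU : IsHJPotential f Ω U u)
    (hΩ : IsOpen Ω) {z₀ : ℝ × ℝ} (hz₀ : z₀ ∈ Ω) {h : ℝ × ℝ → ℝ} {h' : ℝ × ℝ →L[ℝ] ℝ}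
    (hh : HasFDerivAt h h' z₀) (hmin : IsLocalMin (fun z => U z + h z) z₀) :
    h' (0, 1) ≤ f (-h' (1, 0)) := by
  refine hU.le_flux_of_subgradient hf hΩ hz₀ fun ε hε => ?_
  filter_upwards [hmin, hh.isLittleO.def hε] with z hz hzε
  have hlin : h' (z - z₀) = h' (1, 0) * (z.1 - z₀.1) + h' (0, 1) * (z.2 - z₀.2) := by
    rw [show z - z₀ = (z.1 - z₀.1) • ((1, 0) : ℝ × ℝ) + (z.2 - z₀.2) • ((0, 1) : ℝ × ℝ) by
      ext <;> simp, map_add, map_smul, map_smul, smul_eq_mul, smul_eq_mul, mul_comm,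
      mul_comm (h' (0, 1))]
  linarith [(le_abs_self _).trans hzε]

theorem not_isLocalMin_add_segmentCost_add (hf : IsLegendreFlux f) (hU : IsHJPotential f Ω U u)
    (hΩ : IsOpen Ω) {z₀ : ℝ × ℝ} (hz₀ : z₀ ∈ Ω) (hq : z₀.2 < q.2) {h : ℝ → ℝ} {h' : ℝ}
    (hh : HasDerivAt h h' z₀.2) (hh' : 0 < h') :
    ¬ IsLocalMin (fun z => U z + segmentCost f z q + h z.2) z₀ := by
  intro hmin
  obtain ⟨k, hk⟩ := hf.surjective_deriv ((q.1 - z₀.1) / (q.2 - z₀.2))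
  have hpen : HasFDerivAt (fun z : ℝ × ℝ => h z.2) (h' • ContinuousLinearMap.snd ℝ ℝ ℝ) z₀ :=
    hh.comp_hasFDerivAt z₀ hasFDerivAt_snd
  have hle := hU.le_flux_of_isLocalMin_add hf hΩ hz₀
    ((hf.hasFDerivAt_segmentCost_left hq hk).add hpen)
    (by simpa only [IsLocalMin, Pi.add_apply, add_assoc] using hmin)
  simp only [neg_sub, _root_.add_apply, _root_.sub_apply, _root_.smul_apply,
    ContinuousLinearMap.coe_fst', ContinuousLinearMap.coe_snd', smul_eq_mul, mul_one, mul_zero,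
    sub_zero, zero_sub, add_zero, neg_neg] at hle
  linarith

/-- Adding the penalty `δ / (s - z.2)` moves a would-be violation to a minimum inside `Ω`, which
the supersolution property of `U` excludes. -/
theorem le_add_segmentCost_of_frontier (hf : IsLegendreFlux f) (hU : IsHJPotential f Ω U u)
    (hΩ : IsOpen Ω) (hΩ0 : ∀ z ∈ Ω, 0 ≤ z.2) {s : ℝ} (hs : s < q.2)
    (hfr : ∀ z ∈ frontier Ω, z.2 < s → l ≤ U z + segmentCost f z q) {z : ℝ × ℝ}
    (hz : z ∈ closure Ω) (hzs : z.2 < s) : l ≤ U z + segmentCost f z q := by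
  by_contra! hlt
  obtain ⟨K, hK⟩ := hU.lipschitz
  have hcl0 : closure Ω ⊆ {y | 0 ≤ y.2} :=
    closure_minimal hΩ0 (isClosed_le continuous_const continuous_snd)
  obtain ⟨δ, hδ, hzδ⟩ : ∃ δ > 0, U z + segmentCost f z q + δ / (s - z.2) < l := by
    refine ⟨(s - z.2) * ((l - (U z + segmentCost f z q)) / 2),
      mul_pos (sub_pos.2 hzs) (by linarith), ?_⟩
    rw [mul_div_cancel_left₀ _ (sub_pos.2 hzs).ne']
    linarith
  obtain ⟨z₀, hz₀, hz₀s, hmin⟩ :=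
    hf.exists_forall_penalized_le hK isClosed_closure hcl0 hs hz hzs hδ
  have hz₀Ω : z₀ ∈ Ω := by
    by_contra hnot
    have hz₀fr : z₀ ∈ frontier Ω := ⟨hz₀, by rwa [hΩ.interior_eq]⟩
    linarith [hfr z₀ hz₀fr hz₀s, hmin z hz hzs, div_pos hδ (sub_pos.2 hz₀s)]
  have hpen : HasDerivAt (fun r => δ / (s - r)) (δ / (s - z₀.2) ^ 2) z₀.2 := by
    refine ((hasDerivAt_const z₀.2 δ).div ((hasDerivAt_id z₀.2).const_sub s)
      (sub_pos.2 hz₀s).ne').congr_deriv ?_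
    simp
  refine hU.not_isLocalMin_add_segmentCost_add hf hΩ hz₀Ω (hz₀s.trans hs) hpen
    (div_pos hδ (pow_pos (sub_pos.2 hz₀s) 2)) ?_
  filter_upwards [hΩ.mem_nhds hz₀Ω,
    (continuous_snd.tendsto z₀).eventually_lt_const hz₀s] with y hyΩ hys
  exact hmin y (subset_closure hyΩ) hys

theorem exists_lt_le_add_segmentCost_of_frontier (hf : IsLegendreFlux f)
    (hU : IsHJPotential f Ω U u) (hΩ : IsOpen Ω) (hΩ0 : ∀ z ∈ Ω, 0 ≤ z.2) (hq : q ∈ Ω)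
    (hlt : ∀ z ∈ frontier Ω, z.2 < q.2 → U q < U z + segmentCost f z q) :
    ∃ l, U q < l ∧ ∀ z ∈ frontier Ω, z.2 < q.2 → l ≤ U z + segmentCost f z q := by
  obtain ⟨K, hK⟩ := hU.lipschitz
  obtain ⟨d, hd, hball⟩ := Metric.isOpen_iff.1 hΩ q hq
  obtain ⟨r, hr, hlate⟩ := hf.exists_add_one_le_add_segmentCost_of_notMem_ball hK q hd
  have hfr0 : ∀ z ∈ frontier Ω, 0 ≤ z.2 := fun z hz =>
    closure_minimal hΩ0 (isClosed_le continuous_const continuous_snd) hz.1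
  obtain ⟨l, hl, hle⟩ := hf.exists_lt_le_add_segmentCost hK
    (isClosed_frontier.inter (isClosed_le continuous_snd continuous_const)) (sub_lt_self q.2 hr)
    (fun z hz => ⟨hfr0 z hz.1, hz.2⟩) fun z hz => hlt z hz.1 (hz.2.trans_lt (sub_lt_self q.2 hr))
  refine ⟨min l (U q + 1), lt_min hl (lt_add_one _), fun z hz hzq => ?_⟩
  rcases le_or_gt z.2 (q.2 - r) with h | h
  · exact (min_le_left _ _).trans (hle z ⟨hz, h⟩)
  · exact (min_le_right _ _).trans
      (hlate z (fun hzd => hz.2 (hΩ.interior_eq.symm ▸ hball hzd)) hzq h)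

theorem tendsto_add_segmentCost_vertical (hU : IsHJPotential f Ω U u) (x s t : ℝ) :
    Tendsto (fun r => U (x, r) + segmentCost f (x, r) (x, t)) (𝓝 s)
      (𝓝 (U (x, s) + segmentCost f (x, s) (x, t))) := by
  obtain ⟨K, hK⟩ := hU.lipschitz
  have hcont := hK.continuous
  simp only [segmentCost, sub_self, zero_div]
  exact Continuous.tendsto (by fun_prop) s

theorem exists_mem_frontier_eq_add_segmentCost (hf : IsLegendreFlux f)
    (hU : IsHJPotential f Ω U u) (hΩ : IsOpen Ω) (hconv : Convex ℝ Ω) (hΩ0 : ∀ z ∈ Ω, 0 ≤ z.2)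
    (hq : q ∈ Ω) : ∃ z ∈ frontier Ω, z.2 < q.2 ∧ U q = U z + segmentCost f z q := by
  by_contra! hne
  obtain ⟨l, hl, hle⟩ := hU.exists_lt_le_add_segmentCost_of_frontier hf hΩ hΩ0 hq
    fun z hz hzq => (hU.le_add_segmentCost hf hΩ hconv hz.1 (subset_closure hq) hzq).lt_of_ne
      (hne z hz hzq)
  have hlim := (hU.tendsto_add_segmentCost_vertical (f := f) q.1 q.2 q.2).mono_left
    (nhdsWithin_le_nhds (s := Iio q.2))
  have hΩnear : ∀ᶠ r in 𝓝[<] q.2, (q.1, r) ∈ Ω :=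
    nhdsWithin_le_nhds ((hΩ.preimage (Continuous.prodMk_right q.1)).mem_nhds hq)
  refine hl.not_ge ((ge_of_tendsto hlim ?_).trans_eq (by simp [segmentCost]))
  filter_upwards [hΩnear, self_mem_nhdsWithin] with r hrΩ hrq
  obtain ⟨s, hrs, hsq⟩ := exists_between (mem_Iio.1 hrq)
  exact hU.le_add_segmentCost_of_frontier hf hΩ hΩ0 hsq
    (fun z hz hzs => hle z hz (hzs.trans hsq)) (subset_closure hrΩ) hrs

theorem hasFDerivAt_of_eq_add_segmentCost (hf : IsLegendreFlux f) (hU : IsHJPotential f Ω U u)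
    (hΩ : IsOpen Ω) (hconv : Convex ℝ Ω) {p : ℝ × ℝ} (hp : p ∈ closure Ω) (hq : q ∈ closure Ω)
    (heq : U q = U p + segmentCost f p q) {k : ℝ} {z : ℝ × ℝ} (hz : z ∈ Ω) (hpz : p.2 < z.2)
    (hzq : z.2 < q.2) (hkp : z.1 - p.1 = deriv f k * (z.2 - p.2))
    (hkq : q.1 - z.1 = deriv f k * (q.2 - z.2)) :
    HasFDerivAt U (k • ContinuousLinearMap.fst ℝ ℝ ℝ - f k • ContinuousLinearMap.snd ℝ ℝ ℝ) z := by
  have hpz' : 0 < z.2 - p.2 := sub_pos.2 hpz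
  have hzq' : 0 < q.2 - z.2 := sub_pos.2 hzq
  have upper : HasFDerivAt (fun y => U p + segmentCost f p y) _ z :=
    (hf.hasFDerivAt_segmentCost_right (k := k) hpz (eq_div_of_mul_eq hpz'.ne' hkp.symm)).const_add _
  have lower : HasFDerivAt (fun y => U q - segmentCost f y q) _ z :=
    (hf.hasFDerivAt_segmentCost_left (k := k) hzq (eq_div_of_mul_eq hzq'.ne' hkq.symm)).const_sub _
  rw [neg_neg] at lower
  have hsplit : segmentCost f p q = segmentCost f p z + segmentCost f z q := by
    have hpq : q.1 - p.1 = deriv f k * (q.2 - p.2) := by linarith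
    simp only [segmentCost, hkp, hkq, hpq, mul_div_cancel_right₀ _ hpz'.ne',
      mul_div_cancel_right₀ _ hzq'.ne', mul_div_cancel_right₀ _ (sub_pos.2 (hpz.trans hzq)).ne']
    ring
  refine hasFDerivAt_of_le_of_le lower upper ?_ ?_ (by linarith)
  · filter_upwards [hΩ.mem_nhds hz, (continuous_snd.tendsto z).eventually_lt_const hzq]
      with y hy hyq
    exact sub_le_iff_le_add.2 (hU.le_add_segmentCost hf hΩ hconv (subset_closure hy) hq hyq)
  · filter_upwards [hΩ.mem_nhds hz, (continuous_snd.tendsto z).eventually_const_lt hpz]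
      with y hy hpy
    exact hU.le_add_segmentCost hf hΩ hconv hp (subset_closure hy) hpy

theorem vertical_le_add_segmentCost (hf : IsLegendreFlux f) {J : Set ℝ} (hJ : IsOpen J)
    (hconv : Convex ℝ J) (hJ0 : frontier J = {0}) (hU : IsHJPotential f (J ×ˢ Ioi 0) U u)
    {r s s₁ : ℝ} (hs : 0 ≤ s) (hss₁ : s < s₁) (hs₁r : s₁ < r)
    (hinit : ∀ x ∈ closure J,
      U (0, s₁) + segmentCost f (0, s₁) (0, r) ≤ U (x, 0) + segmentCost f (x, 0) (0, r))
    {x : ℝ} (hx : x ∈ closure J) :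
    U (0, s₁) + segmentCost f (0, s₁) (0, r) ≤ U (x, s) + segmentCost f (x, s) (0, r) := by
  have hΩ : IsOpen (J ×ˢ Ioi (0 : ℝ)) := hJ.prod isOpen_Ioi
  have hcl : closure (J ×ˢ Ioi (0 : ℝ)) = closure J ×ˢ Ici 0 := by
    rw [closure_prod_eq, closure_Ioi]
  have h0 : (0 : ℝ) ∈ closure J := frontier_subset_closure (hJ0 ▸ mem_singleton 0)
  refine hU.le_add_segmentCost_of_frontier hf hΩ (fun z hz => hz.2.le) (s := s₁) hs₁r ?_
    (z := (x, s)) (hcl ▸ ⟨hx, hs⟩) hss₁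
  rintro ⟨y, t⟩ hyt hts₁
  rw [frontier_prod_eq, frontier_Ioi, closure_Ioi, hJ0] at hyt
  rcases hyt with ⟨hy, rfl⟩ | ⟨rfl, ht⟩
  · exact hinit y hy
  · have hstep := hU.le_add_segmentCost hf hΩ (hconv.prod (convex_Ioi 0)) (p := (0, t))
      (q := (0, s₁)) (hcl ▸ ⟨h0, ht⟩) (hcl ▸ ⟨h0, (hs.trans_lt hss₁).le⟩) hts₁
    simp only [segmentCost, sub_self, zero_div] at hstep ⊢
    linarith

theorem boundary_eq_or_vertical_le (hf : IsLegendreFlux f) {J : Set ℝ} (hJ : IsOpen J)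
    (hconv : Convex ℝ J) (hJ0 : frontier J = {0}) (hU : IsHJPotential f (J ×ˢ Ioi 0) U u) {r : ℝ}
    (hr : 0 < r) :
    (∃ x ∈ closure J, U (0, r) = U (x, 0) + segmentCost f (x, 0) (0, r)) ∨
      ∃ δ > 0, δ ≤ r ∧ ∀ s ∈ Ioo (r - δ) r, ∀ x ∈ closure J,
        U (0, s) + segmentCost f (0, s) (0, r) ≤ U (x, s) + segmentCost f (x, s) (0, r) := by
  obtain ⟨K, hK⟩ := hU.lipschitz
  have hcl : closure (J ×ˢ Ioi (0 : ℝ)) = closure J ×ˢ Ici 0 := by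
    rw [closure_prod_eq, closure_Ioi]
  have h0 : (0 : ℝ) ∈ closure J := frontier_subset_closure (hJ0 ▸ mem_singleton 0)
  refine or_iff_not_imp_left.2 fun hno => ?_
  push Not at hno
  obtain ⟨l, hl, hle⟩ := hf.exists_lt_le_add_segmentCost (q := (0, r)) hK
    (S := closure J ×ˢ {0}) (isClosed_closure.prod isClosed_singleton) (s := 0) hr
    (fun z hz => by simp [(mem_singleton_iff.1 hz.2)]) (by
      rintro ⟨x, t⟩ ⟨hx, rfl⟩
      exact (hU.le_add_segmentCost hf (hJ.prod isOpen_Ioi) (hconv.prod (convex_Ioi 0))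
        (hcl ▸ ⟨hx, self_mem_Ici⟩) (hcl ▸ ⟨h0, hr.le⟩) hr).lt_of_ne (hno x hx))
  have hvertical (t : ℝ) := hU.tendsto_add_segmentCost_vertical (f := f) 0 t r
  obtain ⟨δ, hδ, hδl⟩ := Metric.eventually_nhds_iff.1 ((hvertical r).eventually_lt_const
    (show U (0, r) + segmentCost f (0, r) (0, r) < l by simpa [segmentCost] using hl))
  refine ⟨min δ r, lt_min hδ hr, min_le_right _ _, fun s hs x hx => ?_⟩
  refine le_of_tendsto ((hvertical s).mono_left (nhdsWithin_le_nhds (s := Ioi s))) ?_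
  filter_upwards [Ioo_mem_nhdsGT hs.2] with s₁ hs₁
  refine hU.vertical_le_add_segmentCost hf hJ hconv hJ0 (by linarith [hs.1, min_le_right δ r])
    hs₁.1 hs₁.2 (fun y hy => (hδl ?_).le.trans (hle (y, 0) ⟨hy, rfl⟩)) hx
  rw [Real.dist_eq, abs_lt]
  constructor <;> linarith [hs₁.1, hs₁.2, hs.1, min_le_left δ r]

theorem boundary_eq_or_slope_le (hf : IsLegendreFlux f) {J : Set ℝ} (hJ : IsOpen J)
    (hconv : Convex ℝ J) (hJ0 : frontier J = {0}) (hU : IsHJPotential f (J ×ˢ Ioi 0) U u) {k : ℝ}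
    (hk : deriv f k = 0) {r : ℝ} (hr : 0 < r) :
    (∃ x ∈ closure J, U (0, r) = U (x, 0) + segmentCost f (x, 0) (0, r)) ∨
      ∃ δ > 0, δ ≤ r ∧ ∀ s ∈ Ioo (r - δ) r, ∀ m,
        HasDerivWithinAt (fun x => U (x, s)) m (closure J) 0 → ∀ x ∈ closure J, k * x ≤ m * x := by
  refine (hU.boundary_eq_or_vertical_le hf hJ hconv hJ0 hr).imp_right ?_
  rintro ⟨δ, hδ, hδr, hle⟩
  refine ⟨δ, hδ, hδr, fun s hs m hm x hx => ?_⟩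
  have h0 : (0 : ℝ) ∈ closure J := frontier_subset_closure (hJ0 ▸ mem_singleton 0)
  have hcost : HasDerivAt (fun x => segmentCost f (x, s) (0, r)) (-k) 0 := by
    have := (hf.hasFDerivAt_segmentCost_left (p := (0, s)) (q := (0, r)) (k := k) hs.2
      (by simpa using hk)).comp_hasDerivAt (0 : ℝ)
      (f := fun x => (x, s)) ((hasDerivAt_id 0).prodMk (hasDerivAt_const 0 s))
    simpa [Function.comp_def] using this
  have hmin : IsMinOn (fun x => U (x, s) + segmentCost f (x, s) (0, r)) (closure J) 0 :=
    isMinOn_iff.2 (hle s hs)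
  have hcone : x ∈ posTangentConeAt (closure J) 0 := by
    simpa using sub_mem_posTangentConeAt_of_segment_subset (hconv.closure.segment_subset h0 hx)
  have hslope := hmin.localize.hasFDerivWithinAt_nonneg
    (hm.add hcost.hasDerivWithinAt).hasFDerivWithinAt hcone
  rw [ContinuousLinearMap.toSpanSingleton_apply, smul_eq_mul] at hslope
  linarith

end IsHJPotential

/-! ### Smooth plateaus -/

/-- The smooth monotone step from `0` to `1` whose transition takes place on `[a, b]`. It is only
meaningful for `a < b`. -/
def smoothStep (a b x : ℝ) : ℝ := Real.smoothTransition ((x - a) / (b - a))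

section SmoothStep

variable {a b : ℝ}

theorem contDiff_smoothStep (a b : ℝ) : ContDiff ℝ 1 (smoothStep a b) :=
  Real.smoothTransition.contDiff.comp ((contDiff_id.sub contDiff_const).div_const _)

theorem smoothStep_nonneg (a b x : ℝ) : 0 ≤ smoothStep a b x := Real.smoothTransition.nonneg _

theorem smoothStep_le_one (a b x : ℝ) : smoothStep a b x ≤ 1 := Real.smoothTransition.le_one _

theorem monotone_smoothStep (hab : a < b) : Monotone (smoothStep a b) := fun _ _ hxy =>
  Real.smoothTransition.monotone
    (div_le_div_of_nonneg_right (sub_le_sub_right hxy a) (sub_pos.2 hab).le)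

theorem smoothStep_of_le (hab : a < b) {x : ℝ} (hx : x ≤ a) : smoothStep a b x = 0 :=
  Real.smoothTransition.zero_of_nonpos
    (div_nonpos_of_nonpos_of_nonneg (sub_nonpos.2 hx) (sub_pos.2 hab).le)

theorem smoothStep_of_ge (hab : a < b) {x : ℝ} (hx : b ≤ x) : smoothStep a b x = 1 :=
  Real.smoothTransition.one_of_one_le ((one_le_div (sub_pos.2 hab)).2 (sub_le_sub_right hx a))

theorem deriv_smoothStep_nonneg (hab : a < b) (x : ℝ) : 0 ≤ deriv (smoothStep a b) x :=
  (monotone_smoothStep hab).deriv_nonneg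

theorem deriv_smoothStep_of_notMem (hab : a < b) {x : ℝ} (hx : x ∉ Ioo a b) :
    deriv (smoothStep a b) x = 0 := by
  rcases not_and_or.1 hx with h | h
  · refine IsLocalMin.deriv_eq_zero (Eventually.of_forall fun y => ?_)
    rw [smoothStep_of_le hab (not_lt.1 h)]
    exact smoothStep_nonneg a b y
  · refine IsLocalMax.deriv_eq_zero (Eventually.of_forall fun y => ?_)
    rw [smoothStep_of_ge hab (not_lt.1 h)]
    exact smoothStep_le_one a b y

theorem continuous_deriv_smoothStep (a b : ℝ) : Continuous (deriv (smoothStep a b)) :=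
  (contDiff_smoothStep a b).continuous_deriv le_rfl

theorem integrable_deriv_smoothStep (hab : a < b) : Integrable (deriv (smoothStep a b)) :=
  (continuous_deriv_smoothStep a b).integrable_of_hasCompactSupport
    (HasCompactSupport.intro isCompact_Icc fun _ hx =>
      deriv_smoothStep_of_notMem hab fun h => hx (Ioo_subset_Icc_self h))

theorem integral_deriv_smoothStep (hab : a < b) : ∫ x, deriv (smoothStep a b) x = 1 := by
  calc ∫ x, deriv (smoothStep a b) x = ∫ x in a..b, deriv (smoothStep a b) x := by
        rw [intervalIntegral.integral_of_le hab.le]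
        exact (setIntegral_eq_integral_of_forall_compl_eq_zero fun x hx =>
          deriv_smoothStep_of_notMem hab fun h => hx (Ioo_subset_Ioc_self h)).symm
    _ = 1 := by
        rw [intervalIntegral.integral_deriv_eq_sub
          (fun x _ => (contDiff_smoothStep a b).differentiable one_ne_zero x)
          ((continuous_deriv_smoothStep a b).intervalIntegrable _ _),
          smoothStep_of_le hab le_rfl, smoothStep_of_ge hab le_rfl, sub_zero]

theorem integrable_mul_deriv_smoothStep (hab : a < b) {g : ℝ → ℝ} {C : ℝ} (hg : Measurable g)
    (hC : ∀ x, |g x| ≤ C) : Integrable fun x => g x * deriv (smoothStep a b) x :=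
  (integrable_deriv_smoothStep hab).bdd_mul hg.aestronglyMeasurable (Eventually.of_forall hC)

theorem abs_integral_mul_deriv_smoothStep_sub_le (hab : a < b) {g : ℝ → ℝ} {C : ℝ}
    (hg : Measurable g) (hC : ∀ x, |g x| ≤ C) {l ε : ℝ} (hε : ∀ x ∈ Ioo a b, |g x - l| ≤ ε) :
    |(∫ x, g x * deriv (smoothStep a b) x) - l| ≤ ε := by
  have hint := integrable_deriv_smoothStep hab
  calc |(∫ x, g x * deriv (smoothStep a b) x) - l|
      = |∫ x, (g x - l) * deriv (smoothStep a b) x| := by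
        simp only [sub_mul]
        rw [integral_sub (integrable_mul_deriv_smoothStep hab hg hC) (hint.const_mul l),
          integral_const_mul, integral_deriv_smoothStep hab, mul_one]
    _ ≤ ∫ x, ε * deriv (smoothStep a b) x := by
        rw [← Real.norm_eq_abs]
        refine norm_integral_le_of_norm_le (hint.const_mul ε) (Eventually.of_forall fun x => ?_)
        by_cases hx : x ∈ Ioo a b
        · rw [norm_mul, Real.norm_of_nonneg (deriv_smoothStep_nonneg hab x)]
          exact mul_le_mul_of_nonneg_right (hε x hx) (deriv_smoothStep_nonneg hab x)
        · simp [deriv_smoothStep_of_notMem hab hx]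
    _ = ε := by rw [integral_const_mul, integral_deriv_smoothStep hab, mul_one]

theorem tendsto_integral_mul_deriv_smoothStep {ι : Type*} {L : Filter ι} {F : Filter ℝ}
    {a b : ι → ℝ} (hab : ∀ᶠ i in L, a i < b i)
    (hF : Tendsto (fun i => Ioo (a i) (b i)) L F.smallSets) {g : ℝ → ℝ} {C l : ℝ}
    (hg : Measurable g) (hC : ∀ x, |g x| ≤ C) (hl : Tendsto g F (𝓝 l)) :
    Tendsto (fun i => ∫ x, g x * deriv (smoothStep (a i) (b i)) x) L (𝓝 l) := by
  refine Metric.tendsto_nhds.2 fun ε hε => ?_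
  have hclose := eventually_smallSets_forall.2 (Metric.tendsto_nhds.1 hl (ε / 2) (half_pos hε))
  filter_upwards [hab, hF.eventually hclose] with i hi hgi
  exact (abs_integral_mul_deriv_smoothStep_sub_le hi hg hC fun x hx => (hgi x hx).le).trans_lt
    (half_lt_self hε)

end SmoothStep

/-- The smooth cut-off which rises from `0` to `1` on `[a, b]` and falls back to `0` on `[c, d]`.
It is only meaningful for `a < b ≤ c < d`. -/
def plateau (a b c d x : ℝ) : ℝ := smoothStep a b x - smoothStep c d x

section Plateau

variable {a b c d : ℝ}

theorem contDiff_plateau (a b c d : ℝ) : ContDiff ℝ 1 (plateau a b c d) :=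
  (contDiff_smoothStep a b).sub (contDiff_smoothStep c d)

theorem deriv_plateau (a b c d x : ℝ) :
    deriv (plateau a b c d) x = deriv (smoothStep a b) x - deriv (smoothStep c d) x :=
  deriv_sub ((contDiff_smoothStep a b).differentiable one_ne_zero x)
    ((contDiff_smoothStep c d).differentiable one_ne_zero x)

theorem plateau_mem_Icc (hab : a < b) (hbc : b ≤ c) (hcd : c < d) (x : ℝ) :
    plateau a b c d x ∈ Icc 0 1 := by
  have := smoothStep_nonneg c d x
  have := smoothStep_le_one a b x
  refine ⟨?_, by unfold plateau; linarith⟩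
  rcases le_total x c with h | h
  · rw [plateau, smoothStep_of_le hcd h, sub_zero]
    exact smoothStep_nonneg a b x
  · rw [plateau, smoothStep_of_ge hab (hbc.trans h)]
    exact sub_nonneg.2 (smoothStep_le_one c d x)

theorem plateau_of_mem (hab : a < b) (hcd : c < d) {x : ℝ} (hx : x ∈ Icc b c) :
    plateau a b c d x = 1 := by
  rw [plateau, smoothStep_of_ge hab hx.1, smoothStep_of_le hcd hx.2, sub_zero]

theorem plateau_of_notMem (hab : a < b) (hbc : b ≤ c) (hcd : c < d) {x : ℝ}
    (hx : x ∉ Icc a d) : plateau a b c d x = 0 := by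
  rcases not_and_or.1 hx with h | h
  · have := not_le.1 h
    rw [plateau, smoothStep_of_le hab (by linarith), smoothStep_of_le hcd (by linarith), sub_zero]
  · have := not_le.1 h
    rw [plateau, smoothStep_of_ge hab (by linarith), smoothStep_of_ge hcd (by linarith), sub_self]

theorem hasCompactSupport_plateau (hab : a < b) (hbc : b ≤ c) (hcd : c < d) :
    HasCompactSupport (plateau a b c d) :=
  HasCompactSupport.intro isCompact_Icc fun _ => plateau_of_notMem hab hbc hcd

variable {g : ℝ → ℝ} {C : ℝ}

theorem integral_mul_deriv_plateau (hab : a < b) (hcd : c < d) (hg : Measurable g)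
    (hC : ∀ x, |g x| ≤ C) :
    ∫ x, g x * deriv (plateau a b c d) x =
      (∫ x, g x * deriv (smoothStep a b) x) - ∫ x, g x * deriv (smoothStep c d) x := by
  simp only [deriv_plateau, mul_sub]
  exact integral_sub (integrable_mul_deriv_smoothStep hab hg hC)
    (integrable_mul_deriv_smoothStep hcd hg hC)

theorem abs_integral_mul_deriv_plateau_le (hab : a < b) (hcd : c < d) (hg : Measurable g)
    (hC : ∀ x, |g x| ≤ C) : |∫ x, g x * deriv (plateau a b c d) x| ≤ 2 * C := by
  rw [integral_mul_deriv_plateau hab hcd hg hC, two_mul]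
  refine (abs_sub _ _).trans (add_le_add ?_ ?_)
  · simpa using abs_integral_mul_deriv_smoothStep_sub_le hab hg hC (l := 0) fun x _ => by
      simpa using hC x
  · simpa using abs_integral_mul_deriv_smoothStep_sub_le hcd hg hC (l := 0) fun x _ => by
      simpa using hC x

theorem integral_mul_plateau (hab : a < b) (hbc : b ≤ c) (hcd : c < d)
    (hint : ∀ s t, IntervalIntegrable (fun x => g x * plateau a b c d x) volume s t) :
    ∫ x, g x * plateau a b c d x = (∫ x in a..b, g x * plateau a b c d x) + (∫ x in b..c, g x) +
      ∫ x in c..d, g x * plateau a b c d x := by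
  have hmid : ∫ x in b..c, g x * plateau a b c d x = ∫ x in b..c, g x :=
    intervalIntegral.integral_congr fun x hx => by
      rw [plateau_of_mem hab hcd (uIcc_of_le hbc ▸ hx), mul_one]
  rw [← hmid, intervalIntegral.integral_add_adjacent_intervals (hint a b) (hint b c),
    intervalIntegral.integral_add_adjacent_intervals (hint a c) (hint c d),
    intervalIntegral.integral_of_le (by linarith), ← integral_Icc_eq_integral_Ioc]
  refine (setIntegral_eq_integral_of_forall_compl_eq_zero fun x hx => ?_).symm
  rw [plateau_of_notMem hab hbc hcd hx, mul_zero]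

theorem abs_integral_mul_plateau_sub_le (hab : a < b) (hbc : b ≤ c) (hcd : c < d)
    (hg : Measurable g) (hC : ∀ x, |g x| ≤ C) :
    |(∫ x, g x * plateau a b c d x) - ∫ x in b..c, g x| ≤ C * (b - a) + C * (d - c) := by
  have hle (x : ℝ) : ‖g x * plateau a b c d x‖ ≤ C := by
    obtain ⟨h0, h1⟩ := plateau_mem_Icc hab hbc hcd x
    rw [norm_mul, Real.norm_of_nonneg h0]
    exact (mul_le_of_le_one_right (norm_nonneg _) h1).trans (hC x)
  have hint (s t : ℝ) : IntervalIntegrable (fun x => g x * plateau a b c d x) volume s t :=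
    intervalIntegrable_const.mono_fun'
      (hg.mul (contDiff_plateau a b c d).continuous.measurable).aestronglyMeasurable
      (Eventually.of_forall hle)
  rw [integral_mul_plateau hab hbc hcd hint, add_sub_right_comm, add_sub_cancel_right,
    ← abs_of_pos (sub_pos.2 hab), ← abs_of_pos (sub_pos.2 hcd)]
  exact (abs_add_le _ _).trans (add_le_add
    (intervalIntegral.norm_integral_le_of_norm_le_const fun x _ => hle x)
    (intervalIntegral.norm_integral_le_of_norm_le_const fun x _ => hle x))

end Plateau

section PlateauLimits

variable {g : ℝ → ℝ} {C : ℝ}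

theorem tendsto_Ioo_sub_left_smallSets (x : ℝ) :
    Tendsto (fun h => Ioo (x - h) x) (𝓝[>] 0) (𝓝[<] x).smallSets := by
  refine tendsto_smallSets_iff.2 fun s hs => ?_
  obtain ⟨y, hy, hys⟩ := (mem_nhdsLT_iff_exists_Ioo_subset' (sub_one_lt x)).1 hs
  filter_upwards [Ioo_mem_nhdsGT (sub_pos.2 hy)] with h hh
  exact (Ioo_subset_Ioo_left (by linarith [hh.2])).trans hys

theorem tendsto_Ioo_add_right_smallSets (x : ℝ) :
    Tendsto (fun h => Ioo x (x + h)) (𝓝[>] 0) (𝓝[>] x).smallSets := by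
  refine tendsto_smallSets_iff.2 fun s hs => ?_
  obtain ⟨y, hy, hys⟩ := (mem_nhdsGT_iff_exists_Ioo_subset' (lt_add_one x)).1 hs
  filter_upwards [Ioo_mem_nhdsGT (sub_pos.2 hy)] with h hh
  exact (Ioo_subset_Ioo_right (by linarith [hh.2])).trans hys

theorem tendsto_integral_mul_deriv_outer_plateau {x₁ x₂ l₁ l₂ : ℝ} (hg : Measurable g)
    (hC : ∀ x, |g x| ≤ C) (hl₁ : Tendsto g (𝓝[<] x₁) (𝓝 l₁)) (hl₂ : Tendsto g (𝓝[>] x₂) (𝓝 l₂)) :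
    Tendsto (fun h => ∫ x, g x * deriv (plateau (x₁ - h) x₁ x₂ (x₂ + h)) x) (𝓝[>] 0)
      (𝓝 (l₁ - l₂)) := by
  have hleft := tendsto_integral_mul_deriv_smoothStep
    (eventually_mem_nhdsWithin.mono fun h hh => sub_lt_self x₁ hh)
    (tendsto_Ioo_sub_left_smallSets x₁) hg hC hl₁
  have hright := tendsto_integral_mul_deriv_smoothStep
    (eventually_mem_nhdsWithin.mono fun h hh => lt_add_of_pos_right x₂ hh)
    (tendsto_Ioo_add_right_smallSets x₂) hg hC hl₂
  refine (hleft.sub hright).congr' ?_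
  filter_upwards [self_mem_nhdsWithin] with h hh
  exact (integral_mul_deriv_plateau (sub_lt_self x₁ hh) (lt_add_of_pos_right x₂ hh) hg hC).symm

theorem tendsto_integral_mul_outer_plateau {x₁ x₂ : ℝ} (hx : x₁ ≤ x₂) (hg : Measurable g)
    (hC : ∀ x, |g x| ≤ C) :
    Tendsto (fun h => ∫ x, g x * plateau (x₁ - h) x₁ x₂ (x₂ + h) x) (𝓝[>] 0)
      (𝓝 (∫ x in x₁..x₂, g x)) := by
  refine tendsto_iff_norm_sub_tendsto_zero.2 (squeeze_zero' (g := fun h => C * h + C * h)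
    (Eventually.of_forall fun _ => norm_nonneg _) ?_ ?_)
  · filter_upwards [self_mem_nhdsWithin] with h hh
    simpa using abs_integral_mul_plateau_sub_le (sub_lt_self x₁ hh) hx
      (lt_add_of_pos_right x₂ hh) hg hC
  · exact tendsto_nhdsWithin_of_tendsto_nhds (Continuous.tendsto' (by fun_prop) 0 0 (by simp))

theorem tendsto_integral_mul_deriv_right_plateau {x₁ x₂ l₁ l₂ : ℝ} (hg : Measurable g)
    (hC : ∀ x, |g x| ≤ C) (hl₁ : Tendsto g (𝓝[>] x₁) (𝓝 l₁)) (hl₂ : Tendsto g (𝓝[>] x₂) (𝓝 l₂)) :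
    Tendsto (fun h => ∫ x, g x * deriv (plateau x₁ (x₁ + h) x₂ (x₂ + h)) x) (𝓝[>] 0)
      (𝓝 (l₁ - l₂)) := by
  have hstep {x l : ℝ} (hl : Tendsto g (𝓝[>] x) (𝓝 l)) := tendsto_integral_mul_deriv_smoothStep
    (eventually_mem_nhdsWithin.mono fun h hh => lt_add_of_pos_right x hh)
    (tendsto_Ioo_add_right_smallSets x) hg hC hl
  refine ((hstep hl₁).sub (hstep hl₂)).congr' ?_
  filter_upwards [self_mem_nhdsWithin] with h hh
  exact (integral_mul_deriv_plateau (lt_add_of_pos_right x₁ hh) (lt_add_of_pos_right x₂ hh)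
    hg hC).symm

theorem tendsto_integral_mul_right_plateau {x₁ x₂ : ℝ} (hx : x₁ < x₂) (hg : Measurable g)
    (hC : ∀ x, |g x| ≤ C) :
    Tendsto (fun h => ∫ x, g x * plateau x₁ (x₁ + h) x₂ (x₂ + h) x) (𝓝[>] 0)
      (𝓝 (∫ x in x₁..x₂, g x)) := by
  have hint (s t : ℝ) : IntervalIntegrable g volume s t :=
    intervalIntegrable_const.mono_fun' hg.aestronglyMeasurable (Eventually.of_forall hC)
  refine tendsto_iff_norm_sub_tendsto_zero.2 (squeeze_zero' (g := fun h => C * h + C * h + C * h)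
    (Eventually.of_forall fun _ => norm_nonneg _) ?_ ?_)
  · filter_upwards [Ioo_mem_nhdsGT (sub_pos.2 hx)] with h hh
    have hplateau := abs_integral_mul_plateau_sub_le (lt_add_of_pos_right x₁ hh.1)
      (by linarith [hh.2] : x₁ + h ≤ x₂) (lt_add_of_pos_right x₂ hh.1) hg hC
    have hsmall : ‖∫ x in x₁..x₁ + h, g x‖ ≤ C * |x₁ + h - x₁| :=
      intervalIntegral.norm_integral_le_of_norm_le_const fun x _ => hC x
    rw [← intervalIntegral.integral_add_adjacent_intervals (hint x₁ (x₁ + h)) (hint (x₁ + h) x₂),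
      ← sub_sub, sub_right_comm]
    simp only [add_sub_cancel_left, abs_of_pos hh.1] at hplateau hsmall
    exact (norm_sub_le _ _).trans (add_le_add hplateau hsmall)
  · exact tendsto_nhdsWithin_of_tendsto_nhds (Continuous.tendsto' (by fun_prop) 0 0 (by simp))

theorem sub_le_integral_of_weak_deriv_le {m n : ℝ → ℝ} {C D : ℝ} (hm : Measurable m)
    (hn : Measurable n) (hmC : ∀ t, |m t| ≤ C) (hnC : ∀ t, |n t| ≤ D)
    (hcont : ContinuousOn m (Ici 0))
    (hweak : ∀ χ : ℝ → ℝ, ContDiff ℝ 1 χ → HasCompactSupport χ → (∀ t, 0 ≤ χ t) →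
      (∀ t ≤ 0, χ t = 0) → 0 ≤ (∫ t, m t * deriv χ t) + ∫ t, n t * χ t)
    {t₁ t₂ : ℝ} (ht₁ : 0 ≤ t₁) (ht : t₁ ≤ t₂) : m t₂ - m t₁ ≤ ∫ t in t₁..t₂, n t := by
  rcases ht.eq_or_lt with rfl | hlt
  · simp
  have hright {t : ℝ} (h : 0 ≤ t) : Tendsto m (𝓝[>] t) (𝓝 (m t)) :=
    (hcont t h).mono_left (nhdsWithin_mono t (Ioi_subset_Ici h))
  have hlim := (tendsto_integral_mul_deriv_right_plateau hm hmC (hright ht₁)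
    (hright (ht₁.trans ht))).add (tendsto_integral_mul_right_plateau hlt hn hnC)
  have : 0 ≤ m t₁ - m t₂ + ∫ t in t₁..t₂, n t := by
    refine ge_of_tendsto hlim ?_
    filter_upwards [Ioo_mem_nhdsGT (sub_pos.2 hlt)] with h hh
    have h₁ := lt_add_of_pos_right t₁ hh.1
    have h₂ := lt_add_of_pos_right t₂ hh.1
    have h₁₂ : t₁ + h ≤ t₂ := by linarith [hh.2]
    exact hweak _ (contDiff_plateau _ _ _ _) (hasCompactSupport_plateau h₁ h₁₂ h₂)
      (fun t => (plateau_mem_Icc h₁ h₁₂ h₂ t).1)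
      fun t h0 => by rw [plateau, smoothStep_of_le h₁ (h0.trans ht₁),
        smoothStep_of_le h₂ (h0.trans (ht₁.trans ht)), sub_zero]
  linarith

end PlateauLimits

/-! ### One-sided balance laws -/

theorem intervalIntegrable_of_tendsto {g : ℝ × ℝ → ℝ} {C : ℝ} (hg : Measurable g)
    (hC : ∀ z, |g z| ≤ C) {L : Filter ℝ} [L.NeBot] [L.IsCountablyGenerated] {l : ℝ → ℝ}
    (hl : ∀ t, 0 < t → Tendsto (fun x => g (x, t)) L (𝓝 (l t))) {t₁ t₂ : ℝ} (ht₁ : 0 ≤ t₁)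
    (ht₂ : 0 ≤ t₂) : IntervalIntegrable l volume t₁ t₂ := by
  have hmeas : AEMeasurable l (volume.restrict (Ioi 0)) :=
    aemeasurable_of_tendsto_metrizable_ae L
      (fun x => (hg.comp measurable_prodMk_left).aemeasurable)
      (ae_restrict_of_forall_mem measurableSet_Ioi hl)
  have hsub : uIoc t₁ t₂ ⊆ Ioi 0 := fun t ht => (le_min ht₁ ht₂).trans_lt ht.1
  refine (intervalIntegrable_const (c := C)).mono_fun'
    (hmeas.mono_measure (Measure.restrict_mono_set _ hsub)).aestronglyMeasurable
    (ae_restrict_of_forall_mem measurableSet_uIoc fun t ht => ?_)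
  exact le_of_tendsto (hl t (hsub ht)).norm (Eventually.of_forall fun x => hC _)

theorem ae_nonneg_of_integral_nonneg {g : ℝ → ℝ}
    (hg : ∀ t, 0 ≤ t → IntervalIntegrable g volume 0 t)
    (h : ∀ t₁ t₂, 0 ≤ t₁ → t₁ ≤ t₂ → 0 ≤ ∫ t in t₁..t₂, g t) : ∀ᵐ t : ℝ, 0 < t → 0 ≤ g t := by
  have hmono : MonotoneOn (fun t => ∫ s in (0)..t, g s) (Ici 0) := fun s hs t ht hst => by
    rw [← sub_nonneg, intervalIntegral.integral_interval_sub_left (hg t ht) (hg s hs)]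
    exact h s t hs hst
  filter_upwards [ae_all_iff.2 fun n : ℕ => (hg n n.cast_nonneg).ae_hasDerivAt_integral]
    with t hderiv ht
  obtain ⟨n, hn⟩ := exists_nat_ge t
  have := hderiv n (uIcc_of_le (n.cast_nonneg (α := ℝ)) ▸ ⟨ht.le, hn⟩) 0 left_mem_uIcc
  rw [← this.hasDerivWithinAt.derivWithin (uniqueDiffOn_Ici 0 t ht.le)]
  exact hmono.derivWithin_nonneg

/-- The space-time field `F = (flux, density)` satisfies `∂ₜ density + ∂ₓ flux ≤ 0` in the sense
of distributions on `t > 0`, and its density is continuous in time with values in `L¹_loc`. -/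
structure IsSubconservative (F : ℝ × ℝ → ℝ × ℝ) : Prop where
  measurable : Measurable F
  bounded : ∃ C, ∀ z, ‖F z‖ ≤ C
  density_continuous : ∀ r t₀ : ℝ, 0 ≤ t₀ →
    Tendsto (fun t => ∫ x in Icc (-r) r, |(F (x, t)).2 - (F (x, t₀)).2|) (𝓝[Ici 0] t₀) (𝓝 0)
  test : ∀ φ : ℝ × ℝ → ℝ, ContDiff ℝ 1 φ → HasCompactSupport φ → (∀ z, 0 ≤ φ z) →
    (∀ z, z.2 ≤ 0 → φ z = 0) → 0 ≤ ∫ z, fderiv ℝ φ z (F z)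

theorem integrable_uncurry_mul {g : ℝ × ℝ → ℝ} {C : ℝ} (hg : Measurable g) (hC : ∀ z, |g z| ≤ C)
    {ψ χ : ℝ → ℝ} (hψ : Integrable ψ) (hχ : Integrable χ) :
    Integrable fun z : ℝ × ℝ => g z * (ψ z.1 * χ z.2) :=
  (hψ.mul_prod hχ).bdd_mul hg.aestronglyMeasurable (Eventually.of_forall hC)

theorem integral_uncurry_mul {g : ℝ × ℝ → ℝ} {C : ℝ} (hg : Measurable g) (hC : ∀ z, |g z| ≤ C)
    {ψ χ : ℝ → ℝ} (hψ : Integrable ψ) (hχ : Integrable χ) :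
    ∫ z : ℝ × ℝ, g z * (ψ z.1 * χ z.2) = ∫ t, (∫ x, g (x, t) * ψ x) * χ t := by
  rw [Measure.volume_eq_prod,
    integral_prod_symm _ (Measure.volume_eq_prod ℝ ℝ ▸ integrable_uncurry_mul hg hC hψ hχ)]
  simp only [← mul_assoc, integral_mul_const]

theorem fderiv_mul_apply {ψ χ : ℝ → ℝ} (hψ : Differentiable ℝ ψ) (hχ : Differentiable ℝ χ)
    (z w : ℝ × ℝ) : fderiv ℝ (fun z : ℝ × ℝ => ψ z.1 * χ z.2) z w =
      w.1 * (deriv ψ z.1 * χ z.2) + w.2 * (ψ z.1 * deriv χ z.2) := by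
  have hψz := (hψ z.1).hasDerivAt.comp_hasFDerivAt z (ContinuousLinearMap.fst ℝ ℝ ℝ).hasFDerivAt
  have hχz := (hχ z.2).hasDerivAt.comp_hasFDerivAt z (ContinuousLinearMap.snd ℝ ℝ ℝ).hasFDerivAt
  refine (congrArg (fun L : ℝ × ℝ →L[ℝ] ℝ => L w) (hψz.mul hχz).fderiv).trans ?_
  simp only [Function.comp_apply, add_apply, smul_apply, ContinuousLinearMap.coe_snd',
    smul_eq_mul, ContinuousLinearMap.coe_fst']
  ring

theorem measurable_integral_mul {g : ℝ × ℝ → ℝ} (hg : Measurable g) {ψ : ℝ → ℝ}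
    (hψ : Measurable ψ) : Measurable fun t => ∫ x, g (x, t) * ψ x :=
  (StronglyMeasurable.integral_prod_left (f := fun x t => g (x, t) * ψ x)
    (hg.mul (hψ.comp measurable_fst)).stronglyMeasurable).measurable

namespace IsSubconservative

variable {F : ℝ × ℝ → ℝ × ℝ}

theorem weak_slice (hF : IsSubconservative F) {ψ χ : ℝ → ℝ} (hψ : ContDiff ℝ 1 ψ)
    (hψc : HasCompactSupport ψ) (hψ0 : ∀ x, 0 ≤ ψ x) (hχ : ContDiff ℝ 1 χ)
    (hχc : HasCompactSupport χ) (hχ0 : ∀ t, 0 ≤ χ t) (hχneg : ∀ t ≤ 0, χ t = 0) :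
    0 ≤ (∫ t, (∫ x, (F (x, t)).2 * ψ x) * deriv χ t) +
      ∫ t, (∫ x, (F (x, t)).1 * deriv ψ x) * χ t := by
  obtain ⟨C, hC⟩ := hF.bounded
  have hC₁ (z : ℝ × ℝ) : |(F z).1| ≤ C := (norm_fst_le (F z)).trans (hC z)
  have hC₂ (z : ℝ × ℝ) : |(F z).2| ≤ C := (norm_snd_le (F z)).trans (hC z)
  have hint {g : ℝ → ℝ} (hg : Continuous g) (hgc : HasCompactSupport g) : Integrable g :=
    hg.integrable_of_hasCompactSupport hgc
  have hψ' := hint (hψ.continuous_deriv le_rfl) hψc.deriv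
  have hχ' := hint (hχ.continuous_deriv le_rfl) hχc.deriv
  have hψi := hint hψ.continuous hψc
  have hχi := hint hχ.continuous hχc
  rw [← integral_uncurry_mul hF.measurable.snd hC₂ hψi hχ',
    ← integral_uncurry_mul hF.measurable.fst hC₁ hψ' hχi,
    ← integral_add (integrable_uncurry_mul hF.measurable.snd hC₂ hψi hχ')
      (integrable_uncurry_mul hF.measurable.fst hC₁ hψ' hχi)]
  refine (hF.test (fun z => ψ z.1 * χ z.2)
    ((hψ.comp contDiff_fst).mul (hχ.comp contDiff_snd)) ?_ (fun z => mul_nonneg (hψ0 _) (hχ0 _))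
    (fun z hz => by rw [hχneg z.2 hz, mul_zero])).trans_eq (integral_congr_ae ?_)
  · refine HasCompactSupport.intro (hψc.isCompact.prod hχc.isCompact) fun z hz => ?_
    rcases not_and_or.1 hz with h | h
    · rw [image_eq_zero_of_notMem_tsupport h, zero_mul]
    · rw [image_eq_zero_of_notMem_tsupport h, mul_zero]
  · refine Eventually.of_forall fun z => ?_
    simp only [fderiv_mul_apply (hψ.differentiable one_ne_zero) (hχ.differentiable one_ne_zero)]
    ring

theorem continuousOn_integral_mul (hF : IsSubconservative F) {ψ : ℝ → ℝ} (hψ : Continuous ψ)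
    (hψc : HasCompactSupport ψ) : ContinuousOn (fun t => ∫ x, (F (x, t)).2 * ψ x) (Ici 0) := by
  obtain ⟨C, hC⟩ := hF.bounded
  obtain ⟨D, hD⟩ := hψ.bounded_above_of_compact_support hψc
  obtain ⟨r, hr⟩ := hψc.isCompact.isBounded.subset_closedBall 0
  rw [Real.closedBall_eq_Icc, zero_sub, zero_add] at hr
  intro t₀ ht₀
  have hmeas (t : ℝ) : Measurable fun x => (F (x, t)).2 :=
    hF.measurable.snd.comp measurable_prodMk_right
  have hint (t : ℝ) : Integrable fun x => (F (x, t)).2 * ψ x :=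
    (hψ.integrable_of_hasCompactSupport hψc).bdd_mul (hmeas t).aestronglyMeasurable
      (Eventually.of_forall fun x => (norm_snd_le (F (x, t))).trans (hC _))
  refine tendsto_iff_norm_sub_tendsto_zero.2 (squeeze_zero (fun _ => norm_nonneg _) (fun t => ?_)
    (by simpa using (hF.density_continuous r t₀ ht₀).const_mul D))
  have hsupp : Function.support (fun x => (F (x, t)).2 * ψ x - (F (x, t₀)).2 * ψ x) ⊆
      Icc (-r) r := fun x hx => by
    by_contra hxr
    exact hx (by simp only [image_eq_zero_of_notMem_tsupport fun h => hxr (hr h), mul_zero,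
      sub_zero])
  rw [← integral_sub (hint t) (hint t₀), ← setIntegral_eq_integral_of_forall_compl_eq_zero
    fun x hx => Function.notMem_support.1 fun h => hx (hsupp h), ← integral_const_mul]
  refine norm_integral_le_of_norm_le (Integrable.const_mul ?_ D) (Eventually.of_forall fun x => ?_)
  · refine Integrable.of_bound (C := C + C) ((hmeas t).sub (hmeas t₀)).abs.aestronglyMeasurable
      (Eventually.of_forall fun x => ?_)
    rw [Real.norm_eq_abs, abs_abs]
    exact (norm_sub_le _ _).trans (add_le_add ((norm_snd_le (F (x, t))).trans (hC _))
      ((norm_snd_le (F (x, t₀))).trans (hC _)))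
  · rw [← sub_mul, norm_mul, mul_comm]
    exact mul_le_mul_of_nonneg_right (hD x) (norm_nonneg _)

theorem integral_mul_sub_le (hF : IsSubconservative F) {ψ : ℝ → ℝ} (hψ : ContDiff ℝ 1 ψ)
    (hψc : HasCompactSupport ψ) (hψ0 : ∀ x, 0 ≤ ψ x) {t₁ t₂ : ℝ} (ht₁ : 0 ≤ t₁) (ht : t₁ ≤ t₂) :
    (∫ x, (F (x, t₂)).2 * ψ x) - ∫ x, (F (x, t₁)).2 * ψ x ≤
      ∫ t in t₁..t₂, ∫ x, (F (x, t)).1 * deriv ψ x := by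
  obtain ⟨C, hC⟩ := hF.bounded
  have hbound {g h : ℝ → ℝ} (hg : ∀ x, |g x| ≤ C) (hh : Continuous h) (hhc : HasCompactSupport h) :
      |∫ x, g x * h x| ≤ ∫ x, C * ‖h x‖ :=
    norm_integral_le_of_norm_le (f := fun x => g x * h x)
      ((hh.integrable_of_hasCompactSupport hhc).norm.const_mul C) (Eventually.of_forall fun x =>
        (norm_mul _ _).trans_le (mul_le_mul_of_nonneg_right (hg x) (norm_nonneg _)))
  have hψ' := hψ.continuous_deriv le_rfl
  exact sub_le_integral_of_weak_deriv_le
    (measurable_integral_mul hF.measurable.snd hψ.continuous.measurable)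
    (measurable_integral_mul hF.measurable.fst hψ'.measurable)
    (fun t => hbound (fun x => (norm_snd_le (F (x, t))).trans (hC _)) hψ.continuous hψc)
    (fun t => hbound (fun x => (norm_fst_le (F (x, t))).trans (hC _)) hψ' hψc.deriv)
    (hF.continuousOn_integral_mul hψ.continuous hψc)
    (fun χ hχ hχc hχ0 hχneg => hF.weak_slice hψ hψc hψ0 hχ hχc hχ0 hχneg) ht₁ ht

theorem integral_sub_le_integral_trace (hF : IsSubconservative F) {x₁ x₂ : ℝ} {l₁ l₂ : ℝ → ℝ}
    (hx : x₁ ≤ x₂) (hl₁ : ∀ t, 0 < t → Tendsto (fun x => (F (x, t)).1) (𝓝[<] x₁) (𝓝 (l₁ t)))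
    (hl₂ : ∀ t, 0 < t → Tendsto (fun x => (F (x, t)).1) (𝓝[>] x₂) (𝓝 (l₂ t)))
    {t₁ t₂ : ℝ} (ht₁ : 0 ≤ t₁) (ht : t₁ ≤ t₂) :
    (∫ x in x₁..x₂, (F (x, t₂)).2) - ∫ x in x₁..x₂, (F (x, t₁)).2 ≤
      ∫ t in t₁..t₂, (l₁ t - l₂ t) := by
  obtain ⟨C, hC⟩ := hF.bounded
  have hC₁ (z : ℝ × ℝ) : |(F z).1| ≤ C := (norm_fst_le (F z)).trans (hC z)
  have hm₁ (t : ℝ) : Measurable fun x => (F (x, t)).1 :=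
    hF.measurable.fst.comp measurable_prodMk_right
  have hflux : Tendsto (fun h => ∫ t in t₁..t₂, ∫ x, (F (x, t)).1 *
      deriv (plateau (x₁ - h) x₁ x₂ (x₂ + h)) x) (𝓝[>] 0) (𝓝 (∫ t in t₁..t₂, (l₁ t - l₂ t))) := by
    refine intervalIntegral.tendsto_integral_filter_of_dominated_convergence (fun _ => 2 * C)
      (Eventually.of_forall fun h => (measurable_integral_mul hF.measurable.fst
        ((contDiff_plateau _ _ _ _).continuous_deriv le_rfl).measurable).aestronglyMeasurable)
      ?_ intervalIntegrable_const (Eventually.of_forall fun t ht' => ?_)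
    · filter_upwards [self_mem_nhdsWithin] with h hh
      exact Eventually.of_forall fun t _ => abs_integral_mul_deriv_plateau_le (sub_lt_self x₁ hh)
        (lt_add_of_pos_right x₂ hh) (hm₁ t) fun x => hC₁ _
    · have ht0 : 0 < t := ht₁.trans_lt (uIoc_of_le ht ▸ ht').1
      exact tendsto_integral_mul_deriv_outer_plateau (hm₁ t) (fun x => hC₁ _) (hl₁ t ht0)
        (hl₂ t ht0)
  have hdensity (t : ℝ) := tendsto_integral_mul_outer_plateau hx
    (hF.measurable.snd.comp measurable_prodMk_right) fun x => (norm_snd_le (F (x, t))).trans (hC _)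
  refine le_of_tendsto_of_tendsto ((hdensity t₂).sub (hdensity t₁)) hflux ?_
  filter_upwards [self_mem_nhdsWithin] with h hh
  have h₁ := sub_lt_self x₁ hh
  have h₂ := lt_add_of_pos_right x₂ hh
  exact hF.integral_mul_sub_le (contDiff_plateau _ _ _ _) (hasCompactSupport_plateau h₁ hx h₂)
    (fun x => (plateau_mem_Icc h₁ hx h₂ x).1) ht₁ ht

theorem ae_trace_right_le_left (hF : IsSubconservative F) {x : ℝ} {l₁ l₂ : ℝ → ℝ}
    (hl₁ : ∀ t, 0 < t → Tendsto (fun y => (F (y, t)).1) (𝓝[<] x) (𝓝 (l₁ t)))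
    (hl₂ : ∀ t, 0 < t → Tendsto (fun y => (F (y, t)).1) (𝓝[>] x) (𝓝 (l₂ t))) :
    ∀ᵐ t : ℝ, 0 < t → l₂ t ≤ l₁ t := by
  obtain ⟨C, hC⟩ := hF.bounded
  have hint {L : Filter ℝ} [L.NeBot] [L.IsCountablyGenerated] {l : ℝ → ℝ}
      (hl : ∀ t, 0 < t → Tendsto (fun y => (F (y, t)).1) L (𝓝 (l t))) (t : ℝ) (ht : 0 ≤ t) :=
    intervalIntegrable_of_tendsto hF.measurable.fst (fun z => (norm_fst_le (F z)).trans (hC z)) hl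
      le_rfl ht (t₁ := 0)
  filter_upwards [ae_nonneg_of_integral_nonneg
    (fun t ht => (hint hl₁ t ht).sub (hint hl₂ t ht)) fun t₁ t₂ ht₁ ht => by
      simpa using hF.integral_sub_le_integral_trace le_rfl hl₁ hl₂ ht₁ ht] with t ht h0
  exact sub_nonneg.1 (ht h0)

end IsSubconservative

/-! ### Balance laws of an entropy solution -/

namespace IsSubconservative

variable {F : ℝ × ℝ → ℝ × ℝ} {x₁ x₂ : ℝ} {l₁ l₂ r₁ r₂ : ℝ → ℝ}

theorem integral_sub_eq_integral_trace (hF : IsSubconservative F)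
    (hF' : IsSubconservative fun z => -F z) (hx : x₁ ≤ x₂)
    (hl₁ : ∀ t, 0 < t → Tendsto (fun x => (F (x, t)).1) (𝓝[<] x₁) (𝓝 (l₁ t)))
    (hr₂ : ∀ t, 0 < t → Tendsto (fun x => (F (x, t)).1) (𝓝[>] x₂) (𝓝 (r₂ t)))
    {t₁ t₂ : ℝ} (ht₁ : 0 ≤ t₁) (ht : t₁ ≤ t₂) :
    (∫ x in x₁..x₂, (F (x, t₂)).2) - ∫ x in x₁..x₂, (F (x, t₁)).2 =
      ∫ t in t₁..t₂, (l₁ t - r₂ t) := by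
  refine le_antisymm (hF.integral_sub_le_integral_trace hx hl₁ hr₂ ht₁ ht) ?_
  have := hF'.integral_sub_le_integral_trace hx (fun t ht => (hl₁ t ht).neg)
    (fun t ht => (hr₂ t ht).neg) ht₁ ht
  simp only [Prod.snd_neg, intervalIntegral.integral_neg, neg_sub_neg] at this
  have hneg : ∫ t in t₁..t₂, (r₂ t - l₁ t) = -∫ t in t₁..t₂, (l₁ t - r₂ t) := by
    simp only [← intervalIntegral.integral_neg, neg_sub]
  linarith

theorem integral_sub_eq_integral_right_trace (hF : IsSubconservative F)
    (hF' : IsSubconservative fun z => -F z) (hx : x₁ ≤ x₂)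
    (hl₁ : ∀ t, 0 < t → Tendsto (fun x => (F (x, t)).1) (𝓝[<] x₁) (𝓝 (l₁ t)))
    (hr₁ : ∀ t, 0 < t → Tendsto (fun x => (F (x, t)).1) (𝓝[>] x₁) (𝓝 (r₁ t)))
    (hr₂ : ∀ t, 0 < t → Tendsto (fun x => (F (x, t)).1) (𝓝[>] x₂) (𝓝 (r₂ t)))
    {t₁ t₂ : ℝ} (ht₁ : 0 ≤ t₁) (ht : t₁ ≤ t₂) :
    (∫ x in x₁..x₂, (F (x, t₂)).2) - ∫ x in x₁..x₂, (F (x, t₁)).2 =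
      (∫ t in t₁..t₂, r₁ t) - ∫ t in t₁..t₂, r₂ t := by
  obtain ⟨C, hC⟩ := hF.bounded
  have hint {L : Filter ℝ} [L.NeBot] [L.IsCountablyGenerated] {l : ℝ → ℝ}
      (hl : ∀ t, 0 < t → Tendsto (fun y => (F (y, t)).1) L (𝓝 (l t))) :
      IntervalIntegrable l volume t₁ t₂ :=
    intervalIntegrable_of_tendsto hF.measurable.fst (fun z => (norm_fst_le (F z)).trans (hC z)) hl
      ht₁ (ht₁.trans ht)
  have htrace := hF.integral_sub_eq_integral_trace hF' le_rfl hl₁ hr₁ ht₁ ht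
  rw [intervalIntegral.integral_same, intervalIntegral.integral_same, sub_self,
    intervalIntegral.integral_sub (hint hl₁) (hint hr₁)] at htrace
  rw [hF.integral_sub_eq_integral_trace hF' hx hl₁ hr₂ ht₁ ht,
    intervalIntegral.integral_sub (hint hl₁) (hint hr₂)]
  linarith

end IsSubconservative

theorem continuous_sign_mul_sub {f : ℝ → ℝ} (hf : Continuous f) (k : ℝ) :
    Continuous fun w => Real.sign (w - k) * (f w - f k) := by
  have heq : (fun w => Real.sign (w - k) * (f w - f k)) = fun w => f (max w k) - f (min w k) := by
    ext w
    rcases lt_trichotomy w k with h | rfl | h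
    · rw [Real.sign_of_neg (sub_neg.2 h), max_eq_right h.le, min_eq_left h.le, neg_one_mul, neg_sub]
    · simp
    · rw [Real.sign_of_pos (sub_pos.2 h), max_eq_left h.le, min_eq_right h.le, one_mul]
  rw [heq]
  fun_prop

theorem hasDerivAt_slice_fst {V : ℝ × ℝ → ℝ} {z : ℝ × ℝ} (hV : DifferentiableAt ℝ V z) :
    HasDerivAt (fun y => V (y, z.2)) (fderiv ℝ V z (1, 0)) z.1 :=
  hV.hasFDerivAt.comp_hasDerivAt (l := V) z.1
    ((hasDerivAt_id z.1).prodMk (hasDerivAt_const z.1 z.2))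

theorem hasDerivAt_slice_snd {V : ℝ × ℝ → ℝ} {z : ℝ × ℝ} (hV : DifferentiableAt ℝ V z) :
    HasDerivAt (fun s => V (z.1, s)) (fderiv ℝ V z (0, 1)) z.2 :=
  hV.hasFDerivAt.comp_hasDerivAt (l := V) z.2
    ((hasDerivAt_const z.2 z.1).prodMk (hasDerivAt_id z.2))

theorem fderiv_prodMk_apply (V : ℝ × ℝ → ℝ) (z : ℝ × ℝ) (a b : ℝ) :
    fderiv ℝ V z (a, b) = b * fderiv ℝ V z (0, 1) + a * fderiv ℝ V z (1, 0) := by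
  have : (a, b) = b • ((0 : ℝ), (1 : ℝ)) + a • ((1 : ℝ), (0 : ℝ)) := by simp
  rw [this, map_add, map_smul, map_smul, smul_eq_mul, smul_eq_mul]

theorem mul_deriv_slice_add_mul_deriv_slice {φ : ℝ × ℝ → ℝ} {z : ℝ × ℝ}
    (hφ : DifferentiableAt ℝ φ z) (a b : ℝ) :
    b * deriv (fun s => φ (z.1, s)) z.2 + a * deriv (fun y => φ (y, z.2)) z.1 =
      fderiv ℝ φ z (a, b) := by
  rw [(hasDerivAt_slice_fst hφ).deriv, (hasDerivAt_slice_snd hφ).deriv, ← fderiv_prodMk_apply]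

section DiscontinuousFlux

variable {fl fr : ℝ → ℝ}

theorem dflux_of_neg {x : ℝ} (hx : x < 0) : dflux fl fr x = fl := funext fun _ => if_pos hx

theorem dflux_of_nonneg {x : ℝ} (hx : 0 ≤ x) : dflux fl fr x = fr :=
  funext fun _ => if_neg hx.not_gt

theorem dflux_of_eventually_nhdsGT (x : ℝ) :
    ∀ᶠ y in 𝓝[>] x, dflux fl fr y = dflux fl fr x := by
  rcases lt_or_ge x 0 with hx | hx
  · filter_upwards [nhdsWithin_le_nhds (Iio_mem_nhds hx)] with y hy
    rw [dflux_of_neg hx, dflux_of_neg hy]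
  · filter_upwards [self_mem_nhdsWithin] with y hy
    rw [dflux_of_nonneg hx, dflux_of_nonneg (hx.trans (le_of_lt hy))]

theorem dflux_of_eventually_nhdsLT (x : ℝ) :
    ∀ᶠ y in 𝓝[<] x, dflux fl fr y = if x ≤ 0 then fl else fr := by
  split_ifs with hx
  · filter_upwards [self_mem_nhdsWithin] with y hy
    exact dflux_of_neg (lt_of_lt_of_le hy hx)
  · filter_upwards [nhdsWithin_le_nhds (Ioi_mem_nhds (not_le.1 hx))] with y hy
    exact dflux_of_nonneg (le_of_lt hy)

theorem continuous_dflux (hl : Continuous fl) (hr : Continuous fr) (x : ℝ) :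
    Continuous (dflux fl fr x) := by
  rcases lt_or_ge x 0 with hx | hx
  · rwa [dflux_of_neg hx]
  · rwa [dflux_of_nonneg hx]

theorem measurable_dflux (hl : Continuous fl) (hr : Continuous fr) :
    Measurable fun z : ℝ × ℝ => dflux fl fr z.1 z.2 :=
  Measurable.ite (measurableSet_lt measurable_fst measurable_const)
    (hl.measurable.comp measurable_snd) (hr.measurable.comp measurable_snd)

theorem exists_abs_dflux_le (hl : Continuous fl) (hr : Continuous fr) (M : ℝ) :
    ∃ C, ∀ x w, |w| ≤ M → |dflux fl fr x w| ≤ C := by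
  obtain ⟨Cl, hCl⟩ := isCompact_Icc.exists_bound_of_continuousOn (hl.continuousOn (s := Icc (-M) M))
  obtain ⟨Cr, hCr⟩ := isCompact_Icc.exists_bound_of_continuousOn (hr.continuousOn (s := Icc (-M) M))
  refine ⟨max Cl Cr, fun x w hw => ?_⟩
  rcases lt_or_ge x 0 with hx | hx
  · rw [dflux_of_neg hx]
    exact (hCl w (abs_le.1 hw)).trans (le_max_left _ _)
  · rw [dflux_of_nonneg hx]
    exact (hCr w (abs_le.1 hw)).trans (le_max_right _ _)

theorem measurable_cAB (A B : ℝ) : Measurable (cAB A B) :=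
  Measurable.ite measurableSet_Iic measurable_const measurable_const

theorem abs_cAB_le (A B x : ℝ) : |cAB A B x| ≤ max |A| |B| := by
  unfold cAB
  split_ifs
  exacts [le_max_left _ _, le_max_right _ _]

end DiscontinuousFlux

namespace ABSol

variable {fl fr : ℝ → ℝ} {A B : ℝ} {u₀ : ℝ → ℝ} (S : ABSol fl fr A B u₀)

theorem measurable_slice (t : ℝ) : Measurable fun x => S.u x t :=
  S.meas.comp measurable_prodMk_right

theorem isSubconservative_of_test {G : ℝ → ℝ → ℝ × ℝ} (hG : Measurable (Function.uncurry G))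
    (hbound : ∀ M, ∃ C, ∀ x w, |w| ≤ M → ‖G x w‖ ≤ C)
    (hdensity : ∀ x w w', |(G x w).2 - (G x w').2| ≤ |w - w'|)
    (htest : ∀ φ : ℝ × ℝ → ℝ, ContDiff ℝ 1 φ → HasCompactSupport φ → (∀ z, 0 ≤ φ z) →
      (∀ z, z.2 ≤ 0 → φ z = 0) → 0 ≤ ∫ z, fderiv ℝ φ z (G z.1 (S.u z.1 z.2))) :
    IsSubconservative fun z => G z.1 (S.u z.1 z.2) where
  measurable := hG.comp (measurable_fst.prodMk S.meas)
  bounded := by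
    obtain ⟨M, hM⟩ := S.bdd
    obtain ⟨C, hC⟩ := hbound M
    exact ⟨C, fun z => hC _ _ (hM _ _)⟩
  density_continuous r t₀ ht₀ := by
    obtain ⟨M, hM⟩ := S.bdd
    refine squeeze_zero (fun t => integral_nonneg fun x => abs_nonneg _) (fun t => ?_)
      (S.timeCont r t₀ ht₀)
    refine integral_mono_of_nonneg (Eventually.of_forall fun x => abs_nonneg _) ?_
      (Eventually.of_forall fun x => hdensity _ _ _)
    refine Measure.integrableOn_of_bounded (M := M + M) measure_Icc_lt_top.ne
      ((S.measurable_slice t).sub (S.measurable_slice t₀)).abs.aestronglyMeasurable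
      (Eventually.of_forall fun x => ?_)
    rw [Real.norm_eq_abs, abs_abs]
    exact (abs_sub _ _).trans (add_le_add (hM _ _) (hM _ _))
  test := htest

/-- The space-time field `(f(x, u), u)` of an entropy solution `u`. -/
def field (z : ℝ × ℝ) : ℝ × ℝ := (dflux fl fr z.1 (S.u z.1 z.2), S.u z.1 z.2)

/-- The entropy flux and entropy of `u` relative to the connection. -/
def interfaceField (z : ℝ × ℝ) : ℝ × ℝ :=
  kruzkovField (dflux fl fr z.1) (cAB A B z.1) (S.u z.1 z.2)

theorem integral_fderiv_field {φ : ℝ × ℝ → ℝ} (hφ : ContDiff ℝ 1 φ) (hφc : HasCompactSupport φ)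
    (hφ0 : ∀ z, z.2 ≤ 0 → φ z = 0) : ∫ z, fderiv ℝ φ z (S.field z) = 0 := by
  rw [← S.weak (fun x t => φ (x, t)) hφ hφc fun x t => hφ0 (x, t)]
  exact integral_congr_ae (Eventually.of_forall fun z =>
    (mul_deriv_slice_add_mul_deriv_slice (hφ.differentiable one_ne_zero z) _ _).symm)

theorem isSubconservative_field (hl : Continuous fl) (hr : Continuous fr) :
    IsSubconservative S.field := by
  refine S.isSubconservative_of_test (G := fun x w => (dflux fl fr x w, w))
    ((measurable_dflux hl hr).prodMk measurable_snd) (fun M => ?_) (fun _ _ _ => le_rfl)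
    fun φ hφ hφc _ hφ0 => (S.integral_fderiv_field hφ hφc hφ0).ge
  obtain ⟨C, hC⟩ := exists_abs_dflux_le hl hr M
  exact ⟨max C M, fun x w hw => max_le_max (hC x w hw) hw⟩

theorem isSubconservative_neg_field (hl : Continuous fl) (hr : Continuous fr) :
    IsSubconservative fun z => -S.field z := by
  refine S.isSubconservative_of_test (G := fun x w => -(dflux fl fr x w, w))
    ((measurable_dflux hl hr).prodMk measurable_snd).neg (fun M => ?_)
    (fun x w w' => by simp [neg_add_eq_sub, abs_sub_comm]) fun φ hφ hφc _ hφ0 => ?_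
  · obtain ⟨C, hC⟩ := exists_abs_dflux_le hl hr M
    exact ⟨max C M, fun x w hw => (norm_neg _).le.trans (max_le_max (hC x w hw) hw)⟩
  · simp only [map_neg, integral_neg]
    exact (neg_eq_zero.2 (S.integral_fderiv_field hφ hφc hφ0)).ge

theorem isSubconservative_interfaceField (hl : Continuous fl) (hr : Continuous fr) :
    IsSubconservative S.interfaceField := by
  have hc : Measurable fun z : ℝ × ℝ => cAB A B z.1 := (measurable_cAB A B).comp measurable_fst
  have hflux := measurable_dflux hl hr
  refine S.isSubconservative_of_test (G := fun x => kruzkovField (dflux fl fr x) (cAB A B x)) ?_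
    (fun M => ?_) (fun x w w' => ?_) fun φ hφ hφc hφ0 hφneg => ?_
  · exact ((measurable_sign.comp (measurable_snd.sub hc)).mul
      (hflux.sub (hflux.comp (measurable_fst.prodMk hc)))).prodMk (measurable_snd.sub hc).abs
  · obtain ⟨C, hC⟩ := exists_abs_dflux_le hl hr (max M (max |A| |B|))
    refine ⟨max (C + C) (M + max |A| |B|), fun x w hw => max_le_max ?_ ?_⟩
    · rw [kruzkovField, norm_mul]
      refine (mul_le_of_le_one_left (norm_nonneg _) (abs_sign_le_one _)).trans
        ((abs_sub _ _).trans (add_le_add (hC _ _ (hw.trans (le_max_left _ _))) (hC _ _ ?_)))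
      exact (abs_cAB_le A B x).trans (le_max_right _ _)
    · rw [kruzkovField, Real.norm_eq_abs, abs_abs]
      exact (abs_sub _ _).trans (add_le_add hw (abs_cAB_le A B x))
  · exact (abs_abs_sub_abs_le_abs_sub _ _).trans_eq (by rw [sub_sub_sub_cancel_right])
  · refine (S.interfaceEntropy (fun x t => φ (x, t)) hφ hφc (fun x t => hφ0 (x, t))
      fun x t => hφneg (x, t)).trans_eq (integral_congr_ae (Eventually.of_forall fun z => ?_))
    exact mul_deriv_slice_add_mul_deriv_slice (hφ.differentiable one_ne_zero z) _ _

theorem tendsto_field_fst_nhdsLT (hl : Continuous fl) (hr : Continuous fr) (x : ℝ) {t : ℝ}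
    (ht : 0 < t) : Tendsto (fun y => (S.field (y, t)).1) (𝓝[<] x)
      (𝓝 ((if x ≤ 0 then fl else fr) (S.um x t))) := by
  have hcont : Continuous (if x ≤ 0 then fl else fr) := by split_ifs <;> assumption
  refine ((hcont.tendsto _).comp (S.um_spec x t ht)).congr' ?_
  filter_upwards [dflux_of_eventually_nhdsLT x] with y hy
  rw [field, hy, Function.comp_apply]

theorem tendsto_field_fst_nhdsGT (hl : Continuous fl) (hr : Continuous fr) (x : ℝ) {t : ℝ}
    (ht : 0 < t) : Tendsto (fun y => (S.field (y, t)).1) (𝓝[>] x)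
      (𝓝 (dflux fl fr x (S.up x t))) := by
  refine (((continuous_dflux hl hr x).tendsto _).comp (S.up_spec x t ht)).congr' ?_
  filter_upwards [dflux_of_eventually_nhdsGT x] with y hy
  rw [field, hy, Function.comp_apply]

theorem ae_rankineHugoniot (hl : Continuous fl) (hr : Continuous fr) :
    ∀ᵐ t : ℝ, 0 < t → fl (S.um 0 t) = fr (S.up 0 t) := by
  have hleft (t : ℝ) (ht : 0 < t) := S.tendsto_field_fst_nhdsLT hl hr 0 ht
  have hright (t : ℝ) (ht : 0 < t) := S.tendsto_field_fst_nhdsGT hl hr 0 ht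
  simp only [if_pos le_rfl, dflux_of_nonneg le_rfl] at hleft hright
  filter_upwards [(S.isSubconservative_field hl hr).ae_trace_right_le_left hleft hright,
    (S.isSubconservative_neg_field hl hr).ae_trace_right_le_left
      (fun t ht => (hleft t ht).neg) fun t ht => (hright t ht).neg] with t h₁ h₂ ht
  exact le_antisymm (neg_le_neg_iff.1 (h₂ ht)) (h₁ ht)

theorem ae_interface_entropy (hl : Continuous fl) (hr : Continuous fr) :
    ∀ᵐ t : ℝ, 0 < t → Real.sign (S.up 0 t - B) * (fr (S.up 0 t) - fr B) ≤
      Real.sign (S.um 0 t - A) * (fl (S.um 0 t) - fl A) := by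
  refine (S.isSubconservative_interfaceField hl hr).ae_trace_right_le_left (x := 0)
    (fun t ht => ?_) fun t ht => ?_
  · refine (((continuous_sign_mul_sub hl A).tendsto _).comp (S.um_spec 0 t ht)).congr' ?_
    filter_upwards [self_mem_nhdsWithin] with y (hy : y < 0)
    rw [interfaceField, kruzkovField, dflux_of_neg hy, cAB, if_pos hy.le, Function.comp_apply]
  · refine (((continuous_sign_mul_sub hr B).tendsto _).comp (S.up_spec 0 t ht)).congr' ?_
    filter_upwards [self_mem_nhdsWithin] with y (hy : 0 < y)
    rw [interfaceField, kruzkovField, dflux_of_nonneg hy.le, cAB, if_neg hy.not_ge,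
      Function.comp_apply]

end ABSol

/-! ### The potential of an entropy solution -/

theorem locallyIntegrable_of_bounded {g : ℝ → ℝ} {C : ℝ} (hg : Measurable g) (hC : ∀ x, |g x| ≤ C) :
    LocallyIntegrable g :=
  locallyIntegrable_iff.2 fun _ hk => Measure.integrableOn_of_bounded hk.measure_lt_top.ne
    hg.aestronglyMeasurable (Eventually.of_forall hC)

theorem intervalIntegrable_of_bounded {g : ℝ → ℝ} {C : ℝ} (hg : Measurable g)
    (hC : ∀ x, |g x| ≤ C) (a b : ℝ) : IntervalIntegrable g volume a b :=
  ((locallyIntegrable_of_bounded hg hC).integrableOn_isCompact isCompact_uIcc).intervalIntegrable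

theorem hasDerivWithinAt_integral_Iic {g : ℝ → ℝ} {C l : ℝ} (hg : Measurable g)
    (hC : ∀ x, |g x| ≤ C) (a x : ℝ) (hl : Tendsto g (𝓝[<] x) (𝓝 l)) :
    HasDerivWithinAt (fun y => ∫ z in a..y, g z) l (Iic x) x := by
  refine intervalIntegral.integral_hasDerivWithinAt_of_tendsto_ae_right
    (intervalIntegrable_of_bounded hg hC a x) (s := Iic x) (t := Iic x)
    hg.stronglyMeasurable.stronglyMeasurableAtFilter (hl.mono_left ?_)
  refine le_inf (inf_le_left.trans inf_le_left) (le_principal_iff.2 ?_)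
  filter_upwards [mem_inf_of_left self_mem_nhdsWithin,
    mem_inf_of_right (compl_mem_ae_iff.2 (measure_singleton x))] with y hy hne
  exact lt_of_le_of_ne hy hne

theorem hasDerivWithinAt_integral_Ici {g : ℝ → ℝ} {C l : ℝ} (hg : Measurable g)
    (hC : ∀ x, |g x| ≤ C) (a x : ℝ) (hl : Tendsto g (𝓝[>] x) (𝓝 l)) :
    HasDerivWithinAt (fun y => ∫ z in a..y, g z) l (Ici x) x :=
  intervalIntegral.integral_hasDerivWithinAt_of_tendsto_ae_right
    (intervalIntegrable_of_bounded hg hC a x) (s := Ici x) (t := Ioi x)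
    hg.stronglyMeasurable.stronglyMeasurableAtFilter (hl.mono_left inf_le_left)

namespace ABSol

variable {fl fr : ℝ → ℝ} {A B : ℝ} {u₀ : ℝ → ℝ} (S : ABSol fl fr A B u₀)

/-- The function `U` with `U_x = u` and `U_t = -f(x, u)`, normalised by `U (0, 0) = 0`. It is
extended to negative times by its values at time `0`. -/
def potential (z : ℝ × ℝ) : ℝ :=
  (∫ y in (0)..z.1, S.u y (max z.2 0)) - ∫ s in (0)..(max z.2 0), fr (S.up 0 s)

theorem potential_max_zero (x t : ℝ) : S.potential (x, max t 0) = S.potential (x, t) := by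
  simp only [potential, max_eq_left (le_max_right t 0)]

theorem potential_sub_eq_integral (x₁ x₂ t : ℝ) :
    S.potential (x₂, t) - S.potential (x₁, t) = ∫ y in x₁..x₂, S.u y (max t 0) := by
  obtain ⟨M, hM⟩ := S.bdd
  have hint := intervalIntegrable_of_bounded (S.measurable_slice (max t 0)) fun x => hM x _
  rw [potential, potential, sub_sub_sub_cancel_right,
    intervalIntegral.integral_interval_sub_left (hint 0 x₂) (hint 0 x₁)]

theorem intervalIntegrable_dflux_up (hl : Continuous fl) (hr : Continuous fr) (x : ℝ) {t₁ t₂ : ℝ}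
    (ht₁ : 0 ≤ t₁) (ht₂ : 0 ≤ t₂) :
    IntervalIntegrable (fun t => dflux fl fr x (S.up x t)) volume t₁ t₂ := by
  obtain ⟨C, hC⟩ := (S.isSubconservative_field hl hr).bounded
  exact intervalIntegrable_of_tendsto (S.isSubconservative_field hl hr).measurable.fst
    (fun z => (norm_fst_le _).trans (hC z)) (fun t ht => S.tendsto_field_fst_nhdsGT hl hr x ht)
    ht₁ ht₂

theorem potential_eq_sub_integral (hl : Continuous fl) (hr : Continuous fr) (x : ℝ) {t₁ t₂ : ℝ}
    (ht₁ : 0 ≤ t₁) (ht₂ : 0 ≤ t₂) : S.potential (x, t₂) =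
      S.potential (x, t₁) - ∫ t in t₁..t₂, dflux fl fr x (S.up x t) := by
  have hzero {t : ℝ} (ht : 0 ≤ t) : S.potential (x, t) =
      S.potential (x, 0) - ∫ s in (0)..t, dflux fl fr x (S.up x s) := by
    have hbalance {x₁ x₂ : ℝ} (hx : x₁ ≤ x₂) :=
      (S.isSubconservative_field hl hr).integral_sub_eq_integral_right_trace
        (S.isSubconservative_neg_field hl hr) hx
        (fun t ht => S.tendsto_field_fst_nhdsLT hl hr x₁ ht)
        (fun t ht => S.tendsto_field_fst_nhdsGT hl hr x₁ ht)
        (fun t ht => S.tendsto_field_fst_nhdsGT hl hr x₂ ht) le_rfl ht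
    have hzeroflux (v : ℝ) : dflux fl fr 0 v = fr v := by rw [dflux_of_nonneg le_rfl]
    simp only [potential, max_eq_left ht, max_self, intervalIntegral.integral_same, sub_zero]
    rcases le_total 0 x with hx | hx <;> have h := hbalance hx <;>
      simp only [field, hzeroflux] at h
    · linarith
    · rw [intervalIntegral.integral_symm x, intervalIntegral.integral_symm x]
      linarith
  rw [hzero ht₁, hzero ht₂, ← intervalIntegral.integral_interval_sub_left
    (S.intervalIntegrable_dflux_up hl hr x le_rfl ht₂)
    (S.intervalIntegrable_dflux_up hl hr x le_rfl ht₁)]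
  ring

theorem exists_abs_dflux_up_le (hl : Continuous fl) (hr : Continuous fr) :
    ∃ C, ∀ x t, 0 < t → |dflux fl fr x (S.up x t)| ≤ C := by
  obtain ⟨M, hM⟩ := S.bdd
  obtain ⟨C, hC⟩ := exists_abs_dflux_le hl hr M
  exact ⟨C, fun x t ht => hC x _
    (le_of_tendsto (S.up_spec x t ht).abs (Eventually.of_forall fun y => hM y t))⟩

theorem exists_lipschitzWith_potential (hl : Continuous fl) (hr : Continuous fr) :
    ∃ K, LipschitzWith K S.potential := by
  obtain ⟨M, hM⟩ := S.bdd
  obtain ⟨C, hC⟩ := S.exists_abs_dflux_up_le hl hr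
  have hspace (t : ℝ) : LipschitzWith M.toNNReal fun x => S.potential (x, t) :=
    LipschitzWith.of_dist_le' fun x₁ x₂ => by
      rw [Real.dist_eq, Real.dist_eq, S.potential_sub_eq_integral, ← Real.norm_eq_abs]
      exact intervalIntegral.norm_integral_le_of_norm_le_const fun y _ => hM y _
  have htime (x : ℝ) : LipschitzWith C.toNNReal fun t => S.potential (x, t) :=
    LipschitzWith.of_dist_le' fun t₁ t₂ => by
      have hC0 : 0 ≤ C := (abs_nonneg _).trans (hC 0 1 one_pos)
      refine le_trans ?_ (mul_le_mul_of_nonneg_left (abs_max_sub_max_le_abs t₁ t₂ 0) hC0)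
      rw [Real.dist_eq, ← S.potential_max_zero x t₁, ← S.potential_max_zero x t₂,
        S.potential_eq_sub_integral hl hr x (le_max_right t₂ 0) (le_max_right t₁ 0),
        sub_sub_cancel_left, abs_neg, ← Real.norm_eq_abs]
      exact intervalIntegral.norm_integral_le_of_norm_le_const fun t ht =>
        hC x t ((le_min (le_max_right _ _) (le_max_right _ _)).trans_lt ht.1)
  exact ⟨_, LipschitzWith.uncurry hspace htime⟩

theorem hasDerivWithinAt_potential_Iic (x : ℝ) {t : ℝ} (ht : 0 < t) :
    HasDerivWithinAt (fun y => S.potential (y, t)) (S.um x t) (Iic x) x := by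
  obtain ⟨M, hM⟩ := S.bdd
  simp only [potential, max_eq_left ht.le]
  exact (hasDerivWithinAt_integral_Iic (S.measurable_slice t) (fun y => hM y t) 0 x
    (S.um_spec x t ht)).sub_const _

theorem hasDerivWithinAt_potential_Ici (x : ℝ) {t : ℝ} (ht : 0 < t) :
    HasDerivWithinAt (fun y => S.potential (y, t)) (S.up x t) (Ici x) x := by
  obtain ⟨M, hM⟩ := S.bdd
  simp only [potential, max_eq_left ht.le]
  exact (hasDerivWithinAt_integral_Ici (S.measurable_slice t) (fun y => hM y t) 0 x
    (S.up_spec x t ht)).sub_const _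

theorem ae_fderiv_potential_fst : ∀ᵐ z : ℝ × ℝ, DifferentiableAt ℝ S.potential z ∧ 0 < z.2 →
    fderiv ℝ S.potential z (1, 0) = S.u z.1 z.2 := by
  have hset : MeasurableSet {z | DifferentiableAt ℝ S.potential z ∧ 0 < z.2 →
      fderiv ℝ S.potential z (1, 0) = S.u z.1 z.2} :=
    measurableSet_setOfPred.2 <| .imp (measurableSet_setOfPred.1 <|
      (measurableSet_of_differentiableAt ℝ _).inter
        (measurableSet_lt measurable_const measurable_snd))
      (measurableSet_setOfPred.1 <|
        measurableSet_eq_fun (measurable_fderiv_apply_const ℝ _ _) S.meas)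
  refine (Measure.ae_prod_mem_iff_ae_ae_mem hset).2 ((Measure.ae_ae_comm hset).2 ?_)
  obtain ⟨M, hM⟩ := S.bdd
  refine Eventually.of_forall fun t => ?_
  filter_upwards [LocallyIntegrable.ae_hasDerivAt_integral
    (locallyIntegrable_of_bounded (S.measurable_slice t) fun x => hM x t)] with x hx ⟨hdiff, ht⟩
  refine (hasDerivAt_slice_fst hdiff).unique ?_
  simp only [potential, max_eq_left (le_of_lt ht)]
  exact (hx 0).sub_const _

theorem ae_fderiv_potential_snd (hl : Continuous fl) (hr : Continuous fr) :
    ∀ᵐ z : ℝ × ℝ, DifferentiableAt ℝ S.potential z ∧ 0 < z.2 →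
      fderiv ℝ S.potential z (0, 1) = -dflux fl fr z.1 (fderiv ℝ S.potential z (1, 0)) := by
  have hset : MeasurableSet {z | DifferentiableAt ℝ S.potential z ∧ 0 < z.2 →
      fderiv ℝ S.potential z (0, 1) = -dflux fl fr z.1 (fderiv ℝ S.potential z (1, 0))} :=
    measurableSet_setOfPred.2 <| .imp (measurableSet_setOfPred.1 <|
      (measurableSet_of_differentiableAt ℝ _).inter
        (measurableSet_lt measurable_const measurable_snd))
      (measurableSet_setOfPred.1 <| measurableSet_eq_fun (measurable_fderiv_apply_const ℝ _ _)
        ((measurable_dflux hl hr).comp (measurable_fst.prodMk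
          (measurable_fderiv_apply_const ℝ _ _))).neg)
  refine (Measure.ae_prod_mem_iff_ae_ae_mem hset).2 (Eventually.of_forall fun x => ?_)
  filter_upwards [ae_all_iff.2 fun n : ℕ => (S.intervalIntegrable_dflux_up hl hr x le_rfl
    n.cast_nonneg).ae_hasDerivAt_integral] with t hderiv ⟨hdiff, (ht : 0 < t)⟩
  obtain ⟨n, hn⟩ := exists_nat_ge t
  have hint := hderiv n (uIcc_of_le (n.cast_nonneg (α := ℝ)) ▸ ⟨ht.le, hn⟩) 0 left_mem_uIcc
  rw [(uniqueDiffWithinAt_Ici x).eq_deriv _ (hasDerivAt_slice_fst hdiff).hasDerivWithinAt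
    (S.hasDerivWithinAt_potential_Ici x ht)]
  refine (hasDerivAt_slice_snd hdiff).unique
    ((hint.const_sub (S.potential (x, 0))).congr_of_eventuallyEq ?_)
  filter_upwards [Ioi_mem_nhds ht] with s hs
  exact S.potential_eq_sub_integral hl hr x le_rfl (le_of_lt hs)

theorem ae_fderiv_potential (hl : Continuous fl) (hr : Continuous fr) :
    ∀ᵐ z : ℝ × ℝ, 0 < z.2 → ∀ w : ℝ × ℝ, fderiv ℝ S.potential z w =
      S.u z.1 z.2 * w.1 - dflux fl fr z.1 (S.u z.1 z.2) * w.2 := by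
  obtain ⟨K, hK⟩ := S.exists_lipschitzWith_potential hl hr
  filter_upwards [hK.ae_differentiableAt, S.ae_fderiv_potential_fst,
    S.ae_fderiv_potential_snd hl hr] with z hdiff hfst hsnd hz w
  rw [← Prod.mk.eta (p := w), fderiv_prodMk_apply, hsnd ⟨hdiff, hz⟩, hfst ⟨hdiff, hz⟩]
  ring

theorem isHJPotential_left (hl : Continuous fl) (hr : Continuous fr) :
    IsHJPotential fl (Iio 0 ×ˢ Ioi 0) S.potential fun z => S.u z.1 z.2 where
  lipschitz := S.exists_lipschitzWith_potential hl hr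
  measurable := S.meas
  bounded := S.bdd.imp fun M hM z => hM z.1 z.2
  ae_fderiv := by
    filter_upwards [S.ae_fderiv_potential hl hr] with z hz hΩ w
    rw [hz hΩ.2, dflux_of_neg hΩ.1]
  kruzkov k φ hφ hφc hφ0 hφΩ := by
    refine (S.kruzkov_l k (fun x t => φ (x, t)) hφ hφc (fun x t => hφ0 (x, t)) fun x t h =>
      hφΩ (x, t) fun hΩ => h.elim hΩ.1.not_ge hΩ.2.not_ge).trans_eq
      (integral_congr_ae (Eventually.of_forall fun z => ?_))
    exact mul_deriv_slice_add_mul_deriv_slice (hφ.differentiable one_ne_zero z) _ _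

theorem isHJPotential_right (hl : Continuous fl) (hr : Continuous fr) :
    IsHJPotential fr (Ioi 0 ×ˢ Ioi 0) S.potential fun z => S.u z.1 z.2 where
  lipschitz := S.exists_lipschitzWith_potential hl hr
  measurable := S.meas
  bounded := S.bdd.imp fun M hM z => hM z.1 z.2
  ae_fderiv := by
    filter_upwards [S.ae_fderiv_potential hl hr] with z hz hΩ w
    rw [hz hΩ.2, dflux_of_nonneg (le_of_lt hΩ.1)]
  kruzkov k φ hφ hφc hφ0 hφΩ := by
    refine (S.kruzkov_r k (fun x t => φ (x, t)) hφ hφc (fun x t => hφ0 (x, t)) fun x t h =>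
      hφΩ (x, t) fun hΩ => h.elim hΩ.1.not_ge hΩ.2.not_ge).trans_eq
      (integral_congr_ae (Eventually.of_forall fun z => ?_))
    exact mul_deriv_slice_add_mul_deriv_slice (hφ.differentiable one_ne_zero z) _ _

end ABSol

theorem interface_flux_of_entropy {fl fr : ℝ → ℝ} (hl : IsLegendreFlux fl) (hr : IsLegendreFlux fr)
    {A B w p : ℝ} (hAB : fl A = fr B) (hA : deriv fl A ≤ 0) (hB : 0 ≤ deriv fr B)
    (hflux : fl w = fr p) (hentropy : Real.sign (p - B) * (fr p - fr B) ≤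
      Real.sign (w - A) * (fl w - fl A)) :
    fl A ≤ fl w ∧ (deriv fl w ≤ 0 → 0 ≤ deriv fr p → fl w = fl A) := by
  have hle : fl A ≤ fl w := by
    by_contra! hlt
    have hwA : A < w := by
      by_contra! hw
      nlinarith [hl.add_deriv_mul_le A w]
    have hpB : p < B := by
      by_contra! hp
      nlinarith [hr.add_deriv_mul_le B p]
    rw [Real.sign_of_pos (sub_pos.2 hwA), Real.sign_of_neg (sub_neg.2 hpB)] at hentropy
    linarith
  refine ⟨hle, fun hw hp => le_antisymm ?_ hle⟩
  by_contra! hlt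
  have hwA : w < A := by
    by_contra! hw'
    nlinarith [hl.add_deriv_mul_le w A]
  have hpB : B < p := by
    by_contra! hp'
    nlinarith [hr.add_deriv_mul_le p B]
  rw [Real.sign_of_neg (sub_neg.2 hwA), Real.sign_of_pos (sub_pos.2 hpB)] at hentropy
  linarith

/-! ### Optimal paths across the interface -/

/-- The properties of the potential `U` of an `AB`-entropy solution with one-sided traces `um` and
`up` on which the variational formula with interface cost `-γ`, `γ = f_l(A) = f_r(B)`, rests. -/
structure IsInterfacePotential (fl fr : ℝ → ℝ) (γ : ℝ) (U : ℝ × ℝ → ℝ) (um up : ℝ → ℝ → ℝ) :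
    Prop where
  left : ∃ u, IsHJPotential fl (Iio 0 ×ˢ Ioi 0) U u
  right : ∃ u, IsHJPotential fr (Ioi 0 ×ˢ Ioi 0) U u
  hasDerivWithinAt_Iic : ∀ (x : ℝ) {t : ℝ}, 0 < t →
    HasDerivWithinAt (fun y => U (y, t)) (um x t) (Iic x) x
  hasDerivWithinAt_Ici : ∀ (x : ℝ) {t : ℝ}, 0 < t →
    HasDerivWithinAt (fun y => U (y, t)) (up x t) (Ici x) x
  intervalIntegrable : ∀ {s t : ℝ}, 0 ≤ s → 0 ≤ t →
    IntervalIntegrable (fun τ => fr (up 0 τ)) volume s t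
  eq_sub_integral : ∀ {s t : ℝ}, 0 ≤ s → 0 ≤ t →
    U (0, t) = U (0, s) - ∫ τ in s..t, fr (up 0 τ)
  ae_rankineHugoniot : ∀ᵐ t : ℝ, 0 < t → fl (um 0 t) = fr (up 0 t)
  ae_le_flux : ∀ᵐ t : ℝ, 0 < t → γ ≤ fr (up 0 t)
  ae_flux_eq : ∀ᵐ t : ℝ, 0 < t → deriv fl (um 0 t) ≤ 0 → 0 ≤ deriv fr (up 0 t) → fr (up 0 t) = γ

theorem ABSol.isInterfacePotential {fl fr : ℝ → ℝ} {A B : ℝ} {u₀ : ℝ → ℝ} (S : ABSol fl fr A B u₀)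
    (hl : IsLegendreFlux fl) (hr : IsLegendreFlux fr) (hAB : fl A = fr B) (hA : deriv fl A ≤ 0)
    (hB : 0 ≤ deriv fr B) : IsInterfacePotential fl fr (fl A) S.potential S.um S.up := by
  have htrace : ∀ᵐ t : ℝ, 0 < t → fl (S.um 0 t) = fr (S.up 0 t) ∧ fl A ≤ fl (S.um 0 t) ∧
      (deriv fl (S.um 0 t) ≤ 0 → 0 ≤ deriv fr (S.up 0 t) → fl (S.um 0 t) = fl A) := by
    filter_upwards [S.ae_rankineHugoniot hl.continuous hr.continuous,
      S.ae_interface_entropy hl.continuous hr.continuous] with t hflux hentropy ht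
    exact ⟨hflux ht, interface_flux_of_entropy hl hr hAB hA hB (hflux ht) (hentropy ht)⟩
  have hzero (v : ℝ) : dflux fl fr 0 v = fr v := by rw [dflux_of_nonneg le_rfl]
  exact {
    left := ⟨_, S.isHJPotential_left hl.continuous hr.continuous⟩
    right := ⟨_, S.isHJPotential_right hl.continuous hr.continuous⟩
    hasDerivWithinAt_Iic := S.hasDerivWithinAt_potential_Iic
    hasDerivWithinAt_Ici := S.hasDerivWithinAt_potential_Ici
    intervalIntegrable := fun hs ht => by
      simpa only [hzero] using S.intervalIntegrable_dflux_up hl.continuous hr.continuous 0 hs ht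
    eq_sub_integral := fun hs ht => by
      simpa only [hzero] using S.potential_eq_sub_integral hl.continuous hr.continuous 0 hs ht
    ae_rankineHugoniot := htrace.mono fun t h ht => (h ht).1
    ae_le_flux := htrace.mono fun t h ht => (h ht).1 ▸ (h ht).2.1
    ae_flux_eq := htrace.mono fun t h ht => (h ht).1 ▸ (h ht).2.2 }

/-- `InterfacePath fl fr γ p q c`: some polygonal path forward in time joins `p` to `q` with cost
`c`, where pieces in the half-plane `x ≤ 0` or `x ≥ 0` are charged the Legendre transform of the
flux there, and pieces on the interface `x = 0` are charged `-γ` per unit of time. -/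
inductive InterfacePath (fl fr : ℝ → ℝ) (γ : ℝ) : ℝ × ℝ → ℝ × ℝ → ℝ → Prop
  | refl (p : ℝ × ℝ) : InterfacePath fl fr γ p p 0
  | left {p q : ℝ × ℝ} (hp : p.1 ≤ 0) (hq : q.1 ≤ 0) (hne : p.1 < 0 ∨ q.1 < 0) (ht : p.2 < q.2) :
    InterfacePath fl fr γ p q (segmentCost fl p q)
  | right {p q : ℝ × ℝ} (hp : 0 ≤ p.1) (hq : 0 ≤ q.1) (hne : 0 < p.1 ∨ 0 < q.1) (ht : p.2 < q.2) :
    InterfacePath fl fr γ p q (segmentCost fr p q)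
  | interface {s t : ℝ} (ht : s ≤ t) : InterfacePath fl fr γ (0, s) (0, t) (-γ * (t - s))
  | trans {p q r : ℝ × ℝ} {c d : ℝ} (hpq : InterfacePath fl fr γ p q c)
    (hqr : InterfacePath fl fr γ q r d) : InterfacePath fl fr γ p r (c + d)

namespace InterfacePath

variable {fl fr : ℝ → ℝ} {γ c : ℝ} {p q : ℝ × ℝ}

theorem snd_le_snd (h : InterfacePath fl fr γ p q c) : p.2 ≤ q.2 := by
  induction h with
  | refl => exact le_rfl
  | left _ _ _ ht => exact ht.le
  | right _ _ _ ht => exact ht.le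
  | interface ht => exact ht
  | trans _ _ hpq hqr => exact hpq.trans hqr

theorem reverse (T : ℝ) (h : InterfacePath fl fr γ p q c) :
    InterfacePath fr fl γ (-q.1, T - q.2) (-p.1, T - p.2) c := by
  have hcost (f : ℝ → ℝ) (p q : ℝ × ℝ) :
      segmentCost f (-q.1, T - q.2) (-p.1, T - p.2) = segmentCost f p q := by
    simp only [segmentCost, neg_sub_neg, sub_sub_sub_cancel_left]
  induction h with
  | refl => exact refl _
  | @left p q hp hq hne ht =>
    exact hcost fl p q ▸ right (neg_nonneg.2 hq) (neg_nonneg.2 hp)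
      (hne.symm.imp neg_pos.2 neg_pos.2) (sub_lt_sub_left ht T)
  | @right p q hp hq hne ht =>
    exact hcost fr p q ▸ left (neg_nonpos.2 hq) (neg_nonpos.2 hp)
      (hne.symm.imp neg_neg_iff_pos.2 neg_neg_iff_pos.2) (sub_lt_sub_left ht T)
  | @interface s t ht =>
    simpa only [neg_zero, sub_sub_sub_cancel_left] using
      interface (fl := fr) (fr := fl) (γ := γ) (sub_le_sub_left ht T)
  | @trans _ _ _ c d _ _ hpq hqr => exact add_comm c d ▸ hqr.trans hpq

end InterfacePath

namespace IsInterfacePotential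

variable {fl fr : ℝ → ℝ} {γ c : ℝ} {U : ℝ × ℝ → ℝ} {um up : ℝ → ℝ → ℝ} {p q : ℝ × ℝ}

theorem le_add_interface_cost (hU : IsInterfacePotential fl fr γ U um up) {s t : ℝ} (hs : 0 ≤ s)
    (ht : s ≤ t) : U (0, t) ≤ U (0, s) + -γ * (t - s) := by
  have hmono : ∫ _ in s..t, γ ≤ ∫ τ in s..t, fr (up 0 τ) :=
    intervalIntegral.integral_mono_ae_restrict ht intervalIntegrable_const
      (hU.intervalIntegrable hs (hs.trans ht)) <| (ae_restrict_iff' measurableSet_Icc).2 <| by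
        filter_upwards [hU.ae_le_flux, Measure.ae_ne volume (0 : ℝ)] with τ hτ hne hmem
        exact hτ ((hs.trans hmem.1).lt_of_ne' hne)
  rw [intervalIntegral.integral_const, smul_eq_mul] at hmono
  linarith [hU.eq_sub_integral hs (hs.trans ht)]

theorem le_add_of_path (hU : IsInterfacePotential fl fr γ U um up) (hl : IsLegendreFlux fl)
    (hr : IsLegendreFlux fr) (h : InterfacePath fl fr γ p q c) (hp : 0 ≤ p.2) : U q ≤ U p + c := by
  induction h with
  | refl => rw [add_zero]
  | left hpx hqx _ ht =>
    obtain ⟨u, hleft⟩ := hU.left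
    refine hleft.le_add_segmentCost hl (isOpen_Iio.prod isOpen_Ioi)
      ((convex_Iio 0).prod (convex_Ioi 0)) ?_ ?_ ht <;>
      simp only [closure_prod_eq, closure_Iio, closure_Ioi]
    exacts [⟨hpx, hp⟩, ⟨hqx, hp.trans ht.le⟩]
  | right hpx hqx _ ht =>
    obtain ⟨u, hright⟩ := hU.right
    refine hright.le_add_segmentCost hr (isOpen_Ioi.prod isOpen_Ioi)
      ((convex_Ioi 0).prod (convex_Ioi 0)) ?_ ?_ ht <;>
      simp only [closure_prod_eq, closure_Ioi]
    exacts [⟨hpx, hp⟩, ⟨hqx, hp.trans ht.le⟩]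
  | interface ht => exact hU.le_add_interface_cost hp ht
  | trans hpq _ hle₁ hle₂ => linarith [hle₁ hp, hle₂ (hp.trans hpq.snd_le_snd)]

theorem continuous (hU : IsInterfacePotential fl fr γ U um up) : Continuous U :=
  let ⟨_, hleft⟩ := hU.left
  let ⟨_, hK⟩ := hleft.lipschitz
  hK.continuous

theorem exists_isLeast_interface (hU : IsInterfacePotential fl fr γ U um up) {t : ℝ} (ht : 0 ≤ t) :
    ∃ r, 0 ≤ r ∧ r ≤ t ∧ U (0, t) = U (0, r) + -γ * (t - r) ∧
      ∀ s, 0 ≤ s → s < r → U (0, r) < U (0, s) + -γ * (r - s) := by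
  have hcont := hU.continuous
  have hcompact : IsCompact ({r | U (0, t) = U (0, r) + -γ * (t - r)} ∩ Icc 0 t) :=
    isCompact_Icc.inter_left (isClosed_eq continuous_const (by fun_prop))
  obtain ⟨r, ⟨(heq : U (0, t) = _), hr₀, hrt⟩, hleast⟩ :=
    hcompact.exists_isLeast ⟨t, by simp, ht, le_rfl⟩
  refine ⟨r, hr₀, hrt, heq, fun s hs hsr => ?_⟩
  refine (hU.le_add_interface_cost hs hsr.le).lt_of_ne fun heq' => hsr.not_ge (hleast ⟨?_, hs, ?_⟩)
  · change U (0, t) = U (0, s) + -γ * (t - s)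
    linarith
  · exact hsr.le.trans hrt

theorem eq_add_interface_cost_of_slope (hU : IsInterfacePotential fl fr γ U um up) {s r : ℝ}
    (hs : 0 ≤ s) (hsr : s ≤ r) (hm : ∀ τ ∈ Ioo s r, deriv fl (um 0 τ) ≤ 0)
    (hp : ∀ τ ∈ Ioo s r, 0 ≤ deriv fr (up 0 τ)) : U (0, r) = U (0, s) + -γ * (r - s) := by
  have hflux : ∫ τ in s..r, fr (up 0 τ) = ∫ _ in s..r, γ := by
    refine intervalIntegral.integral_congr_ae ?_
    filter_upwards [hU.ae_flux_eq, Measure.ae_ne volume r] with τ hτ hne hmem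
    rw [uIoc_of_le hsr] at hmem
    have hmem : τ ∈ Ioo s r := ⟨hmem.1, hmem.2.lt_of_ne hne⟩
    exact hτ (hs.trans_lt hmem.1) (hm τ hmem) (hp τ hmem)
  rw [hU.eq_sub_integral hs (hs.trans hsr), hflux, intervalIntegral.integral_const, smul_eq_mul]
  ring

theorem exists_left_path_or_deriv_nonpos (hU : IsInterfacePotential fl fr γ U um up)
    (hl : IsLegendreFlux fl) {r : ℝ} (hr₀ : 0 < r) :
    (∃ x ≤ 0, U (0, r) = U (x, 0) + segmentCost fl (x, 0) (0, r)) ∨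
      ∃ δ > 0, δ ≤ r ∧ ∀ s ∈ Ioo (r - δ) r, deriv fl (um 0 s) ≤ 0 := by
  obtain ⟨u, hleft⟩ := hU.left
  obtain ⟨k, hk⟩ := hl.surjective_deriv 0
  have h := hleft.boundary_eq_or_slope_le hl isOpen_Iio (convex_Iio 0) frontier_Iio hk hr₀
  simp only [closure_Iio, mem_Iic] at h
  refine h.imp_right fun ⟨δ, hδ, hδr, hslope⟩ => ⟨δ, hδ, hδr, fun s hs => ?_⟩
  refine (hl.strictMono_deriv.monotone ?_).trans_eq hk
  linarith [hslope s hs _ (hU.hasDerivWithinAt_Iic 0 (by linarith [hs.1])) (-1) (by norm_num)]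

theorem exists_right_path_or_deriv_nonneg (hU : IsInterfacePotential fl fr γ U um up)
    (hr : IsLegendreFlux fr) {r : ℝ} (hr₀ : 0 < r) :
    (∃ x ≥ 0, U (0, r) = U (x, 0) + segmentCost fr (x, 0) (0, r)) ∨
      ∃ δ > 0, δ ≤ r ∧ ∀ s ∈ Ioo (r - δ) r, 0 ≤ deriv fr (up 0 s) := by
  obtain ⟨u, hright⟩ := hU.right
  obtain ⟨k, hk⟩ := hr.surjective_deriv 0
  have h := hright.boundary_eq_or_slope_le hr isOpen_Ioi (convex_Ioi 0) frontier_Ioi hk hr₀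
  simp only [closure_Ioi, mem_Ici] at h
  refine h.imp_right fun ⟨δ, hδ, hδr, hslope⟩ => ⟨δ, hδ, hδr, fun s hs => ?_⟩
  refine hk.symm.trans_le (hr.strictMono_deriv.monotone ?_)
  linarith [hslope s hs _ (hU.hasDerivWithinAt_Ici 0 (by linarith [hs.1])) 1 zero_le_one]

theorem exists_optimal_path_interface (hU : IsInterfacePotential fl fr γ U um up)
    (hl : IsLegendreFlux fl) (hr : IsLegendreFlux fr) (hγl : -γ ≤ legendre fl 0)
    (hγr : -γ ≤ legendre fr 0) {t : ℝ} (ht : 0 ≤ t) :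
    ∃ x c, InterfacePath fl fr γ (x, 0) (0, t) c ∧ U (0, t) = U (x, 0) + c := by
  obtain ⟨r, hr₀, hrt, heq, hlt⟩ := hU.exists_isLeast_interface ht
  suffices h : ∃ x c, InterfacePath fl fr γ (x, 0) (0, r) c ∧ U (0, r) = U (x, 0) + c by
    obtain ⟨x, c, hpath, hc⟩ := h
    exact ⟨x, _, hpath.trans (.interface hrt), by rw [heq, hc, add_assoc]⟩
  rcases hr₀.eq_or_lt with rfl | hr₀
  · exact ⟨0, 0, .refl _, (add_zero _).symm⟩
  have hfoot {f : ℝ → ℝ} {x : ℝ} (hf : -γ ≤ legendre f 0)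
      (hx : U (0, r) = U (x, 0) + segmentCost f (x, 0) (0, r)) : x ≠ 0 := by
    rintro rfl
    have h₀ := hlt 0 le_rfl hr₀
    simp only [segmentCost, sub_zero, zero_div] at hx
    nlinarith
  rcases hU.exists_left_path_or_deriv_nonpos hl hr₀ with ⟨x, hx₀, hx⟩ | ⟨δ₁, hδ₁, hδ₁r, hm⟩
  · exact ⟨x, _, .left hx₀ le_rfl (.inl (hx₀.lt_of_ne (hfoot hγl hx))) hr₀, hx⟩
  rcases hU.exists_right_path_or_deriv_nonneg hr hr₀ with ⟨x, hx₀, hx⟩ | ⟨δ₂, hδ₂, -, hp⟩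
  · exact ⟨x, _, .right hx₀ le_rfl (.inl (hx₀.lt_of_ne' (hfoot hγr hx))) hr₀, hx⟩
  have hδ : 0 < min δ₁ δ₂ := lt_min hδ₁ hδ₂
  have hs : 0 ≤ r - min δ₁ δ₂ := by linarith [min_le_left δ₁ δ₂]
  refine absurd (hU.eq_add_interface_cost_of_slope hs (by linarith) (fun τ hτ => hm τ ⟨?_, hτ.2⟩)
    fun τ hτ => hp τ ⟨?_, hτ.2⟩) (hlt _ hs (by linarith)).ne
  · linarith [hτ.1, min_le_left δ₁ δ₂]
  · linarith [hτ.1, min_le_right δ₁ δ₂]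

theorem exists_optimal_path_boundary (hU : IsInterfacePotential fl fr γ U um up)
    (hl : IsLegendreFlux fl) (hr : IsLegendreFlux fr) (hq : 0 < q.2) (hq₁ : q.1 ≠ 0) :
    ∃ z c, 0 ≤ z.2 ∧ (z.2 = 0 ∨ z.1 = 0) ∧ InterfacePath fl fr γ z q c ∧ U q = U z + c := by
  rcases lt_or_gt_of_ne hq₁ with hq₁ | hq₁
  · obtain ⟨u, hleft⟩ := hU.left
    obtain ⟨z, hz, hlt, heq⟩ := hleft.exists_mem_frontier_eq_add_segmentCost hl
      (isOpen_Iio.prod isOpen_Ioi) ((convex_Iio 0).prod (convex_Ioi 0)) (fun z hz => hz.2.le)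
      (q := q) ⟨hq₁, hq⟩
    simp only [frontier_prod_eq, closure_Iio, closure_Ioi, frontier_Iio, frontier_Ioi] at hz
    rcases hz with ⟨hz₁, hz₂⟩ | ⟨hz₁, hz₂⟩
    · exact ⟨z, _, hz₂.ge, .inl hz₂, .left hz₁ hq₁.le (.inr hq₁) hlt, heq⟩
    · exact ⟨z, _, hz₂, .inr hz₁, .left hz₁.le hq₁.le (.inr hq₁) hlt, heq⟩
  · obtain ⟨u, hright⟩ := hU.right
    obtain ⟨z, hz, hlt, heq⟩ := hright.exists_mem_frontier_eq_add_segmentCost hr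
      (isOpen_Ioi.prod isOpen_Ioi) ((convex_Ioi 0).prod (convex_Ioi 0)) (fun z hz => hz.2.le)
      (q := q) ⟨hq₁, hq⟩
    simp only [frontier_prod_eq, closure_Ioi, frontier_Ioi] at hz
    rcases hz with ⟨hz₁, hz₂⟩ | ⟨hz₁, hz₂⟩
    · exact ⟨z, _, hz₂.ge, .inl hz₂, .right hz₁ hq₁.le (.inr hq₁) hlt, heq⟩
    · exact ⟨z, _, hz₂, .inr hz₁, .right hz₁.ge hq₁.le (.inr hq₁) hlt, heq⟩

theorem exists_optimal_path (hU : IsInterfacePotential fl fr γ U um up)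
    (hl : IsLegendreFlux fl) (hr : IsLegendreFlux fr) (hγl : -γ ≤ legendre fl 0)
    (hγr : -γ ≤ legendre fr 0) (x : ℝ) {t : ℝ} (ht : 0 < t) :
    ∃ x₀ c, InterfacePath fl fr γ (x₀, 0) (x, t) c ∧ U (x, t) = U (x₀, 0) + c := by
  rcases eq_or_ne x 0 with rfl | hx
  · exact hU.exists_optimal_path_interface hl hr hγl hγr ht.le
  obtain ⟨⟨y, s⟩, c, hs, hboundary, hpath, heq⟩ :=
    hU.exists_optimal_path_boundary hl hr (q := (x, t)) ht hx
  rcases hboundary with rfl | rfl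
  · exact ⟨y, c, hpath, heq⟩
  · obtain ⟨x₀, d, hpath₀, heq₀⟩ := hU.exists_optimal_path_interface hl hr hγl hγr hs
    exact ⟨x₀, _, hpath₀.trans hpath, by rw [heq, heq₀, add_assoc]⟩

end IsInterfacePotential

/-! ### Characteristics along optimal paths -/

/-- The position at time `t` on the line through the space-time points `p` and `q`. -/
def chord (p q : ℝ × ℝ) (t : ℝ) : ℝ := p.1 + (q.1 - p.1) / (q.2 - p.2) * (t - p.2)

section chord

variable {p q : ℝ × ℝ}

theorem hasDerivAt_chord (p q : ℝ × ℝ) (t : ℝ) :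
    HasDerivAt (chord p q) ((q.1 - p.1) / (q.2 - p.2)) t := by
  have h := (((hasDerivAt_id t).sub_const p.2).const_mul ((q.1 - p.1) / (q.2 - p.2))).const_add p.1
  rwa [mul_one] at h

theorem exists_lipschitzWith_chord (p q : ℝ × ℝ) : ∃ K, LipschitzWith K (chord p q) :=
  ⟨_, lipschitzWith_of_nnnorm_deriv_le (fun t => (hasDerivAt_chord p q t).differentiableAt)
    fun t => by rw [(hasDerivAt_chord p q t).deriv]⟩

theorem chord_left (p q : ℝ × ℝ) : chord p q p.2 = p.1 := by
  rw [chord, sub_self, mul_zero, add_zero]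

theorem chord_right (h : p.2 < q.2) : chord p q q.2 = q.1 := by
  rw [chord, div_mul_cancel₀ _ (sub_pos.2 h).ne', add_sub_cancel]

theorem chord_pos {t : ℝ} (ht : t ∈ Ioo p.2 q.2) (hp : 0 ≤ p.1) (hq : 0 ≤ q.1)
    (hne : 0 < p.1 ∨ 0 < q.1) : 0 < chord p q t := by
  have hpt : 0 < t - p.2 := sub_pos.2 ht.1
  have htq : 0 < q.2 - t := sub_pos.2 ht.2
  have hpq : 0 < q.2 - p.2 := sub_pos.2 (ht.1.trans ht.2)
  have heq : chord p q t = (p.1 * (q.2 - t) + q.1 * (t - p.2)) / (q.2 - p.2) := by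
    rw [chord]
    field_simp
    ring
  rw [heq]
  rcases hne with hne | hne <;> positivity

theorem chord_neg {t : ℝ} (ht : t ∈ Ioo p.2 q.2) (hp : p.1 ≤ 0) (hq : q.1 ≤ 0)
    (hne : p.1 < 0 ∨ q.1 < 0) : chord p q t < 0 := by
  have h := chord_pos (p := (-p.1, p.2)) (q := (-q.1, q.2)) ht (neg_nonneg.2 hp) (neg_nonneg.2 hq)
    (hne.imp neg_pos.2 neg_pos.2)
  simp only [chord, neg_sub_neg, ← neg_sub q.1 p.1, neg_div] at h
  rw [chord]
  linarith

end chord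

theorem IsHJPotential.exists_hasDerivAt_chord {f : ℝ → ℝ} {Ω : Set (ℝ × ℝ)} {U u : ℝ × ℝ → ℝ}
    (hU : IsHJPotential f Ω U u) (hf : IsLegendreFlux f) (hΩ : IsOpen Ω) (hconv : Convex ℝ Ω)
    {p q : ℝ × ℝ} (hp : p ∈ closure Ω) (hq : q ∈ closure Ω) (heq : U q = U p + segmentCost f p q)
    {t : ℝ} (ht : t ∈ Ioo p.2 q.2) (hz : (chord p q t, t) ∈ Ω) :
    ∃ k, HasDerivAt (chord p q) (deriv f k) t ∧
      HasDerivAt (fun x => U (x, t)) k (chord p q t) := by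
  obtain ⟨k, hk⟩ := hf.surjective_deriv ((q.1 - p.1) / (q.2 - p.2))
  have hright := chord_right (ht.1.trans ht.2)
  have hU' := hU.hasFDerivAt_of_eq_add_segmentCost hf hΩ hconv hp hq heq (k := k) hz ht.1 ht.2
    (by rw [hk, chord]; ring)
    (by rw [hk]; simp only [chord] at hright ⊢; linear_combination -hright)
  refine ⟨k, hk ▸ hasDerivAt_chord p q t, ?_⟩
  have hslice := hasDerivAt_slice_fst hU'.differentiableAt
  simpa [hU'.fderiv] using hslice

/-- The local condition on an `AB`-genuine/interface characteristic `ζ` at time `t`, for a solution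
with one-sided traces `um` and `up`. -/
def IsCharacteristicAt (fl fr : ℝ → ℝ) (γ : ℝ) (um up : ℝ → ℝ → ℝ) (ζ : ℝ → ℝ) (t : ℝ) : Prop :=
  (ζ t < 0 → HasDerivAt ζ (deriv fl (um (ζ t) t)) t ∧
    deriv fl (um (ζ t) t) = deriv fl (up (ζ t) t)) ∧
  (0 < ζ t → HasDerivAt ζ (deriv fr (um (ζ t) t)) t ∧
    deriv fr (um (ζ t) t) = deriv fr (up (ζ t) t)) ∧
  (ζ t = 0 → fl (um 0 t) = γ ∧ fr (up 0 t) = γ)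

section

variable {fl fr : ℝ → ℝ} {γ c : ℝ} {U : ℝ × ℝ → ℝ} {um up : ℝ → ℝ → ℝ} {p q : ℝ × ℝ}

theorem IsCharacteristicAt.congr_of_eventuallyEq {ζ η : ℝ → ℝ} {t : ℝ}
    (h : IsCharacteristicAt fl fr γ um up η t) (heq : ζ =ᶠ[𝓝 t] η) :
    IsCharacteristicAt fl fr γ um up ζ t := by
  rw [IsCharacteristicAt, heq.eq_of_nhds]
  exact ⟨fun hζ => ⟨(h.1 hζ).1.congr_of_eventuallyEq heq, (h.1 hζ).2⟩,
    fun hζ => ⟨(h.2.1 hζ).1.congr_of_eventuallyEq heq, (h.2.1 hζ).2⟩, h.2.2⟩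

namespace IsInterfacePotential

theorem eq_traces (hU : IsInterfacePotential fl fr γ U um up) {x t k : ℝ} (ht : 0 < t)
    (hk : HasDerivAt (fun y => U (y, t)) k x) : um x t = k ∧ up x t = k :=
  ⟨(uniqueDiffWithinAt_Iic x).eq_deriv _ (hU.hasDerivWithinAt_Iic x ht) hk.hasDerivWithinAt,
    (uniqueDiffWithinAt_Ici x).eq_deriv _ (hU.hasDerivWithinAt_Ici x ht) hk.hasDerivWithinAt⟩

theorem isCharacteristicAt_chord_left (hU : IsInterfacePotential fl fr γ U um up)
    (hl : IsLegendreFlux fl) (hp₀ : 0 ≤ p.2) (hp : p.1 ≤ 0) (hq : q.1 ≤ 0)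
    (hne : p.1 < 0 ∨ q.1 < 0) (heq : U q = U p + segmentCost fl p q) {t : ℝ}
    (ht : t ∈ Ioo p.2 q.2) : IsCharacteristicAt fl fr γ um up (chord p q) t := by
  obtain ⟨u, hleft⟩ := hU.left
  have hneg := chord_neg ht hp hq hne
  have ht₀ : 0 < t := hp₀.trans_lt ht.1
  have hclosure : closure (Iio (0 : ℝ) ×ˢ Ioi (0 : ℝ)) = Iic 0 ×ˢ Ici 0 := by
    rw [closure_prod_eq, closure_Iio, closure_Ioi]
  obtain ⟨k, hchord, hk⟩ := hleft.exists_hasDerivAt_chord hl (isOpen_Iio.prod isOpen_Ioi)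
    ((convex_Iio 0).prod (convex_Ioi 0)) (hclosure ▸ ⟨hp, hp₀⟩)
    (hclosure ▸ ⟨hq, (ht₀.trans ht.2).le⟩) heq ht ⟨hneg, ht₀⟩
  obtain ⟨hm, hp⟩ := hU.eq_traces ht₀ hk
  exact ⟨fun _ => by rw [hm, hp]; exact ⟨hchord, rfl⟩, fun h => absurd h hneg.not_gt,
    fun h => absurd h hneg.ne⟩

theorem isCharacteristicAt_chord_right (hU : IsInterfacePotential fl fr γ U um up)
    (hr : IsLegendreFlux fr) (hp₀ : 0 ≤ p.2) (hp : 0 ≤ p.1) (hq : 0 ≤ q.1)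
    (hne : 0 < p.1 ∨ 0 < q.1) (heq : U q = U p + segmentCost fr p q) {t : ℝ}
    (ht : t ∈ Ioo p.2 q.2) : IsCharacteristicAt fl fr γ um up (chord p q) t := by
  obtain ⟨u, hright⟩ := hU.right
  have hpos := chord_pos ht hp hq hne
  have ht₀ : 0 < t := hp₀.trans_lt ht.1
  have hclosure : closure (Ioi (0 : ℝ) ×ˢ Ioi (0 : ℝ)) = Ici 0 ×ˢ Ici 0 := by
    rw [closure_prod_eq, closure_Ioi]
  obtain ⟨k, hchord, hk⟩ := hright.exists_hasDerivAt_chord hr (isOpen_Ioi.prod isOpen_Ioi)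
    ((convex_Ioi 0).prod (convex_Ioi 0)) (hclosure ▸ ⟨hp, hp₀⟩)
    (hclosure ▸ ⟨hq, (ht₀.trans ht.2).le⟩) heq ht ⟨hpos, ht₀⟩
  obtain ⟨hm, hp⟩ := hU.eq_traces ht₀ hk
  exact ⟨fun h => absurd h hpos.not_gt, fun _ => by rw [hm, hp]; exact ⟨hchord, rfl⟩,
    fun h => absurd h hpos.ne'⟩

theorem ae_flux_eq_of_optimal (hU : IsInterfacePotential fl fr γ U um up) {s t : ℝ} (hs : 0 ≤ s)
    (hst : s ≤ t) (heq : U (0, t) = U (0, s) + -γ * (t - s)) :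
    ∀ᵐ τ, τ ∈ Ioo s t → fl (um 0 τ) = γ ∧ fr (up 0 τ) = γ := by
  have hint := hU.intervalIntegrable hs (hs.trans hst)
  have hzero : ∫ τ in s..t, (fr (up 0 τ) - γ) = 0 := by
    rw [intervalIntegral.integral_sub hint intervalIntegrable_const,
      intervalIntegral.integral_const, smul_eq_mul]
    linarith [hU.eq_sub_integral hs (hs.trans hst)]
  have hnonneg : ∀ᵐ τ, τ ∈ Ioc s t → 0 ≤ fr (up 0 τ) - γ := by
    filter_upwards [hU.ae_le_flux] with τ hτ hmem
    exact sub_nonneg.2 (hτ (hs.trans_lt hmem.1))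
  rw [← ae_restrict_iff' measurableSet_Ioc] at hnonneg
  have hae := (intervalIntegral.integral_eq_zero_iff_of_le_of_nonneg_ae hst hnonneg
    (hint.sub intervalIntegrable_const)).1 hzero
  filter_upwards [(ae_restrict_iff' measurableSet_Ioc).1 hae, hU.ae_rankineHugoniot]
    with τ hτ hflux hmem
  have hup : fr (up 0 τ) = γ := sub_eq_zero.1 (hτ (Ioo_subset_Ioc_self hmem))
  exact ⟨(hflux (hs.trans_lt hmem.1)).trans hup, hup⟩

end IsInterfacePotential

theorem exists_lipschitzWith_concat {ζ η : ℝ → ℝ} {K L : NNReal} (hζ : LipschitzWith K ζ)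
    (hη : LipschitzWith L η) {s : ℝ} (h : ζ s = η s) :
    ∃ ξ, LipschitzWith (K + L) ξ ∧ EqOn ξ ζ (Iic s) ∧ EqOn ξ η (Ici s) := by
  refine ⟨fun t => ζ (min t s) + (η (max t s) - η s), ?_, fun t ht => ?_, fun t ht => ?_⟩
  · simpa using (hζ.comp (LipschitzWith.id.min_const s)).add
      ((hη.comp (LipschitzWith.id.max_const s)).sub (.const (η s)))
  · simp only [min_eq_left (mem_Iic.1 ht), max_eq_right (mem_Iic.1 ht), sub_self, add_zero]
  · simp only [min_eq_right (mem_Ici.1 ht), max_eq_left (mem_Ici.1 ht), h, add_sub_cancel]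

/-- The curve traced by the path depends on the path only, not on the potential for which the path
is optimal; hence two solutions with a common optimal path share a characteristic. -/
theorem InterfacePath.exists_characteristic (hl : IsLegendreFlux fl) (hr : IsLegendreFlux fr)
    (h : InterfacePath fl fr γ p q c) (hp : 0 ≤ p.2) :
    ∃ (ζ : ℝ → ℝ) (K : NNReal), LipschitzWith K ζ ∧ ζ p.2 = p.1 ∧ ζ q.2 = q.1 ∧
      ∀ {U um up}, IsInterfacePotential fl fr γ U um up → U q = U p + c →
        ∀ᵐ t, t ∈ Ioo p.2 q.2 → IsCharacteristicAt fl fr γ um up ζ t := by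
  induction h with
  | refl p => exact ⟨fun _ => p.1, 0, .const _, rfl, rfl, by simp⟩
  | @left p q hpx hqx hne ht =>
    obtain ⟨K, hK⟩ := exists_lipschitzWith_chord p q
    exact ⟨chord p q, K, hK, chord_left p q, chord_right ht, fun hU heq => .of_forall fun t ht =>
      hU.isCharacteristicAt_chord_left hl hp hpx hqx hne heq ht⟩
  | @right p q hpx hqx hne ht =>
    obtain ⟨K, hK⟩ := exists_lipschitzWith_chord p q
    exact ⟨chord p q, K, hK, chord_left p q, chord_right ht, fun hU heq => .of_forall fun t ht =>
      hU.isCharacteristicAt_chord_right hr hp hpx hqx hne heq ht⟩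
  | interface hst =>
    refine ⟨fun _ => 0, 0, .const _, rfl, rfl, fun hU heq => ?_⟩
    filter_upwards [hU.ae_flux_eq_of_optimal hp hst heq] with t ht hmem
    exact ⟨fun h => absurd h (lt_irrefl _), fun h => absurd h (lt_irrefl _), fun _ => ht hmem⟩
  | @trans p q r c d hpq hqr ihpq ihqr =>
    have hq := hp.trans hpq.snd_le_snd
    obtain ⟨ζ, K, hK, hζp, hζq, hζ⟩ := ihpq hp
    obtain ⟨η, L, hL, hηq, hηr, hη⟩ := ihqr hq
    obtain ⟨ξ, hξ, hξζ, hξη⟩ := exists_lipschitzWith_concat hK hL (hζq.trans hηq.symm)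
    refine ⟨ξ, K + L, hξ, (hξζ hpq.snd_le_snd).trans hζp, (hξη hqr.snd_le_snd).trans hηr,
      fun hU heq => ?_⟩
    have hle₁ := hU.le_add_of_path hl hr hpq hp
    have hle₂ := hU.le_add_of_path hl hr hqr hq
    filter_upwards [hζ hU (by linarith), hη hU (by linarith), Measure.ae_ne volume q.2]
      with t hζt hηt hne ht
    rcases lt_or_gt_of_ne hne with hlt | hgt
    · exact (hζt ⟨ht.1, hlt⟩).congr_of_eventuallyEq (hξζ.eventuallyEq_of_mem (Iic_mem_nhds hlt))
    · exact (hηt ⟨hgt, ht.2⟩).congr_of_eventuallyEq (hξη.eventuallyEq_of_mem (Ici_mem_nhds hgt))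

end

/-! ### The backward-forward construction -/

theorem ABSol.potential_reflect {fl fr gl gr : ℝ → ℝ} {A B C D T : ℝ} {u₀ v₀ : ℝ → ℝ}
    (S : ABSol fl fr A B u₀) (S' : ABSol gl gr C D v₀) (hT : 0 ≤ T)
    (h : ∀ᵐ x, S'.u x 0 = S.u (-x) T) (x y : ℝ) :
    S.potential (y, T) - S.potential (x, T) = S'.potential (-x, 0) - S'.potential (-y, 0) := by
  rw [S.potential_sub_eq_integral, S'.potential_sub_eq_integral, max_eq_left hT, max_self,
    intervalIntegral.integral_congr_ae (h.mono fun z hz _ => hz),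
    intervalIntegral.integral_comp_neg fun z => S.u z T, neg_neg, neg_neg]

theorem IsInterfacePotential.eq_add_of_reflect {fl fr : ℝ → ℝ} {γ c T x y : ℝ}
    {U V : ℝ × ℝ → ℝ} {um up vm vp : ℝ → ℝ → ℝ} (hU : IsInterfacePotential fl fr γ U um up)
    (hV : IsInterfacePotential fr fl γ V vm vp) (hl : IsLegendreFlux fl) (hr : IsLegendreFlux fr)
    (hγl : -γ ≤ legendre fl 0) (hγr : -γ ≤ legendre fr 0) (hT : 0 < T)
    (hUV : ∀ a b, U (b, T) - U (a, T) = V (-a, 0) - V (-b, 0))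
    (h : InterfacePath fl fr γ (x, 0) (y, T) c) (hopt : U (y, T) = U (x, 0) + c) :
    V (-x, T) = V (-y, 0) + c := by
  have hle : V (-x, T) ≤ V (-y, 0) + c := by
    simpa only [sub_self, sub_zero] using hV.le_add_of_path hr hl (h.reverse T) (sub_self T).ge
  obtain ⟨w, d, hpath, hd⟩ := hV.exists_optimal_path hr hl hγr hγl (-x) hT
  have hge : U (-w, T) ≤ U (x, 0) + d := by
    simpa only [sub_self, sub_zero, neg_neg] using
      hU.le_add_of_path hl hr (hpath.reverse T) (sub_self T).ge
  have hw := hUV y (-w)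
  rw [neg_neg] at hw
  linarith

theorem ABSol.mem_charSet {fl fr : ℝ → ℝ} {γ A B T x : ℝ} {u₀ ζ : ℝ → ℝ} {K : NNReal}
    (S : ABSol fl fr A B u₀) (hK : LipschitzWith K ζ) (hx : ζ T = x)
    (h : ∀ᵐ t, t ∈ Ioo 0 T → IsCharacteristicAt fl fr γ S.um S.up ζ t) :
    ζ ∈ charSet T fl fr γ S x := by
  refine ⟨⟨⟨K, hK.lipschitzOnWith⟩, ?_⟩, hx⟩
  rw [← restrict_Ioo_eq_restrict_Icc]
  exact (ae_restrict_iff' measurableSet_Ioo).2 h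

theorem common_characteristic_general {T A B Aa Bb : ℝ} {fl fr ω u₀ : ℝ → ℝ} (hT : 0 < T)
    (hl : IsLegendreFlux fl) (hr : IsLegendreFlux fr) (hAB : fl A = fr B) (hA : deriv fl A ≤ 0)
    (hB : 0 ≤ deriv fr B) (hBb : deriv fr Bb ≤ 0) (hBbf : fr Bb = fr B) (hAa : 0 ≤ deriv fl Aa)
    (hAaf : fl Aa = fl A) (v : ABSol fr fl Bb Aa fun x => ω (-x))
    (ustar : ABSol fl fr A B fun x => v.u (-x) T) (u : ABSol fl fr A B u₀)
    (huT : ∀ᵐ x, u.u x T = ω x) (x : ℝ) :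
    (charSet T fl fr (fl A) ustar x ∩ charSet T fl fr (fl A) u x).Nonempty := by
  have hγl : -fl A ≤ legendre fl 0 := by simpa using hl.mul_sub_le_legendre A 0
  have hγr : -fl A ≤ legendre fr 0 := by simpa [hAB] using hr.mul_sub_le_legendre B 0
  have hU := u.isInterfacePotential hl hr hAB hA hB
  have hUstar := ustar.isInterfacePotential hl hr hAB hA hB
  have hV := v.isInterfacePotential hr hl (by rw [hBbf, hAaf, hAB]) hBb hAa
  rw [hBbf, ← hAB] at hV
  have hvT : ∀ᵐ z, v.u z 0 = u.u (-z) T := by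
    filter_upwards [v.init, (Measure.measurePreserving_neg volume).quasiMeasurePreserving.ae huT]
      with z hv hu using hv.trans hu.symm
  obtain ⟨x₀, c, hpath, hc⟩ := hU.exists_optimal_path hl hr hγl hγr x hT
  have hrev : InterfacePath fr fl (fl A) (-x, 0) (-x₀, T) c := by
    simpa only [sub_self, sub_zero] using hpath.reverse T
  have hcV := hU.eq_add_of_reflect hV hl hr hγl hγr hT (u.potential_reflect v hT.le hvT) hpath hc
  have hcstar := hV.eq_add_of_reflect hUstar hr hl hγr hγl hT
    (v.potential_reflect ustar hT.le ustar.init) hrev hcV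
  rw [neg_neg, neg_neg] at hcstar
  obtain ⟨ζ, K, hK, -, hζT, hζ⟩ := hpath.exists_characteristic hl hr le_rfl
  exact ⟨ζ, ustar.mem_charSet hK hζT (hζ hUstar hcstar), u.mem_charSet hK hζT (hζ hU hc)⟩

/-- the backward-forward solution `u^*` and any AB-entropy
solution reaching `ω^T` at time `T` share an AB-genuine/interface
characteristic through every point `(x,T)` (Proposition 4.2 of the paper). -/
theorem common_characteristic
    {T a θl θr A B : ℝ} {fl fr : ℝ → ℝ}
    (hT : 0 < T)
    (hflC : ContDiff ℝ 2 fl) (hfrC : ContDiff ℝ 2 fr)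
    (ha : 0 < a)
    (hfl2 : ∀ w : ℝ, a ≤ deriv (deriv fl) w)
    (hfr2 : ∀ w : ℝ, a ≤ deriv (deriv fr) w)
    (hf0 : fl 0 = fr 0) (hf1 : fl 1 = fr 1)
    (hθl : deriv fl θl = 0) (hθr : deriv fr θr = 0)
    (hθl0 : 0 ≤ θl) (hθr1 : θr ≤ 1)
    (hAB : fl A = fr B) (hA' : deriv fl A ≤ 0) (hB' : 0 ≤ deriv fr B)
    {Bb Aa : ℝ} {ω : ℝ → ℝ}
    (hBb : Bb ≤ θr) (hBbf : fr Bb = fr B)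
    (hAa : θl ≤ Aa) (hAaf : fl Aa = fl A)
    (hω : Attainable T fl fr A B ω)
    (v : ABSol fr fl Bb Aa (fun x => ω (-x)))
    (ustar : ABSol fl fr A B (fun x => v.u (-x) T))
    {u0 : ℝ → ℝ} (hu0 : IsLinf u0)
    (usol : ABSol fl fr A B u0)
    (husolT : ∀ᵐ x : ℝ ∂volume, usol.u x T = ω x) :
    ∀ x : ℝ, (charSet T fl fr (fl A) ustar x ∩
      charSet T fl fr (fl A) usol x).Nonempty := by
  have hl := IsLegendreFlux.of_uniformlyConvex hflC ha hfl2
  have hr := IsLegendreFlux.of_uniformlyConvex hfrC ha hfr2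
  exact common_characteristic_general hT hl hr hAB hA' hB'
    ((hr.strictMono_deriv.monotone hBb).trans_eq hθr) hBbf
    (hθl.symm.trans_le (hl.strictMono_deriv.monotone hAa)) hAaf v ustar usol husolT
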